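/- arXiv:1807.11700 — 8 statements merged into one kernel-verified Lean document; each statement's English description precedes it below -/
import Mathlib

section
/- Let K be a nonempty compact subset of ℂ. Then M_K, the closure in the space of Borel probability measures on K (with the topology of weak convergence) of the set of measures δ_P for P ∈ Pol_K, is convex and compact. -/
/-!
Compactness: every `δ_P` with `P ∈ Pol_K` has mass at most one and gives no mass to `Kᶜ`.  By the
Prokhorov theorem these conditions define a compact, hence closed, set of finite measures, and `M_K`
is a closed subset of it.

Convexity: if `P, Q ∈ Pol_K` have degrees `d, e`, then `R = P ^ (m e) * Q ^ (n d)` lies in `Pol_K` and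
`δ_R = m / (m + n) δ_P + n / (m + n) δ_Q` (`rootFM_pow_mul_pow`).  So rational convex combinations of
root measures are root measures.  Addition and scalar multiplication are weakly continuous
(`tendsto_combo`), so passing to the limit first in the weights and then in the two measures gives
all convex combinations of elements of `M_K`.
-/

open MeasureTheory Polynomial Set
open scoped NNReal ENNReal

/-- The Dirac measure at a point of `ℂ`, as a finite measure. -/
noncomputable def diracFM (z : ℂ) : FiniteMeasure ℂ :=
  ⟨Measure.dirac z, inferInstance⟩

/-- For a polynomial `P ∈ ℤ[X]` of degree `d` with complex roots `z_1, …, z_d`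
(with multiplicity), the root measure `δ_P = (1/d)(δ_{z_1} + ⋯ + δ_{z_d})`. -/
noncomputable def rootFM (P : Polynomial ℤ) : FiniteMeasure ℂ :=
  (P.natDegree : ℝ≥0)⁻¹ • ((P.map (Int.castRingHom ℂ)).roots.map diracFM).sum

/-- `Pol_K`: monic polynomials in `ℤ[X]` of positive degree all of whose
complex roots lie in `K`. -/
def PolK (K : Set ℂ) : Set (Polynomial ℤ) :=
  {P | P.Monic ∧ 0 < P.natDegree ∧ ∀ z ∈ (P.map (Int.castRingHom ℂ)).roots, z ∈ K}

/-- `M_K`: the closure, for the topology of weak convergence, of the set of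
root measures `δ_P` for `P ∈ Pol_K`. -/
noncomputable def MK (K : Set ℂ) : Set (FiniteMeasure ℂ) :=
  closure (rootFM '' PolK K)

lemma sum_diracFM_mass (s : Multiset ℂ) : (s.map diracFM).sum.mass = s.card := by
  induction s using Multiset.induction_on with
  | empty => simp
  | cons z s ih =>
    simp only [FiniteMeasure.mass] at ih ⊢
    rw [Multiset.map_cons, Multiset.sum_cons, FiniteMeasure.coeFn_add, Pi.add_apply, ih]
    simp [diracFM, add_comm]

lemma sum_diracFM_compl {K : Set ℂ} (hK : MeasurableSet K) (s : Multiset ℂ) (hs : ∀ z ∈ s, z ∈ K) :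
    (s.map diracFM).sum Kᶜ = 0 := by
  induction s using Multiset.induction_on with
  | empty => simp
  | cons z s ih =>
    rw [Multiset.map_cons, Multiset.sum_cons, FiniteMeasure.coeFn_add, Pi.add_apply,
      ih fun w hw => hs w (Multiset.mem_cons_of_mem hw)]
    simp [diracFM, Measure.dirac_apply' _ hK.compl, hs z (Multiset.mem_cons_self z s)]

/-- The unnormalised root measure `δ_{z_1} + ⋯ + δ_{z_d}` of an integer polynomial. -/
noncomputable def rootSum (P : Polynomial ℤ) : FiniteMeasure ℂ :=
  ((P.map (Int.castRingHom ℂ)).roots.map diracFM).sum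

lemma rootSum_mul {P Q : Polynomial ℤ} (hP : P.Monic) (hQ : Q.Monic) :
    rootSum (P * Q) = rootSum P + rootSum Q := by
  have h : P.map (Int.castRingHom ℂ) * Q.map (Int.castRingHom ℂ) ≠ 0 :=
    ((hP.map _).mul (hQ.map _)).ne_zero
  simp only [rootSum]
  rw [Polynomial.map_mul, roots_mul h, Multiset.map_add, Multiset.sum_add]

lemma rootSum_pow (P : Polynomial ℤ) (m : ℕ) : rootSum (P ^ m) = m • rootSum P := by
  simp only [rootSum]
  rw [Polynomial.map_pow, roots_pow, Multiset.map_nsmul, Multiset.sum_nsmul]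

lemma pow_mul_pow_mem_PolK {K : Set ℂ} {P Q : Polynomial ℤ} (hP : P ∈ PolK K) (hQ : Q ∈ PolK K)
    {m n : ℕ} (h : 0 < m + n) : P ^ m * Q ^ n ∈ PolK K := by
  obtain ⟨hPm, hPd, hPr⟩ := hP
  obtain ⟨hQm, hQd, hQr⟩ := hQ
  refine ⟨(hPm.pow m).mul (hQm.pow n), ?_, fun z hz => ?_⟩
  · rw [(hPm.pow m).natDegree_mul (hQm.pow n), hPm.natDegree_pow, hQm.natDegree_pow]
    rcases Nat.eq_zero_or_pos m with rfl | hm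
    · have : 0 < n := by omega
      positivity
    · positivity
  · rw [Polynomial.map_mul, roots_mul (((hPm.pow m).map _).mul ((hQm.pow n).map _)).ne_zero,
      Polynomial.map_pow, Polynomial.map_pow, roots_pow, roots_pow, Multiset.mem_add] at hz
    rcases hz with hz | hz
    · exact hPr z (Multiset.mem_of_mem_nsmul hz)
    · exact hQr z (Multiset.mem_of_mem_nsmul hz)

/-- A rational convex combination of two root measures is again a root measure. -/
lemma rootFM_pow_mul_pow {K : Set ℂ} {P Q : Polynomial ℤ} (hP : P ∈ PolK K) (hQ : Q ∈ PolK K)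
    {m n : ℕ} (h : 0 < m + n) :
    rootFM (P ^ (m * Q.natDegree) * Q ^ (n * P.natDegree)) =
      ((m : ℝ≥0) / (m + n : ℕ)) • rootFM P + ((n : ℝ≥0) / (m + n : ℕ)) • rootFM Q := by
  obtain ⟨hPm, hPd, -⟩ := hP
  obtain ⟨hQm, hQd, -⟩ := hQ
  change (_ : ℝ≥0)⁻¹ • rootSum _ = _ • ((_ : ℝ≥0)⁻¹ • rootSum P) + _ • ((_ : ℝ≥0)⁻¹ • rootSum Q)
  rw [rootSum_mul (hPm.pow _) (hQm.pow _), rootSum_pow, rootSum_pow,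
    (hPm.pow _).natDegree_mul (hQm.pow _), hPm.natDegree_pow, hQm.natDegree_pow,
    ← Nat.cast_smul_eq_nsmul ℝ≥0, ← Nat.cast_smul_eq_nsmul ℝ≥0, smul_add, smul_smul, smul_smul,
    smul_smul, smul_smul]
  have h1 : (P.natDegree : ℝ≥0) ≠ 0 := by positivity
  have h2 : (Q.natDegree : ℝ≥0) ≠ 0 := by positivity
  have h3 : (m + n : ℝ≥0) ≠ 0 := by exact_mod_cast h.ne'
  have h4 : ((m * Q.natDegree * P.natDegree + n * P.natDegree * Q.natDegree : ℕ) : ℝ≥0) =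
      (m + n) * (P.natDegree * Q.natDegree) := by push_cast; ring
  rw [h4]
  push_cast
  congr 2 <;> field_simp

/-- Joint continuity of `(a, b, μ, ν) ↦ a μ + b ν` for the topology of weak convergence. -/
lemma tendsto_combo {ι : Type*} {F : Filter ι} {u v : ι → ℝ≥0} {a b : ℝ≥0}
    {M N : ι → FiniteMeasure ℂ} {μ ν : FiniteMeasure ℂ}
    (hu : Filter.Tendsto u F (nhds a)) (hv : Filter.Tendsto v F (nhds b))
    (hM : Filter.Tendsto M F (nhds μ)) (hN : Filter.Tendsto N F (nhds ν)) :
    Filter.Tendsto (fun i => u i • M i + v i • N i) F (nhds (a • μ + b • ν)) := by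
  rw [FiniteMeasure.tendsto_iff_forall_testAgainstNN_tendsto] at hM hN ⊢
  intro f
  have key (μ ν : FiniteMeasure ℂ) (a b : ℝ≥0) : (a • μ + b • ν).testAgainstNN f =
      a * μ.testAgainstNN f + b * ν.testAgainstNN f := by
    rw [← smul_eq_mul, ← smul_eq_mul, ← FiniteMeasure.smul_testAgainstNN_apply,
      ← FiniteMeasure.smul_testAgainstNN_apply, ← ENNReal.coe_inj, ENNReal.coe_add]
    simp only [FiniteMeasure.testAgainstNN_coe_eq, FiniteMeasure.toMeasure_add,
      lintegral_add_measure]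
  simp only [key]
  exact (hu.mul (hM f)).add (hv.mul (hN f))

lemma combo_div_mem {K : Set ℂ} {P Q : Polynomial ℤ} (hP : P ∈ PolK K) (hQ : Q ∈ PolK K)
    {m k : ℕ} (hk : 0 < k) (hmk : m ≤ k) :
    ((m : ℝ≥0) / k) • rootFM P + (((k - m : ℕ) : ℝ≥0) / k) • rootFM Q ∈ rootFM '' PolK K := by
  obtain ⟨n, rfl⟩ := Nat.exists_eq_add_of_le hmk
  rw [Nat.add_sub_cancel_left, ← rootFM_pow_mul_pow hP hQ hk]
  refine ⟨_, pow_mul_pow_mem_PolK hP hQ ?_, rfl⟩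
  rcases Nat.eq_zero_or_pos m with h0 | h0
  · exact Nat.add_pos_right _ (Nat.mul_pos (by omega) hP.2.1)
  · exact Nat.add_pos_left (Nat.mul_pos h0 hQ.2.1) _

lemma combo_rootFM_mem {K : Set ℂ} {P Q : Polynomial ℤ} (hP : P ∈ PolK K) (hQ : Q ∈ PolK K)
    {a b : ℝ≥0} (hab : a + b = 1) : a • rootFM P + b • rootFM Q ∈ MK K := by
  -- The weights `a, b` are approximated by `⌊a k⌋ / k` and `(k - ⌊a k⌋) / k` as `k → ∞`.
  have ha : a ≤ 1 := by rw [← hab]; exact le_self_add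
  have hmk (k : ℕ) : ⌊(a : ℝ) * k⌋₊ ≤ k :=
    Nat.floor_le_of_le (mul_le_of_le_one_left (Nat.cast_nonneg k) ha)
  have hm : Filter.Tendsto (fun k : ℕ => (⌊(a : ℝ) * k⌋₊ : ℝ≥0) / k) Filter.atTop (nhds a) := by
    rw [← NNReal.tendsto_coe]
    push_cast
    exact (tendsto_nat_floor_mul_div_atTop a.coe_nonneg).comp tendsto_natCast_atTop_atTop
  have hn : Filter.Tendsto (fun k : ℕ => ((k - ⌊(a : ℝ) * k⌋₊ : ℕ) : ℝ≥0) / k)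
      Filter.atTop (nhds b) := by
    have hb : 1 - a = b := by rw [← hab, add_tsub_cancel_left]
    have h1 : Filter.Tendsto (fun k : ℕ => 1 - (⌊(a : ℝ) * k⌋₊ : ℝ≥0) / k) Filter.atTop
        (nhds (1 - a)) := tendsto_const_nhds.sub hm
    rw [hb] at h1
    refine h1.congr' ?_
    filter_upwards [Filter.eventually_gt_atTop 0] with k hk
    have hk' : (k : ℝ≥0) ≠ 0 := by positivity
    rw [Nat.cast_tsub, NNReal.sub_div, div_self hk']
  have hlim : Filter.Tendsto (fun k : ℕ => ((⌊(a : ℝ) * k⌋₊ : ℝ≥0) / k) • rootFM P +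
      (((k - ⌊(a : ℝ) * k⌋₊ : ℕ) : ℝ≥0) / k) • rootFM Q) Filter.atTop
      (nhds (a • rootFM P + b • rootFM Q)) :=
    tendsto_combo hm hn tendsto_const_nhds tendsto_const_nhds
  refine mem_closure_of_tendsto hlim ?_
  filter_upwards [Filter.eventually_gt_atTop 0] with k hk
  exact combo_div_mem hP hQ hk (hmk k)

lemma rootFM_mass_le {P : Polynomial ℤ} (hP : P.Monic) : (rootFM P).mass ≤ 1 := by
  have hcard : (P.map (Int.castRingHom ℂ)).roots.card ≤ P.natDegree :=
    (card_roots' _).trans (hP.natDegree_map _).le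
  have h := sum_diracFM_mass (P.map (Int.castRingHom ℂ)).roots
  simp only [FiniteMeasure.mass] at h ⊢
  rw [rootFM, FiniteMeasure.smul_apply, h, smul_eq_mul, inv_mul_eq_div]
  exact div_le_one_of_le₀ (by exact_mod_cast hcard) zero_le

theorem stmt1 (K : Set ℂ) (hK : K.Nonempty) (hKcomp : IsCompact K) :
    Convex ℝ≥0 (MK K) ∧ IsCompact (MK K) := by
  refine ⟨?_, ?_⟩
  · intro μ hμ ν hν a b _ _ hab
    rw [MK, ← closure_closure]
    refine map_mem_closure₂ (f := fun μ ν : FiniteMeasure ℂ => a • μ + b • ν)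
      (continuous_iff_continuousAt.2 fun p => tendsto_combo tendsto_const_nhds tendsto_const_nhds
        continuousAt_fst continuousAt_snd) hμ hν ?_
    rintro _ ⟨P, hP, rfl⟩ _ ⟨Q, hQ, rfl⟩
    exact combo_rootFM_mem hP hQ hab
  · have hc := isCompact_setOfPred_finiteMeasure_le_of_isCompact 1 hKcomp
    refine hc.of_isClosed_subset isClosed_closure (closure_minimal ?_ hc.isClosed)
    rintro _ ⟨P, hP, rfl⟩
    refine ⟨rootFM_mass_le hP.1, ?_⟩
    rw [rootFM, FiniteMeasure.smul_apply, sum_diracFM_compl hKcomp.measurableSet _ hP.2.2,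
      smul_zero]
end

section
/- Let K be a nonempty compact subset of ℂ and let μ ∈ M_∞. Then μ is diffuse: μ({z}) = 0 for every point z ∈ K. -/
/-!
The atoms of a measure in `M_∞` are controlled by discriminants. If `P` is monic, integral and
irreducible over `ℚ`, its `d` complex roots are distinct and the product of `x - y` over ordered
pairs of distinct roots is, up to sign, the discriminant, hence a nonzero integer
(`one_le_prod_offDiag`). If all roots lie in a set of diameter at most `R`, where `2 ≤ R`, and `n`
of them lie within distance `R ^ (-m)` of each other, then
`1 ≤ R ^ (-m n (n - 1)) * R ^ (d ^ 2)`, so `m n (n - 1) ≤ d ^ 2` (`card_cluster_le`). With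
`m = 2 k ^ 2 ≤ d` this gives `n / d ≤ 1 / k`: a small ball has `δ_P`-mass at most `1 / k`, uniformly
in `P ∈ Irr_K` of degree at least `m`.

Only finitely many elements of `Pol_K` have degree at most `m`, by Northcott's theorem for the
Mahler measure (`finite_polK_natDegree_le`). Testing against a bump function supported in the small
ball is affine and weakly continuous, so the bound `1 / k` passes to the closed convex hull of the
remaining `δ_P`, and thus to every measure in `M_∞`. Finally `k` is arbitrary.
-/

open MeasureTheory Polynomial Set
open scoped NNReal ENNReal

/-- `Irr_K`: the elements of `Pol_K` that are irreducible over `ℚ`. -/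
def IrrK (K : Set ℂ) : Set (Polynomial ℤ) :=
  {P | P ∈ PolK K ∧ Irreducible (P.map (Int.castRingHom ℚ))}

/-- `M_∞`: the intersection, over all finite sets `F` of polynomials, of the
closed convex hulls of `{δ_P : P ∈ Irr_K, P ∉ F}`. -/
noncomputable def Minf (K : Set ℂ) : Set (FiniteMeasure ℂ) :=
  ⋂ F : Finset (Polynomial ℤ),
    closure (convexHull ℝ≥0 (rootFM '' (IrrK K \ ↑F)))

@[to_additive]
lemma prod_toFinset_of_nodup {M : Type*} [CommMonoid M] [DecidableEq ℂ] {s : Multiset ℂ}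
    (f : ℂ → M) (hs : s.Nodup) : ∏ x ∈ s.toFinset, f x = (s.map f).prod := by
  rw [Finset.prod_eq_multiset_prod, Multiset.toFinset_val, hs.dedup]

lemma prod_le_pow_card_of_nonneg {ι : Type*} {s : Finset ι} {f : ι → ℝ} {c : ℝ}
    (h0 : ∀ i ∈ s, 0 ≤ f i) (h : ∀ i ∈ s, f i ≤ c) : ∏ i ∈ s, f i ≤ c ^ s.card := by
  simpa using Finset.prod_le_prod h0 h

/-- The roots of `P` are distinct, so its discriminant `± Res(P, P')` is a nonzero integer, and its
absolute value, the product of the distances over ordered pairs of roots, is at least one. -/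
lemma one_le_prod_offDiag {P : ℤ[X]} (hP : P.Monic)
    (hirr : Irreducible (P.map (Int.castRingHom ℚ))) :
    (P.map (Int.castRingHom ℂ)).roots.Nodup ∧
    1 ≤ ∏ p ∈ (P.map (Int.castRingHom ℂ)).roots.toFinset.offDiag, ‖p.1 - p.2‖ := by
  classical
  set Q := P.map (Int.castRingHom ℂ) with hQ
  have hQm : Q.Monic := hP.map _
  have hsplit : Q.Splits := IsAlgClosed.splits Q
  have hQ2 : Q = (P.map (Int.castRingHom ℚ)).map (algebraMap ℚ ℂ) := by
    rw [Polynomial.map_map, hQ]; congr 1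
  have hsep : Q.Separable := by rw [hQ2]; exact hirr.separable.map
  have hnd : Q.roots.Nodup := nodup_roots hsep
  refine ⟨hnd, ?_⟩
  have h1 : (Q.roots.map (fun x => eval x (derivative Q))).prod =
      ((resultant P (derivative P) P.natDegree P.derivative.natDegree : ℤ) : ℂ) := by
    have h := resultant_eq_prod_eval Q (derivative Q) P.derivative.natDegree
      (by rw [hQ, derivative_map]; exact natDegree_map_le) hsplit
    rw [hQm.leadingCoeff, one_pow, one_mul] at h
    rw [← h, hQ, derivative_map, hP.natDegree_map, resultant_map_map]
    rfl
  have h2 : (Q.roots.map (fun x => eval x (derivative Q))).prod =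
      ∏ x ∈ Q.roots.toFinset, ∏ y ∈ Q.roots.toFinset.erase x, (x - y) := by
    rw [← prod_toFinset_of_nodup _ hnd]
    refine Finset.prod_congr rfl fun x hx => ?_
    rw [hsplit.eval_root_derivative hQm (Multiset.mem_toFinset.1 hx),
      ← prod_toFinset_of_nodup _ (hnd.erase x)]
    refine Finset.prod_congr ?_ fun _ _ => rfl
    ext y
    simp only [Multiset.mem_toFinset, Finset.mem_erase, hnd.mem_erase_iff]
  have h3 : ∏ p ∈ Q.roots.toFinset.offDiag, (p.1 - p.2) =
      ∏ x ∈ Q.roots.toFinset, ∏ y ∈ Q.roots.toFinset.erase x, (x - y) := by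
    refine Finset.prod_finset_product' _ _ _ fun p => ?_
    simp only [Finset.mem_offDiag, Finset.mem_erase]
    tauto
  have h4 : ∏ p ∈ Q.roots.toFinset.offDiag, (p.1 - p.2) ≠ 0 := by
    refine Finset.prod_ne_zero_iff.2 fun p hp => sub_ne_zero.2 ?_
    exact (Finset.mem_offDiag.1 hp).2.2
  rw [← norm_prod]
  rw [h3, ← h2, h1] at h4 ⊢
  rw [Complex.norm_intCast]
  exact_mod_cast Int.one_le_abs (by exact_mod_cast h4)

/-- If the pairwise distances in `S` have product at least one, then `S` (of diameter
at most `R`) has no large subset `T` of diameter at most `R ^ (-m)`. -/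
lemma card_cluster_le {S T : Finset ℂ} (hTS : T ⊆ S) {R : ℝ} (hR : 2 ≤ R) (m : ℕ)
    (hS : ∀ x ∈ S, ∀ y ∈ S, ‖x - y‖ ≤ R)
    (hT : ∀ x ∈ T, ∀ y ∈ T, ‖x - y‖ ≤ (R ^ m)⁻¹)
    (h : 1 ≤ ∏ p ∈ S.offDiag, ‖p.1 - p.2‖) :
    m * (T.card * T.card - T.card) ≤ S.card * S.card := by
  have hsub : T.offDiag ⊆ S.offDiag := Finset.offDiag_mono hTS
  have hR0 : 0 < R := by linarith
  rw [← Finset.prod_sdiff hsub] at h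
  have h1 : ∏ p ∈ T.offDiag, ‖p.1 - p.2‖ ≤ ((R ^ m)⁻¹) ^ (T.card * T.card - T.card) := by
    rw [← Finset.offDiag_card]
    refine prod_le_pow_card_of_nonneg ?_ ?_
    · intros; positivity
    · intro p hp
      rw [Finset.mem_offDiag] at hp
      exact hT _ hp.1 _ hp.2.1
  have h2 : ∏ p ∈ S.offDiag \ T.offDiag, ‖p.1 - p.2‖ ≤ R ^ (S.card * S.card) := by
    calc _ ≤ R ^ (S.offDiag \ T.offDiag).card := by
          refine prod_le_pow_card_of_nonneg ?_ ?_
          · intros; positivity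
          · intro p hp
            rw [Finset.mem_sdiff, Finset.mem_offDiag] at hp
            exact hS _ hp.1.1 _ hp.1.2.1
      _ ≤ _ := by
          refine pow_le_pow_right₀ (by linarith) ?_
          refine (Finset.card_le_card Finset.sdiff_subset).trans ?_
          rw [Finset.offDiag_card]
          exact Nat.sub_le _ _
  have h3 : 1 ≤ R ^ (S.card * S.card) * ((R ^ m)⁻¹) ^ (T.card * T.card - T.card) :=
    h.trans (by gcongr)
  rw [inv_pow, ← pow_mul, ← div_eq_mul_inv, one_le_div (by positivity)] at h3
  exact (pow_le_pow_iff_right₀ (by linarith)).1 h3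

/-- Northcott finiteness: roots in a bounded set bound the Mahler measure. -/
lemma finite_polK_natDegree_le {K : Set ℂ} {B : ℝ≥0} (hB : 1 ≤ B) (hK : ∀ z ∈ K, ‖z‖ ≤ B)
    (m : ℕ) : {P | P ∈ PolK K ∧ P.natDegree ≤ m}.Finite := by
  refine (finite_mahlerMeasure_le m (B ^ m)).subset ?_
  rintro P ⟨⟨hP, -, hr⟩, hm⟩
  refine ⟨hm, ?_⟩
  have hQm : (P.map (Int.castRingHom ℂ)).Monic := hP.map _
  rw [mahlerMeasure_eq_leadingCoeff_mul_prod_roots, hQm.leadingCoeff, norm_one, one_mul]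
  have hB' : (1 : ℝ) ≤ B := by exact_mod_cast hB
  calc _ ≤ ((P.map (Int.castRingHom ℂ)).roots.map (fun _ ↦ (B : ℝ))).prod := by
        refine Multiset.prod_map_le_prod_map₀ _ _ ?_ ?_
        · intros; positivity
        · intro z hz
          exact max_le hB' (hK z (hr z hz))
    _ = (B : ℝ) ^ (P.map (Int.castRingHom ℂ)).roots.card := by simp
    _ ≤ _ := by
        push_cast
        refine pow_le_pow_right₀ hB' ?_
        exact (card_roots' _).trans (by rwa [hP.natDegree_map])

lemma add_testAgainstNN_apply (μ ν : FiniteMeasure ℂ) (f : BoundedContinuousFunction ℂ ℝ≥0) :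
    (μ + ν).testAgainstNN f = μ.testAgainstNN f + ν.testAgainstNN f := by
  simp only [← ENNReal.coe_inj, ENNReal.coe_add, FiniteMeasure.testAgainstNN_coe_eq,
    FiniteMeasure.toMeasure_add, lintegral_add_measure]

lemma diracFM_testAgainstNN (z : ℂ) (f : BoundedContinuousFunction ℂ ℝ≥0) :
    (diracFM z).testAgainstNN f = f z := by
  rw [← ENNReal.coe_inj, FiniteMeasure.testAgainstNN_coe_eq]
  exact lintegral_dirac _ _

lemma rootFM_testAgainstNN (P : ℤ[X]) (f : BoundedContinuousFunction ℂ ℝ≥0) :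
    (rootFM P).testAgainstNN f =
      (P.natDegree : ℝ≥0)⁻¹ * ((P.map (Int.castRingHom ℂ)).roots.map f).sum := by
  rw [rootFM, FiniteMeasure.smul_testAgainstNN_apply, smul_eq_mul]
  congr 1
  induction (P.map (Int.castRingHom ℂ)).roots using Multiset.induction_on with
  | empty => simp
  | cons a s ih =>
    simp only [Multiset.map_cons, Multiset.sum_cons, add_testAgainstNN_apply, ih,
      diracFM_testAgainstNN]

/-- The uniform smallness of `δ_P` near `z`, for `P ∈ Irr_K` of large degree. -/
lemma rootFM_testAgainstNN_le {K : Set ℂ} {R : ℝ} (hR : 2 ≤ R)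
    (hK : ∀ x ∈ K, ∀ y ∈ K, ‖x - y‖ ≤ R) {k : ℕ} (hk : 0 < k) {P : ℤ[X]} (hP : P ∈ IrrK K)
    (hd : 2 * k ^ 2 ≤ P.natDegree) (z : ℂ) (f : BoundedContinuousFunction ℂ ℝ≥0)
    (hf1 : ∀ x, f x ≤ 1) (hf0 : ∀ x, (R ^ (2 * k ^ 2))⁻¹ / 2 ≤ ‖x - z‖ → f x = 0) :
    (rootFM P).testAgainstNN f ≤ (k : ℝ≥0)⁻¹ := by
  classical
  obtain ⟨⟨hPm, hd0, hroots⟩, hirr⟩ := hP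
  obtain ⟨hnd, hprod⟩ := one_le_prod_offDiag hPm hirr
  set S := (P.map (Int.castRingHom ℂ)).roots.toFinset with hS
  have hcard : S.card = P.natDegree := by
    rw [hS, Multiset.toFinset_card_of_nodup hnd,
      ← (IsAlgClosed.splits (P.map (Int.castRingHom ℂ))).natDegree_eq_card_roots,
      hPm.natDegree_map]
  set T := S.filter (fun x => ‖x - z‖ < (R ^ (2 * k ^ 2))⁻¹ / 2) with hT
  have hcl := card_cluster_le (T := T) (S := S) (Finset.filter_subset _ _) hR (2 * k ^ 2)
    (fun x hx y hy => hK x (hroots x (Multiset.mem_toFinset.1 hx)) y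
      (hroots y (Multiset.mem_toFinset.1 hy)))
    (fun x hx y hy => by
      have hx' := (Finset.mem_filter.1 hx).2
      have hy' := (Finset.mem_filter.1 hy).2
      have := norm_sub_le_norm_sub_add_norm_sub x z y
      rw [norm_sub_rev z y] at this
      linarith) hprod
  have hTS : T.card ≤ P.natDegree := hcard ▸ Finset.card_le_card (Finset.filter_subset _ _)
  rw [hcard] at hcl
  have hkn : k * T.card ≤ P.natDegree := by
    have h1 : T.card ≤ T.card * T.card := Nat.le_mul_self _
    have h2 : 2 * k ^ 2 * (T.card * T.card) ≤
        P.natDegree * P.natDegree + 2 * k ^ 2 * T.card := by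
      rw [Nat.mul_sub] at hcl
      omega
    have h3 : 2 * k ^ 2 * T.card ≤ P.natDegree * P.natDegree := Nat.mul_le_mul hd hTS
    refine Nat.mul_self_le_mul_self_iff.1 ?_
    nlinarith
  have hsum : ((P.map (Int.castRingHom ℂ)).roots.map f).sum ≤ (T.card : ℝ≥0) := by
    rw [← sum_toFinset_of_nodup _ hnd, ← hS]
    calc ∑ x ∈ S, f x = ∑ x ∈ T, f x := by
          symm
          refine Finset.sum_filter_of_ne fun x _ hx => ?_
          by_contra hlt
          exact hx (hf0 x (not_lt.1 hlt))
      _ ≤ ∑ x ∈ T, 1 := Finset.sum_le_sum fun x _ => hf1 x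
      _ = _ := by simp
  rw [rootFM_testAgainstNN]
  have hk' : (0 : ℝ≥0) < k := by exact_mod_cast hk
  have hd' : (0 : ℝ≥0) < P.natDegree := by exact_mod_cast hd0
  have hkn' : (k : ℝ≥0) * T.card ≤ P.natDegree := by exact_mod_cast hkn
  calc _ ≤ (P.natDegree : ℝ≥0)⁻¹ * (T.card : ℝ≥0) := by gcongr
    _ ≤ (k : ℝ≥0)⁻¹ := by
      rw [inv_mul_le_iff₀ hd', ← div_eq_mul_inv, le_div_iff₀ hk', mul_comm]
      exact hkn'

theorem stmt4 (K : Set ℂ) (hK : K.Nonempty) (hKcomp : IsCompact K)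
    (μ : FiniteMeasure ℂ) (hμ : μ ∈ Minf K) :
    ∀ z ∈ K, (μ : Measure ℂ) {z} = 0 := by
  intro z _
  obtain ⟨B₀, hB₀⟩ := hKcomp.isBounded.exists_norm_le
  set B : ℝ≥0 := max 1 B₀.toNNReal with hBdef
  have hB1 : 1 ≤ B := le_max_left _ _
  have hB : ∀ x ∈ K, ‖x‖ ≤ B := fun x hx =>
    (hB₀ x hx).trans ((Real.le_coe_toNNReal _).trans (by exact_mod_cast le_max_right _ _))
  have hB1' : (1 : ℝ) ≤ B := by exact_mod_cast hB1
  have hR : (2 : ℝ) ≤ 2 * B := by linarith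
  have hdiam : ∀ x ∈ K, ∀ y ∈ K, ‖x - y‖ ≤ 2 * (B : ℝ) := fun x hx y hy => by
    have := norm_sub_le x y
    linarith [hB x hx, hB y hy]
  have key : ∀ k : ℕ, 0 < k → (μ : Measure ℂ) {z} ≤ (k : ℝ≥0∞)⁻¹ := by
    intro k hk
    have hε : 0 < ((2 * (B : ℝ)) ^ (2 * k ^ 2))⁻¹ / 2 := by positivity
    set f := thickenedIndicator hε {z} with hf
    have hf0 : ∀ x, ((2 * (B : ℝ)) ^ (2 * k ^ 2))⁻¹ / 2 ≤ ‖x - z‖ → f x = 0 := by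
      intro x hx
      refine thickenedIndicator_zero hε _ ?_
      rw [Metric.thickening_singleton, Metric.mem_ball, dist_eq_norm]
      exact not_lt.2 hx
    have hfin := finite_polK_natDegree_le hB1 hB (2 * k ^ 2)
    have hmem := Set.mem_iInter.1 hμ hfin.toFinset
    have hclosed : IsClosed {ν : FiniteMeasure ℂ | ν.testAgainstNN f ≤ (k : ℝ≥0)⁻¹} :=
      isClosed_le (FiniteMeasure.continuous_testAgainstNN_eval f) continuous_const
    have hconv : Convex ℝ≥0 {ν : FiniteMeasure ℂ | ν.testAgainstNN f ≤ (k : ℝ≥0)⁻¹} := by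
      intro ν₁ h₁ ν₂ h₂ a b _ _ hab
      simp only [Set.mem_ofPred_eq, add_testAgainstNN_apply,
        FiniteMeasure.smul_testAgainstNN_apply, smul_eq_mul] at h₁ h₂ ⊢
      calc _ ≤ a * (k : ℝ≥0)⁻¹ + b * (k : ℝ≥0)⁻¹ := by gcongr
        _ = _ := by rw [← add_mul, hab, one_mul]
    have hle : μ.testAgainstNN f ≤ (k : ℝ≥0)⁻¹ := by
      refine closure_minimal (convexHull_min ?_ hconv) hclosed hmem
      rintro _ ⟨P, ⟨hP, hPF⟩, rfl⟩
      have hdeg : 2 * k ^ 2 ≤ P.natDegree := by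
        by_contra hlt
        refine hPF ?_
        simp only [Set.Finite.coe_toFinset, Set.mem_ofPred_eq]
        exact ⟨hP.1, (not_le.1 hlt).le⟩
      exact rootFM_testAgainstNN_le hR hdiam hk hP hdeg z f
        (thickenedIndicator_le_one hε _) hf0
    calc (μ : Measure ℂ) {z} = ∫⁻ x in {z}, 1 ∂(μ : Measure ℂ) := by simp
      _ = ∫⁻ x in {z}, f x ∂(μ : Measure ℂ) := by
        refine setLIntegral_congr_fun (measurableSet_singleton z) fun x hx => ?_
        rw [hf, thickenedIndicator_one hε _ hx, ENNReal.coe_one]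
      _ ≤ ∫⁻ x, f x ∂(μ : Measure ℂ) := setLIntegral_le_lintegral _ _
      _ = (μ.testAgainstNN f : ℝ≥0∞) := FiniteMeasure.testAgainstNN_coe_eq.symm
      _ ≤ ((k : ℝ≥0)⁻¹ : ℝ≥0) := by exact_mod_cast hle
      _ = _ := by
        rw [ENNReal.coe_inv (by exact_mod_cast hk.ne'), ENNReal.coe_natCast]
  by_contra hne
  obtain ⟨n, hn⟩ := ENNReal.exists_inv_nat_lt hne
  have hn0 : 0 < n := Nat.pos_of_ne_zero fun h => by
    subst h; simp at hn
  exact absurd (key n hn0) (not_le.2 hn)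
end

section
/- Let K be a nonempty compact subset of ℂ and let μ ∈ M_K. Then there exist a unique family of nonnegative reals (c_P)_{P ∈ Irr_K} and a unique finite positive Borel measure ν on K such that μ = ν + Σ_{P ∈ Irr_K} c_P · δ_P (the sum converging in total variation), and such that either ν = 0 or ν(K)^{-1} · ν belongs to M_∞. In particular ν(K) + Σ_P c_P = 1. -/
/-!
**Existence.** Factoring `Q ∈ Pol_K` into irreducibles writes `δ_Q` as a convex combination of
measures `δ_P` with `P ∈ Irr_K` (`exists_weights`). Take an ultrafilter on the measures `δ_Q`
converging to `μ`, and let `c_P` be the limit of the weight of `P`. For a finite set `F`, the part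
of `δ_Q` carried by factors outside `F` stays in a compact set of measures on `K`, so it converges
to some `ν_F` with `μ = ν_F + ∑_{P ∈ F} c_P δ_P`, and `ν_F`, once normalised, lies in the closed
convex hull of the `δ_P` with `P ∈ Irr_K`, `P ∉ F` (`exists_coeffs`). Hence `∑_P c_P δ_P ≤ μ`; the
difference `ν` is the limit of the `ν_F` as `F` grows, because the tails of `∑_P c_P` tend to zero,
so `ν` is zero or proportional to an element of `M_∞`.

**Uniqueness.** If `P ≠ R` are in `Irr_K`, then `∏_{R(w) = 0} |P(w)| = |Res(R, P)| ≥ 1`, so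
`∫ log |P| dδ_R ≥ 0`. Truncating `log |P|` to a bounded continuous function, this inequality passes
to the closed convex hull of the `δ_R`, `R ≠ P`, and prevents a measure in `M_∞` from having an
atom at a root of `P` (`Minf_singleton`). As distinct elements of `Irr_K` have no common root and
each has simple roots, `c_P = deg P · μ({z})` for any root `z` of `P` (`coeff_eq`), and then `ν` is
determined by subtraction.
-/

open MeasureTheory Polynomial Set
open scoped NNReal ENNReal

open Filter Topology

/-! ### Root measures -/

theorem sum_diracFM_apply (m : Multiset ℂ) (s : Set ℂ) [DecidablePred (· ∈ s)] :
    (m.map diracFM).sum s = m.countP (· ∈ s) := by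
  induction m using Multiset.induction_on with
  | empty => simp
  | cons a m ih =>
    rw [Multiset.map_cons, Multiset.sum_cons, FiniteMeasure.coeFn_add, Pi.add_apply, ih,
      Multiset.countP_cons]
    have : diracFM a s = if a ∈ s then 1 else 0 := by
      simp only [diracFM, FiniteMeasure.mk_apply, Measure.dirac_apply, Set.indicator]
      split_ifs <;> simp
    rw [this]
    push_cast
    rw [add_comm]

theorem rootFM_apply (P : ℤ[X]) (s : Set ℂ) [DecidablePred (· ∈ s)] :
    rootFM P s = (P.natDegree : ℝ≥0)⁻¹ * (P.map (Int.castRingHom ℂ)).roots.countP (· ∈ s) := by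
  rw [rootFM, FiniteMeasure.smul_apply, sum_diracFM_apply, smul_eq_mul]

theorem natDegree_map_complex (P : ℤ[X]) :
    (P.map (Int.castRingHom ℂ)).natDegree = P.natDegree :=
  natDegree_map_eq_of_injective Int.cast_injective P

theorem card_roots_complex (P : ℤ[X]) :
    (P.map (Int.castRingHom ℂ)).roots.card = P.natDegree := by
  rw [← natDegree_map_complex, ← (IsAlgClosed.splits _).natDegree_eq_card_roots]

theorem rootFM_mass {P : ℤ[X]} (hP : 0 < P.natDegree) : (rootFM P).mass = 1 := by
  classical
  rw [FiniteMeasure.mass, rootFM_apply]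
  have : (P.map (Int.castRingHom ℂ)).roots.countP (· ∈ (univ : Set ℂ)) = P.natDegree := by
    rw [← card_roots_complex, Multiset.countP_eq_card]
    simp
  rw [this]
  exact inv_mul_cancel₀ (by positivity)

theorem rootFM_compl {K : Set ℂ} {P : ℤ[X]} (hP : P ∈ PolK K) : rootFM P Kᶜ = 0 := by
  classical
  rw [rootFM_apply]
  have : (P.map (Int.castRingHom ℂ)).roots.countP (· ∈ Kᶜ) = 0 := by
    rw [Multiset.countP_eq_zero]
    exact fun z hz h => h (hP.2.2 z hz)
  rw [this]
  simp

theorem integral_rootFM (P : ℤ[X]) (f : BoundedContinuousFunction ℂ ℝ) :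
    ∫ w, f w ∂(rootFM P : Measure ℂ)
      = (P.natDegree : ℝ)⁻¹ * ((P.map (Int.castRingHom ℂ)).roots.map f).sum := by
  have key : ∀ m : Multiset ℂ,
      ∫ w, f w ∂((m.map diracFM).sum : Measure ℂ) = (m.map f).sum := by
    intro m
    induction m using Multiset.induction_on with
    | empty => simp
    | cons a m ih =>
      rw [Multiset.map_cons, Multiset.sum_cons, FiniteMeasure.toMeasure_add,
        integral_add_measure (f.integrable _) (f.integrable _), ih, Multiset.map_cons,
        Multiset.sum_cons]
      congr 1
      simp [diracFM]
  rw [rootFM, FiniteMeasure.toMeasure_smul, integral_smul_nnreal_measure, key, NNReal.smul_def]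
  simp

/-- `δ_{PQ}` is the barycentre of `δ_P` and `δ_Q` weighted by their degrees. -/
theorem rootFM_mul {P Q : ℤ[X]} (hP : P.Monic) (hQ : Q.Monic)
    (hP0 : 0 < P.natDegree) (hQ0 : 0 < Q.natDegree) :
    rootFM (P * Q) = ((P.natDegree : ℝ≥0) / (P * Q).natDegree) • rootFM P
      + ((Q.natDegree : ℝ≥0) / (P * Q).natDegree) • rootFM Q := by
  have hne : (P * Q).map (Int.castRingHom ℂ) ≠ 0 := ((hP.mul hQ).map _).ne_zero
  have hP1 : (P.natDegree : ℝ≥0) ≠ 0 := by positivity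
  have hQ1 : (Q.natDegree : ℝ≥0) ≠ 0 := by positivity
  have h1 : (P.natDegree : ℝ≥0) / (P * Q).natDegree * (P.natDegree : ℝ≥0)⁻¹
      = ((P * Q).natDegree : ℝ≥0)⁻¹ := by field_simp
  have h2 : (Q.natDegree : ℝ≥0) / (P * Q).natDegree * (Q.natDegree : ℝ≥0)⁻¹
      = ((P * Q).natDegree : ℝ≥0)⁻¹ := by field_simp
  simp only [rootFM]
  rw [smul_smul, smul_smul, h1, h2, ← smul_add]
  rw [Polynomial.map_mul] at hne ⊢
  rw [roots_mul hne, Multiset.map_add, Multiset.sum_add]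

/-! ### Irreducible integer polynomials -/

/-- Two elements of `Irr_K` sharing a complex root coincide: both are its minimal polynomial. -/
theorem eq_of_common_root {K : Set ℂ} {P R : ℤ[X]} (hP : P ∈ IrrK K) (hR : R ∈ IrrK K) {z : ℂ}
    (hzP : (P.map (Int.castRingHom ℂ)).eval z = 0)
    (hzR : (R.map (Int.castRingHom ℂ)).eval z = 0) : P = R := by
  have key : ∀ S ∈ IrrK K, (S.map (Int.castRingHom ℂ)).eval z = 0 →
      S.map (Int.castRingHom ℚ) = minpoly ℚ z := by
    intro S hS hz
    refine minpoly.eq_of_irreducible_of_monic hS.2 ?_ (hS.1.1.map _)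
    rw [aeval_def, eval₂_map, ← hz, eval_map]
    congr 1
  exact map_injective _ Int.cast_injective ((key P hP hzP).trans (key R hR hzR).symm)

theorem nodup_roots_of_irr {K : Set ℂ} {P : ℤ[X]} (hP : P ∈ IrrK K) :
    (P.map (Int.castRingHom ℂ)).roots.Nodup := by
  have h := (hP.2.separable).map (f := algebraMap ℚ ℂ)
  rw [Polynomial.map_map] at h
  have : (algebraMap ℚ ℂ).comp (Int.castRingHom ℚ) = Int.castRingHom ℂ := RingHom.ext_int _ _
  rw [this] at h
  exact nodup_roots h

theorem rootFM_singleton {K : Set ℂ} {P : ℤ[X]} (hP : P ∈ IrrK K) {z : ℂ}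
    (hz : z ∈ (P.map (Int.castRingHom ℂ)).roots) : rootFM P {z} = (P.natDegree : ℝ≥0)⁻¹ := by
  classical
  rw [rootFM_apply]
  have : (P.map (Int.castRingHom ℂ)).roots.countP (· ∈ ({z} : Set ℂ)) = 1 := by
    rw [← Multiset.count_eq_one_of_mem (nodup_roots_of_irr hP) hz, Multiset.count]
    exact Multiset.countP_congr rfl fun x _ => by simp [eq_comm]
  rw [this]
  simp

theorem rootFM_singleton_of_ne {K : Set ℂ} {P R : ℤ[X]} (hP : P ∈ IrrK K) (hR : R ∈ IrrK K)
    (hne : R ≠ P) {z : ℂ} (hz : z ∈ (P.map (Int.castRingHom ℂ)).roots) : rootFM R {z} = 0 := by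
  classical
  rw [rootFM_apply]
  have : (R.map (Int.castRingHom ℂ)).roots.countP (· ∈ ({z} : Set ℂ)) = 0 := by
    rw [Multiset.countP_eq_zero]
    rintro x hx rfl
    exact hne (eq_of_common_root hR hP (isRoot_of_mem_roots hx) (isRoot_of_mem_roots hz))
  rw [this]
  simp

/-- The product of `|P|` over the roots of `R` is `|Res(R, P)|`, a positive integer. -/
theorem one_le_prod_norm_eval {K : Set ℂ} {P R : ℤ[X]} (hP : P ∈ IrrK K) (hR : R ∈ IrrK K)
    (hne : R ≠ P) :
    1 ≤ ((R.map (Int.castRingHom ℂ)).roots.map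
      fun w => ‖(P.map (Int.castRingHom ℂ)).eval w‖).prod := by
  have h := resultant_eq_prod_eval (R.map (Int.castRingHom ℂ)) (P.map (Int.castRingHom ℂ))
    P.natDegree (natDegree_map_complex P).le (IsAlgClosed.splits _)
  rw [(hR.1.1.map _).leadingCoeff, one_pow, one_mul, resultant_map_map] at h
  have hprod : ((R.map (Int.castRingHom ℂ)).roots.map
      fun w => ‖(P.map (Int.castRingHom ℂ)).eval w‖).prod
      = ‖((R.map (Int.castRingHom ℂ)).roots.map (P.map (Int.castRingHom ℂ)).eval).prod‖ := by
    have := map_multiset_prod (normHom : ℂ →*₀ ℝ)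
      ((R.map (Int.castRingHom ℂ)).roots.map (P.map (Int.castRingHom ℂ)).eval)
    rw [Multiset.map_map] at this
    exact this.symm
  have hne0 : ((R.map (Int.castRingHom ℂ)).roots.map (P.map (Int.castRingHom ℂ)).eval).prod
      ≠ 0 := by
    intro h0
    rw [Multiset.prod_eq_zero_iff, Multiset.mem_map] at h0
    obtain ⟨w, hw, hw0⟩ := h0
    exact hne (eq_of_common_root hR hP (isRoot_of_mem_roots hw) hw0)
  rw [hprod]
  rw [← h] at hne0 ⊢
  rw [eq_intCast, Complex.norm_intCast]
  rw [eq_intCast] at hne0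
  exact_mod_cast Int.one_le_abs (Int.cast_ne_zero.1 hne0)

/-! ### Measures in `M_∞` do not charge algebraic integers of `Irr_K` -/

/-- The function `log |P|`, truncated below at `-L` and above at `log M`. -/
noncomputable def truncLog (P : ℤ[X]) (L M : ℝ) (hL : 0 ≤ L) (hM : 1 ≤ M) :
    BoundedContinuousFunction ℂ ℝ :=
  BoundedContinuousFunction.ofNormedAddCommGroup
    (fun w => Real.log (max (Real.exp (-L)) (min ‖(P.map (Int.castRingHom ℂ)).eval w‖ M)))
    (by
      refine Continuous.log ?_ fun w => (lt_max_of_lt_left (Real.exp_pos _)).ne'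
      fun_prop)
    (L + Real.log M)
    (by
      intro w
      have h0 := Real.log_nonneg hM
      have hpos : 0 < max (Real.exp (-L)) (min ‖(P.map (Int.castRingHom ℂ)).eval w‖ M) :=
        lt_max_of_lt_left (Real.exp_pos _)
      rw [Real.norm_eq_abs, abs_le]
      constructor
      · have := Real.log_le_log (Real.exp_pos (-L)) (le_max_left (Real.exp (-L))
          (min ‖(P.map (Int.castRingHom ℂ)).eval w‖ M))
        rw [Real.log_exp] at this
        linarith
      · have : max (Real.exp (-L)) (min ‖(P.map (Int.castRingHom ℂ)).eval w‖ M) ≤ M :=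
          max_le ((Real.exp_le_one_iff.2 (by linarith)).trans hM) (min_le_right _ _)
        have := Real.log_le_log hpos this
        linarith)

theorem truncLog_apply (P : ℤ[X]) {L M : ℝ} (hL : 0 ≤ L) (hM : 1 ≤ M) (w : ℂ) :
    truncLog P L M hL hM w
      = Real.log (max (Real.exp (-L)) (min ‖(P.map (Int.castRingHom ℂ)).eval w‖ M)) := rfl

theorem truncLog_le (P : ℤ[X]) {L M : ℝ} (hL : 0 ≤ L) (hM : 1 ≤ M) (w : ℂ) :
    truncLog P L M hL hM w ≤ Real.log M := by
  rw [truncLog_apply]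
  exact Real.log_le_log (lt_max_of_lt_left (Real.exp_pos _))
    (max_le ((Real.exp_le_one_iff.2 (by linarith)).trans hM) (min_le_right _ _))

theorem truncLog_root (P : ℤ[X]) {L M : ℝ} (hL : 0 ≤ L) (hM : 1 ≤ M) {z : ℂ}
    (hz : (P.map (Int.castRingHom ℂ)).eval z = 0) : truncLog P L M hL hM z = -L := by
  rw [truncLog_apply, hz, norm_zero, min_eq_left (by linarith),
    max_eq_left (Real.exp_pos _).le, Real.log_exp]

theorem integral_truncLog_nonneg {K : Set ℂ} {P R : ℤ[X]} (hP : P ∈ IrrK K) (hR : R ∈ IrrK K)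
    (hne : R ≠ P) {L M : ℝ} (hL : 0 ≤ L) (hM : 1 ≤ M)
    (hKM : ∀ w ∈ K, ‖(P.map (Int.castRingHom ℂ)).eval w‖ ≤ M) :
    0 ≤ ∫ w, truncLog P L M hL hM w ∂(rootFM R : Measure ℂ) := by
  rw [integral_rootFM]
  refine mul_nonneg (by positivity) ?_
  -- On `K` the truncation only increases `|P|`, so it suffices to bound the untruncated product.
  have hpos : ∀ x ∈ (R.map (Int.castRingHom ℂ)).roots.map (fun w =>
      max (Real.exp (-L)) (min ‖(P.map (Int.castRingHom ℂ)).eval w‖ M)), x ≠ 0 := by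
    intro x hx
    obtain ⟨w, -, rfl⟩ := Multiset.mem_map.1 hx
    exact (lt_max_of_lt_left (Real.exp_pos _)).ne'
  have hsum : ((R.map (Int.castRingHom ℂ)).roots.map (truncLog P L M hL hM)).sum
      = Real.log ((R.map (Int.castRingHom ℂ)).roots.map (fun w =>
      max (Real.exp (-L)) (min ‖(P.map (Int.castRingHom ℂ)).eval w‖ M))).prod := by
    rw [Real.log_multiset_prod hpos, Multiset.map_map]
    rfl
  rw [hsum]
  refine Real.log_nonneg ((one_le_prod_norm_eval hP hR hne).trans ?_)
  refine Multiset.prod_map_le_prod_map₀ _ _ (fun w _ => norm_nonneg _) fun w hw => ?_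
  exact le_max_of_le_right (le_min le_rfl (hKM w (hR.1.2.2 w hw)))

/-- A measure in `M_∞` gives no mass to a root of an element `P` of `Irr_K`: otherwise the
truncations of `log |P|` would have integrals tending to `-∞`, whereas these integrals are
nonnegative on `δ_R` for `R ≠ P`, hence on the closed convex hull of these measures. -/
theorem Minf_singleton {K : Set ℂ} (hK : IsCompact K) {η : FiniteMeasure ℂ} (hη : η ∈ Minf K)
    {P : ℤ[X]} (hP : P ∈ IrrK K) {z : ℂ} (hz : (P.map (Int.castRingHom ℂ)).eval z = 0) :
    (η : Measure ℂ) {z} = 0 := by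
  obtain ⟨M₀, hM₀⟩ := hK.exists_bound_of_continuousOn
    (f := fun w => (P.map (Int.castRingHom ℂ)).eval w) (by fun_prop)
  have hM : 1 ≤ max 1 M₀ := le_max_left _ _
  have hlogM := Real.log_nonneg hM
  have hKM : ∀ w ∈ K, ‖(P.map (Int.castRingHom ℂ)).eval w‖ ≤ max 1 M₀ :=
    fun w hw => (hM₀ w hw).trans (le_max_right _ _)
  have hηP := mem_iInter.1 hη {P}
  have hint : ∀ L (hL : 0 ≤ L), 0 ≤ ∫ w, truncLog P L _ hL hM w ∂(η : Measure ℂ) := by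
    intro L hL
    set f := truncLog P L _ hL hM with hf
    have hclosed : IsClosed {ξ : FiniteMeasure ℂ | 0 ≤ ∫ w, f w ∂(ξ : Measure ℂ)} :=
      isClosed_le continuous_const
        (FiniteMeasure.continuous_integral_boundedContinuousFunction f)
    have hconv : Convex ℝ≥0 {ξ : FiniteMeasure ℂ | 0 ≤ ∫ w, f w ∂(ξ : Measure ℂ)} := by
      intro ξ₁ h₁ ξ₂ h₂ a b _ _ _
      simp only [mem_ofPred_eq] at h₁ h₂ ⊢
      rw [FiniteMeasure.toMeasure_add, integral_add_measure (f.integrable _) (f.integrable _),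
        FiniteMeasure.toMeasure_smul, FiniteMeasure.toMeasure_smul,
        integral_smul_nnreal_measure, integral_smul_nnreal_measure]
      exact add_nonneg (mul_nonneg a.2 h₁) (mul_nonneg b.2 h₂)
    refine closure_minimal (convexHull_min ?_ hconv) hclosed hηP
    rintro _ ⟨R, hR, rfl⟩
    exact integral_truncLog_nonneg hP hR.1 (by simpa using hR.2) hL hM hKM
  have hbound : ∀ L, 0 ≤ L →
      L * (η : Measure ℂ).real {z} ≤ Real.log (max 1 M₀) * (η : Measure ℂ).real univ := by
    intro L hL
    have h1 := hint L hL
    have hind : Integrable (({z} : Set ℂ).indicator fun _ => L) (η : Measure ℂ) :=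
      (integrable_const L).indicator (measurableSet_singleton z)
    have h2 : ∫ w, truncLog P L _ hL hM w ∂(η : Measure ℂ)
        ≤ ∫ w, (Real.log (max 1 M₀) - ({z} : Set ℂ).indicator (fun _ => L) w)
          ∂(η : Measure ℂ) := by
      refine integral_mono ((truncLog P L _ hL hM).integrable _)
        ((integrable_const _).sub hind) fun w => ?_
      by_cases hw : w = z
      · subst hw
        simp only [truncLog_root P hL hM hz, mem_singleton_iff, indicator_of_mem]
        linarith
      · simpa [hw] using truncLog_le P hL hM w
    rw [integral_sub (integrable_const _) hind,
      integral_indicator_const L (measurableSet_singleton z), integral_const, smul_eq_mul,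
      smul_eq_mul] at h2
    linarith
  have hreal : (η : Measure ℂ).real {z} = 0 := by
    by_contra hne
    have hpos : 0 < (η : Measure ℂ).real {z} := lt_of_le_of_ne measureReal_nonneg (Ne.symm hne)
    have hC : 0 ≤ Real.log (max 1 M₀) * (η : Measure ℂ).real univ :=
      mul_nonneg hlogM measureReal_nonneg
    have := hbound ((Real.log (max 1 M₀) * (η : Measure ℂ).real univ + 1)
      / (η : Measure ℂ).real {z}) (by positivity)
    rw [div_mul_cancel₀ _ hpos.ne'] at this
    linarith
  exact (measureReal_eq_zero_iff (measure_ne_top _ _)).1 hreal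

/-! ### Decomposition of root measures -/

theorem PolK_of_mul {K : Set ℂ} {P Q : ℤ[X]} (hP : P.Monic) (hQ : Q.Monic) (hPQ : P * Q ∈ PolK K)
    (hP0 : 0 < P.natDegree) (hQ0 : 0 < Q.natDegree) : P ∈ PolK K ∧ Q ∈ PolK K := by
  have hne : (P * Q).map (Int.castRingHom ℂ) ≠ 0 := ((hP.mul hQ).map _).ne_zero
  have h := hPQ.2.2
  rw [Polynomial.map_mul] at hne h
  rw [roots_mul hne] at h
  exact ⟨⟨hP, hP0, fun z hz => h z (Multiset.mem_add.2 (.inl hz))⟩,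
    ⟨hQ, hQ0, fun z hz => h z (Multiset.mem_add.2 (.inr hz))⟩⟩

/-- Factoring `Q ∈ Pol_K` into irreducibles writes `δ_Q` as a finite convex combination of
measures `δ_P` with `P ∈ Irr_K`. -/
theorem exists_weights {K : Set ℂ} (n : ℕ) : ∀ Q ∈ PolK K, Q.natDegree = n →
    ∃ a : ℤ[X] →₀ ℝ≥0, (∀ P ∈ a.support, P ∈ IrrK K) ∧
      rootFM Q = Finsupp.linearCombination ℝ≥0 rootFM a := by
  induction n using Nat.strong_induction_on with
  | _ n ih =>
    intro Q hQ hn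
    by_cases hirr : Irreducible (Q.map (Int.castRingHom ℚ))
    · refine ⟨Finsupp.single Q 1, fun P hP => ?_, by simp⟩
      rw [Finset.mem_singleton.1 (Finsupp.support_single_subset hP)]
      exact ⟨hQ, hirr⟩
    · have hirr' : ¬ Irreducible Q := fun h =>
        hirr ((Monic.irreducible_iff_irreducible_map_fraction_map (K := ℚ) hQ.1).1 h)
      have hQ1 : Q ≠ 1 := by
        rintro rfl
        simpa using hQ.2.1
      rw [hQ.1.irreducible_iff_natDegree, not_and] at hirr'
      have h := hirr' hQ1
      push Not at h
      obtain ⟨f, g, hf, hg, hfg, hf0, hg0⟩ := h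
      have hf0' := Nat.pos_of_ne_zero hf0
      have hg0' := Nat.pos_of_ne_zero hg0
      subst hfg
      have hdeg := hf.natDegree_mul hg
      obtain ⟨hfK, hgK⟩ := PolK_of_mul hf hg hQ hf0' hg0'
      obtain ⟨a, ha, hae⟩ := ih f.natDegree (by omega) f hfK rfl
      obtain ⟨b, hb, hbe⟩ := ih g.natDegree (by omega) g hgK rfl
      classical
      refine ⟨((f.natDegree : ℝ≥0) / (f * g).natDegree) • a
        + ((g.natDegree : ℝ≥0) / (f * g).natDegree) • b, fun P hP => ?_, ?_⟩
      · rcases Finset.mem_union.1 (Finsupp.support_add hP) with h | h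
        · exact ha P (Finsupp.support_smul h)
        · exact hb P (Finsupp.support_smul h)
      · rw [rootFM_mul hf hg hf0' hg0', map_add, map_smul, map_smul, ← hae, ← hbe]

/-- Normalised finite nonnegative combinations of points of a convex set belong to it. -/
theorem Convex.exists_sum_eq_smul {E ι : Type*} [AddCommMonoid E] [Module ℝ≥0 E] {C : Set E}
    (hC : Convex ℝ≥0 C) (s : Finset ι) (w : ι → ℝ≥0) (x : ι → E) (hx : ∀ i ∈ s, x i ∈ C)
    (hw : ∑ i ∈ s, w i ≠ 0) : ∃ y ∈ C, ∑ i ∈ s, w i • x i = (∑ i ∈ s, w i) • y := by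
  classical
  induction s using Finset.induction_on with
  | empty => simp at hw
  | insert i s hi ih =>
    rw [Finset.sum_insert hi] at hw ⊢
    rw [Finset.sum_insert hi]
    have hxi := hx i (Finset.mem_insert_self _ _)
    by_cases h0 : ∑ i ∈ s, w i = 0
    · refine ⟨x i, hxi, ?_⟩
      rw [h0, add_zero, Finset.sum_eq_zero, add_zero]
      intro j hj
      rw [Finset.sum_eq_zero_iff.1 h0 j hj, zero_smul]
    · obtain ⟨y, hy, hye⟩ := ih (fun j hj => hx j (Finset.mem_insert_of_mem hj)) h0
      refine ⟨_, hC hxi hy (a := w i / (w i + ∑ i ∈ s, w i))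
        (b := (∑ i ∈ s, w i) / (w i + ∑ i ∈ s, w i)) zero_le zero_le ?_, ?_⟩
      · rw [← add_div, div_self hw]
      · rw [smul_add, smul_smul, smul_smul, mul_div_cancel₀ _ hw, mul_div_cancel₀ _ hw, hye]

theorem sum_rootFM_mass {K : Set ℂ} (s : Finset ℤ[X]) (w : ℤ[X] → ℝ≥0)
    (hs : ∀ P ∈ s, P ∈ IrrK K) : (∑ P ∈ s, w P • rootFM P).mass = ∑ P ∈ s, w P := by
  classical
  induction s using Finset.induction_on with
  | empty => simp
  | insert P s hP ih =>
    rw [Finset.sum_insert hP, Finset.sum_insert hP, FiniteMeasure.mass,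
      FiniteMeasure.coeFn_add, Pi.add_apply, FiniteMeasure.smul_apply]
    have h1 := rootFM_mass (hs P (Finset.mem_insert_self _ _)).1.2.1
    have h2 := ih fun Q hQ => hs Q (Finset.mem_insert_of_mem hQ)
    rw [FiniteMeasure.mass] at h1 h2
    rw [h1, h2, smul_eq_mul, mul_one]

theorem sum_rootFM_compl {K : Set ℂ} (s : Finset ℤ[X]) (w : ℤ[X] → ℝ≥0)
    (hs : ∀ P ∈ s, P ∈ IrrK K) : (∑ P ∈ s, w P • rootFM P) Kᶜ = 0 := by
  classical
  induction s using Finset.induction_on with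
  | empty => simp
  | insert P s hP ih =>
    rw [Finset.sum_insert hP, FiniteMeasure.coeFn_add, Pi.add_apply, FiniteMeasure.smul_apply,
      rootFM_compl (hs P (Finset.mem_insert_self _ _)).1,
      ih fun Q hQ => hs Q (Finset.mem_insert_of_mem hQ)]
    simp

/-- The coefficients `c_P` are limits along an ultrafilter of the weights of `P` in measures `δ_Q`
converging to `μ`. For every finite `F`, the parts of the `δ_Q` carried by irreducible factors
outside `F` then converge to some `ν_F` complementary to `∑_{P ∈ F} c_P δ_P` in `μ`. -/
theorem exists_coeffs {K : Set ℂ} (hK : IsCompact K) {μ : FiniteMeasure ℂ} (hμ : μ ∈ MK K) :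
    ∃ c : ℤ[X] → ℝ≥0, (∀ P, P ∉ IrrK K → c P = 0) ∧
      ∀ F : Finset ℤ[X], ∃ νF : FiniteMeasure ℂ, νF Kᶜ = 0 ∧
        μ = νF + ∑ P ∈ F, c P • rootFM P ∧
        (νF.mass ≠ 0 →
          νF.mass⁻¹ • νF ∈ closure (convexHull ℝ≥0 (rootFM '' (IrrK K \ (F : Set ℤ[X]))))) := by
  classical
  obtain ⟨u, hSu, huμ⟩ := mem_closure_iff_ultrafilter.1 hμ
  have hex : ∀ ξ : FiniteMeasure ℂ, ∃ a : ℤ[X] →₀ ℝ≥0, ξ ∈ rootFM '' PolK K →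
      ((∀ P ∈ a.support, P ∈ IrrK K) ∧ ξ = ∑ P ∈ a.support, a P • rootFM P ∧
        ∑ P ∈ a.support, a P = 1) := by
    intro ξ
    by_cases hξ : ξ ∈ rootFM '' PolK K
    · obtain ⟨Q, hQ, rfl⟩ := hξ
      obtain ⟨a, ha, hae⟩ := exists_weights (K := K) _ Q hQ rfl
      rw [Finsupp.linearCombination_apply, Finsupp.sum] at hae
      refine ⟨a, fun _ => ⟨ha, hae, ?_⟩⟩
      rw [← sum_rootFM_mass _ _ ha, ← hae, rootFM_mass hQ.2.1]
    · exact ⟨0, fun h => absurd h hξ⟩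
  choose a ha using hex
  have ha_le : ∀ ξ ∈ rootFM '' PolK K, ∀ P, a ξ P ≤ 1 := by
    intro ξ hξ P
    by_cases hP : P ∈ (a ξ).support
    · rw [← (ha ξ hξ).2.2]
      exact Finset.single_le_sum (f := fun P => a ξ P) (fun _ _ => zero_le) hP
    · rw [Finsupp.notMem_support_iff.1 hP]
      exact zero_le
  have hlim : ∀ P, ∃ c : ℝ≥0, Tendsto (fun ξ => a ξ P) u (𝓝 c) := by
    intro P
    obtain ⟨c, -, hc⟩ := (isCompact_Icc (a := (0 : ℝ≥0)) (b := 1)).ultrafilter_le_nhds'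
      (u.map fun ξ => a ξ P)
      (Ultrafilter.mem_map.2 (mem_of_superset hSu fun ξ hξ => ⟨zero_le, ha_le ξ hξ P⟩))
    exact ⟨c, hc⟩
  choose c hc using hlim
  refine ⟨c, fun P hP => ?_, fun F => ?_⟩
  · refine tendsto_nhds_unique (hc P) (tendsto_const_nhds.congr' ?_)
    filter_upwards [hSu] with ξ hξ
    by_contra h
    exact hP ((ha ξ hξ).1 P (Finsupp.mem_support_iff.2 (Ne.symm h)))
  · set rest : FiniteMeasure ℂ → FiniteMeasure ℂ :=
      fun ξ => ∑ P ∈ (a ξ).support \ F, a ξ P • rootFM P with hrest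
    have hsub : ∀ ξ ∈ rootFM '' PolK K, ∀ P ∈ (a ξ).support \ F, P ∈ IrrK K :=
      fun ξ hξ P hP => (ha ξ hξ).1 P (Finset.mem_sdiff.1 hP).1
    have hrest_mass : ∀ ξ ∈ rootFM '' PolK K,
        (rest ξ).mass = ∑ P ∈ (a ξ).support \ F, a ξ P :=
      fun ξ hξ => sum_rootFM_mass _ _ (hsub ξ hξ)
    have hsplit : ∀ ξ ∈ rootFM '' PolK K, ξ = rest ξ + ∑ P ∈ F, a ξ P • rootFM P := by
      intro ξ hξ
      have h1 : ξ = ∑ P ∈ (a ξ).support ∪ F, a ξ P • rootFM P := by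
        conv_lhs => rw [(ha ξ hξ).2.1]
        refine Finset.sum_subset Finset.subset_union_left fun P _ hP => ?_
        rw [Finsupp.notMem_support_iff.1 hP, zero_smul]
      rw [← Finset.sum_sdiff Finset.subset_union_right, Finset.union_sdiff_right] at h1
      exact h1
    obtain ⟨νF, ⟨-, hνK⟩, hνF⟩ :=
      (isCompact_setOfPred_finiteMeasure_le_of_isCompact 1 hK).ultrafilter_le_nhds' (u.map rest)
      (by
        refine Ultrafilter.mem_map.2 (mem_of_superset hSu fun ξ hξ => ⟨?_, ?_⟩)
        · rw [hrest_mass ξ hξ, ← (ha ξ hξ).2.2]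
          exact Finset.sum_le_sum_of_subset Finset.sdiff_subset
        · exact sum_rootFM_compl _ _ (hsub ξ hξ))
    have hνF' : Tendsto rest u (𝓝 νF) := hνF
    refine ⟨νF, hνK, ?_, fun hmass => ?_⟩
    · have h1 : Tendsto (fun ξ => rest ξ + ∑ P ∈ F, a ξ P • rootFM P) u
          (𝓝 (νF + ∑ P ∈ F, c P • rootFM P)) :=
        hνF'.add (tendsto_finsetSum _ fun P _ => (hc P).smul_const _)
      have h2 : Tendsto (fun ξ : FiniteMeasure ℂ => ξ) u (𝓝 μ) := huμ
      refine tendsto_nhds_unique h2 (h1.congr' ?_)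
      filter_upwards [hSu] with ξ hξ
      exact (hsplit ξ hξ).symm
    · have hm : Tendsto (fun ξ => (rest ξ).mass) u (𝓝 νF.mass) := hνF'.mass
      refine mem_closure_of_tendsto ((hm.inv₀ hmass).smul hνF') ?_
      filter_upwards [hSu, hm.eventually_ne hmass] with ξ hξ hne
      have hne' := hne
      rw [hrest_mass ξ hξ] at hne'
      obtain ⟨y, hy, hye⟩ := (convex_convexHull ℝ≥0
        (rootFM '' (IrrK K \ (F : Set ℤ[X])))).exists_sum_eq_smul ((a ξ).support \ F)
        (a ξ) rootFM (fun P hP => subset_convexHull _ _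
          ⟨P, ⟨hsub ξ hξ P hP, (Finset.mem_sdiff.1 hP).2⟩, rfl⟩) hne'
      rw [← hrest_mass ξ hξ] at hye
      have hye' : rest ξ = (rest ξ).mass • y := hye
      have : (rest ξ).mass⁻¹ • rest ξ = y := by
        conv_lhs => rw [hye']
        rw [smul_smul, ← hye', inv_mul_cancel₀ hne, one_smul]
      rw [this]
      exact hy

/-! ### Existence and uniqueness of the decomposition -/

/-- The coefficient `c_P` can be read off from the mass of `μ` at a root of `P`. -/
theorem coeff_eq {K : Set ℂ} (hK : IsCompact K) {μ : FiniteMeasure ℂ} {c : ℤ[X] → ℝ≥0}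
    {ν : Measure ℂ} (hν : IsFiniteMeasure ν) (hc : ∀ P, P ∉ IrrK K → c P = 0)
    (hμ : (μ : Measure ℂ)
      = ν + Measure.sum (fun P : ℤ[X] => (c P : ℝ≥0∞) • (rootFM P : Measure ℂ)))
    (hξ : ν = 0 ∨ ∃ ξ ∈ Minf K, (ξ : Measure ℂ) = (ν K)⁻¹ • ν)
    {P : ℤ[X]} (hP : P ∈ IrrK K) {z : ℂ} (hz : z ∈ (P.map (Int.castRingHom ℂ)).roots) :
    μ {z} = c P * (P.natDegree : ℝ≥0)⁻¹ := by
  have hν0 : ν {z} = 0 := by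
    rcases hξ with rfl | ⟨ξ, hξ, hξe⟩
    · simp
    · have h := Minf_singleton hK hξ hP (isRoot_of_mem_roots hz)
      rw [hξe, Measure.smul_apply, smul_eq_mul, mul_eq_zero] at h
      exact h.resolve_left (ENNReal.inv_ne_zero.2 (measure_ne_top _ _))
  rw [← ENNReal.coe_inj, FiniteMeasure.ennreal_coeFn_eq_coeFn_toMeasure, hμ, Measure.add_apply,
    hν0, zero_add, Measure.sum_apply _ (measurableSet_singleton z), tsum_eq_single P]
  · rw [Measure.smul_apply, ← FiniteMeasure.ennreal_coeFn_eq_coeFn_toMeasure,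
      rootFM_singleton hP hz, smul_eq_mul, ENNReal.coe_mul]
  · intro R hRP
    by_cases hR : R ∈ IrrK K
    · rw [Measure.smul_apply, ← FiniteMeasure.ennreal_coeFn_eq_coeFn_toMeasure,
        rootFM_singleton_of_ne hP hR hRP hz]
      simp
    · simp [hc R hR]

theorem sum_coeff_univ {K : Set ℂ} {c : ℤ[X] → ℝ≥0} (hc : ∀ P, P ∉ IrrK K → c P = 0)
    (s : Set ℤ[X]) :
    Measure.sum (fun P : s => (c P : ℝ≥0∞) • (rootFM (P : ℤ[X]) : Measure ℂ)) univ
      = ∑' P : s, (c P : ℝ≥0∞) := by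
  rw [Measure.sum_apply _ MeasurableSet.univ]
  refine tsum_congr fun P => ?_
  by_cases hP : (P : ℤ[X]) ∈ IrrK K
  · rw [Measure.smul_apply, ← FiniteMeasure.ennreal_mass, rootFM_mass hP.1.2.1]
    simp
  · simp [hc _ hP]

theorem mass_of_mem_MK {K : Set ℂ} {μ : FiniteMeasure ℂ} (hμ : μ ∈ MK K) : μ.mass = 1 := by
  have hcl : IsClosed {ξ : FiniteMeasure ℂ | ξ.mass = 1} :=
    isClosed_eq FiniteMeasure.continuous_mass continuous_const
  refine closure_minimal ?_ hcl hμ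
  rintro _ ⟨Q, hQ, rfl⟩
  exact rootFM_mass hQ.2.1

theorem stmt7 (K : Set ℂ) (hK : K.Nonempty) (hKcomp : IsCompact K)
    (μ : FiniteMeasure ℂ) (hμ : μ ∈ MK K) :
    ∃ c : Polynomial ℤ → ℝ≥0, ∃ ν : Measure ℂ,
      (IsFiniteMeasure ν ∧ ν Kᶜ = 0 ∧ (∀ P, P ∉ IrrK K → c P = 0) ∧
        (μ : Measure ℂ)
          = ν + Measure.sum (fun P : Polynomial ℤ => (c P : ℝ≥0∞) • (rootFM P : Measure ℂ)) ∧
        (ν = 0 ∨ ∃ ξ ∈ Minf K, (ξ : Measure ℂ) = (ν K)⁻¹ • ν)) ∧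
      ν K + ∑' P : Polynomial ℤ, (c P : ℝ≥0∞) = 1 ∧
      (∀ c' : Polynomial ℤ → ℝ≥0, ∀ ν' : Measure ℂ,
        (IsFiniteMeasure ν' ∧ ν' Kᶜ = 0 ∧ (∀ P, P ∉ IrrK K → c' P = 0) ∧
          (μ : Measure ℂ)
            = ν' + Measure.sum (fun P : Polynomial ℤ => (c' P : ℝ≥0∞) • (rootFM P : Measure ℂ)) ∧
          (ν' = 0 ∨ ∃ ξ ∈ Minf K, (ξ : Measure ℂ) = (ν' K)⁻¹ • ν')) →
        c' = c ∧ ν' = ν) := by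
  classical
  obtain ⟨c, hc0, hF⟩ := exists_coeffs hKcomp hμ
  set S : Measure ℂ := Measure.sum (fun P : ℤ[X] => (c P : ℝ≥0∞) • (rootFM P : Measure ℂ)) with hS
  -- `S` restricted to a finite set of indices is bounded by `μ`, hence so is `S`.
  have hSle : S ≤ (μ : Measure ℂ) := by
    refine Measure.le_iff.2 fun s hs => ?_
    rw [hS, Measure.sum_apply _ hs, ENNReal.tsum_eq_iSup_sum]
    refine iSup_le fun F => ?_
    obtain ⟨νF, -, hμF, -⟩ := hF F
    rw [hμF, FiniteMeasure.toMeasure_add, Measure.add_apply, FiniteMeasure.toMeasure_sum,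
      Measure.finsetSum_apply]
    exact le_add_left le_rfl
  have hSfin : IsFiniteMeasure S := isFiniteMeasure_of_le _ hSle
  set ν : Measure ℂ := (μ : Measure ℂ) - S with hν
  have hμν : (μ : Measure ℂ) = ν + S := (Measure.sub_add_cancel_of_le hSle).symm
  have hνle : ν ≤ (μ : Measure ℂ) := Measure.sub_le
  have hνfin : IsFiniteMeasure ν := isFiniteMeasure_of_le _ hνle
  have hνK : ν Kᶜ = 0 := by
    obtain ⟨νF, hνF, hμF, -⟩ := hF ∅
    rw [Finset.sum_empty, add_zero] at hμF
    rw [← hμF, FiniteMeasure.null_iff_toMeasure_null] at hνF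
    exact le_antisymm ((hνle _).trans hνF.le) zero_le
  have hνuniv : ν univ = ν K := by
    rw [← measure_add_measure_compl hKcomp.measurableSet, hνK, add_zero]
  have hSuniv : S univ = ∑' P : ℤ[X], (c P : ℝ≥0∞) := by
    have h := sum_coeff_univ hc0 univ
    rw [Measure.sum_apply _ MeasurableSet.univ] at h
    rw [hS, Measure.sum_apply _ MeasurableSet.univ]
    rw [tsum_univ (f := fun P : ℤ[X] => ((c P : ℝ≥0∞) • (rootFM P : Measure ℂ)) univ),
      tsum_univ (f := fun P : ℤ[X] => (c P : ℝ≥0∞))] at h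
    exact h
  have hinf : ν = 0 ∨ ∃ ξ ∈ Minf K, (ξ : Measure ℂ) = (ν K)⁻¹ • ν := by
    refine or_iff_not_imp_left.2 fun hν0 => ?_
    set νf : FiniteMeasure ℂ := ⟨ν, hνfin⟩ with hνf
    have hνf0 : νf.mass ≠ 0 := by
      rw [FiniteMeasure.mass_nonzero_iff]
      intro h
      exact hν0 (congrArg FiniteMeasure.toMeasure h)
    refine ⟨νf.mass⁻¹ • νf, mem_iInter.2 fun F => ?_, ?_⟩
    · -- The tails of `S` tend to zero, so the measures `ν_G` tend to `ν` as `G` grows.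
      have hsplit : ∀ G : Finset ℤ[X],
          (∑ P ∈ G, (c P : ℝ≥0∞) • (rootFM P : Measure ℂ))
            + Measure.sum (fun P : ((G : Set ℤ[X])ᶜ : Set ℤ[X]) =>
              (c P : ℝ≥0∞) • (rootFM (P : ℤ[X]) : Measure ℂ)) = S := by
        intro G
        rw [hS, ← Measure.sum_add_sum_compl (G : Set ℤ[X]), ← Measure.sum_coe_finset]
        rfl
      have hTfin : ∀ G : Finset ℤ[X], IsFiniteMeasure
          (Measure.sum (fun P : ((G : Set ℤ[X])ᶜ : Set ℤ[X]) =>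
            (c P : ℝ≥0∞) • (rootFM (P : ℤ[X]) : Measure ℂ))) := fun G =>
        isFiniteMeasure_of_le S ((Measure.le_add_left le_rfl).trans (hsplit G).le)
      set T : Finset ℤ[X] → FiniteMeasure ℂ := fun G => ⟨_, hTfin G⟩ with hT
      have hTmass : Tendsto (fun G => (T G).mass) atTop (𝓝 0) := by
        rw [← ENNReal.tendsto_coe]
        have hne : ∑' P : ℤ[X], (c P : ℝ≥0∞) ≠ ∞ := by
          rw [← hSuniv]
          exact measure_ne_top _ _
        refine (ENNReal.tendsto_tsum_compl_atTop_zero hne).congr fun G => ?_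
        rw [FiniteMeasure.ennreal_mass]
        exact (sum_coeff_univ hc0 _).symm
      have hT0 : Tendsto (fun G => νf + T G) atTop (𝓝 νf) := by
        simpa using tendsto_const_nhds.add (FiniteMeasure.tendsto_zero_of_tendsto_zero_mass hTmass)
      refine isClosed_closure.mem_of_tendsto ((hT0.mass.inv₀ hνf0).smul hT0) ?_
      filter_upwards [eventually_ge_atTop F, hT0.mass.eventually_ne hνf0] with G hFG hGne
      obtain ⟨νG, -, hμG, hmem⟩ := hF G
      have hνG : νG = νf + T G := by
        refine FiniteMeasure.toMeasure_injective ?_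
        have h1 : (μ : Measure ℂ)
            = νG + ∑ P ∈ G, (c P : ℝ≥0∞) • (rootFM P : Measure ℂ) := by
          rw [hμG, FiniteMeasure.toMeasure_add, FiniteMeasure.toMeasure_sum]
          rfl
        have hGfin : IsFiniteMeasure (∑ P ∈ G, (c P : ℝ≥0∞) • (rootFM P : Measure ℂ)) :=
          isFiniteMeasure_of_le S ((Measure.le_add_right le_rfl).trans (hsplit G).le)
        rw [hμν, ← hsplit G, add_comm (∑ P ∈ G, _), ← add_assoc, Measure.add_left_inj] at h1
        exact h1.symm
      rw [hνG] at hmem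
      refine closure_mono (convexHull_mono (image_mono ?_)) (hmem hGne)
      exact sdiff_subset_sdiff_right (Finset.coe_subset.2 hFG)
    · have hνf1 : (νf.mass : ℝ≥0∞) = ν K := by
        rw [FiniteMeasure.ennreal_mass, ← hνuniv]
        rfl
      rw [← hνf1, ← ENNReal.coe_inv hνf0, FiniteMeasure.toMeasure_smul]
      rfl
  refine ⟨c, ν, ⟨hνfin, hνK, hc0, hμν, hinf⟩, ?_, ?_⟩
  · rw [← hνuniv, ← hSuniv, ← Measure.add_apply, ← hμν, ← FiniteMeasure.ennreal_mass,
      mass_of_mem_MK hμ, ENNReal.coe_one]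
  · rintro c' ν' ⟨hν'fin, -, hc'0, hμν', hinf'⟩
    have hcc : c' = c := by
      funext P
      by_cases hP : P ∈ IrrK K
      · obtain ⟨z, hz⟩ : ∃ z, z ∈ (P.map (Int.castRingHom ℂ)).roots := by
          rw [← Multiset.card_pos_iff_exists_mem, card_roots_complex]
          exact hP.1.2.1
        have h := (coeff_eq hKcomp hν'fin hc'0 hμν' hinf' hP hz).symm.trans
          (coeff_eq hKcomp hνfin hc0 hμν hinf hP hz)
        have hd : (P.natDegree : ℝ≥0)⁻¹ ≠ 0 :=
          inv_ne_zero (Nat.cast_ne_zero.2 hP.1.2.1.ne')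
        exact mul_right_cancel₀ hd h
      · rw [hc0 P hP, hc'0 P hP]
    subst hcc
    exact ⟨rfl, (Measure.add_left_inj S ν' ν).1 (hμν'.symm.trans hμν)⟩
end

section
/- Let K be a nonempty compact subset of ℂ, let μ ∈ M_K, and let z ∈ K. If z is not an algebraic integer totally in K — that is, z is not a root of any monic polynomial in ℤ[X] of positive degree all of whose complex roots lie in K — then μ({z}) = 0. -/
/-!
The point `z` is a root of no `P ∈ PolK K`, and the claim is that the roots of such `P` cannot
accumulate at `z` with positive proportion. Fix `j`. By the box principle (`exists_small_poly`)
there is a nonzero `Q ∈ ℤ[X]` and a bound `M > 1` such that `|Q| ≤ M` on `K` and `|Q(z)| < ε` with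
`ε ≤ M⁻ʲ`; in a small disc `U` around `z` one still has `|Q| < ε`, and `U` contains no root of `Q`
other than possibly `z`.

Let `P ∈ PolK K`. An irreducible factor of `P` sharing a root with `Q` divides `Q`, and it does not
vanish at `z`, so it has no root in `U`. For any other irreducible factor, of degree `d` and with
`c` roots in `U`, the resultant with `Q` is a nonzero integer, so
`1 ≤ ∏ |Q(w)| ≤ εᶜ Mᵈ ≤ M ^ (d - c j)` and hence `c j ≤ d`. Summing over the factors
(`countP_roots_le`), `δ_P(U) ≤ 1 / j` for every `P ∈ PolK K`. Testing against a continuous bump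
supported in `U` shows that this bound passes to weak limits, so `μ {z} ≤ 1 / j` for all `j`.

No distinction between algebraic and transcendental `z` is needed, since `Q(z) = 0` is harmless.
-/

open MeasureTheory Polynomial Set
open scoped NNReal ENNReal

/-! ### Integer polynomials small at a point -/

lemma aeval_sum_monomial {m : ℕ} (a : Fin m → ℤ) (w : ℂ) :
    aeval w (∑ i : Fin m, monomial (i : ℕ) (a i)) = ∑ i, (a i : ℂ) * w ^ (i : ℕ) := by
  simp [map_sum, aeval_monomial]

lemma norm_sum_mul_pow_le {m H : ℕ} {R : ℝ} (hR : 1 ≤ R) (a : Fin m → ℤ)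
    (ha : ∀ i, |a i| ≤ (H : ℤ)) {w : ℂ} (hw : ‖w‖ ≤ R) :
    ‖∑ i, (a i : ℂ) * w ^ (i : ℕ)‖ ≤ H * (m * R ^ m) := by
  have h1 : ∀ i ∈ Finset.univ, ‖(a i : ℂ) * w ^ (i : ℕ)‖ ≤ H * R ^ m := by
    intro i _
    rw [norm_mul, norm_pow, Complex.norm_intCast]
    have h2 : |(a i : ℝ)| ≤ H := by exact_mod_cast ha i
    have h3 : ‖w‖ ^ (i : ℕ) ≤ R ^ m :=
      (pow_le_pow_left₀ (norm_nonneg _) hw _).trans (pow_le_pow_right₀ hR i.2.le)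
    gcongr
  refine (norm_sum_le_of_le _ h1).trans (le_of_eq ?_)
  simp
  ring

lemma abs_sub_mul_lt_one {x y t : ℝ} (ht : 0 < t) (h : ⌊x * t⌋ = ⌊y * t⌋) :
    |x - y| * t < 1 := by
  have := Int.abs_sub_lt_one_of_floor_eq_floor h
  rwa [← sub_mul, abs_mul, abs_of_pos ht] at this

/-- Dirichlet's box principle: for every `j` there is a nonzero integer polynomial `Q` that is
bounded by some `M > 1` on the disc of radius `R` and whose value at `z` is smaller than `M⁻ʲ`. -/
lemma exists_small_poly (z : ℂ) (R : ℝ) (hR : 1 ≤ R) (hz : ‖z‖ ≤ R) (j : ℕ) :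
    ∃ Q : ℤ[X], Q ≠ 0 ∧ ∃ M ε : ℝ, 1 < M ∧ ‖aeval z Q‖ < ε ∧ ε * M ^ j ≤ 1 ∧
      ∀ w : ℂ, ‖w‖ ≤ R → ‖aeval w Q‖ ≤ M := by
  -- `m` is the number of coefficients and `H` the bound on them; two real conditions at
  -- precision `H ^ (-(j + 1))` cost `2 (j + 2) < m` powers of `H`.
  set m : ℕ := 2 * (j + 2) + 1 with hm
  set S : ℝ := m * R ^ m with hS
  have hS1 : 1 ≤ S := by
    have h1 : (1 : ℝ) ≤ m := by exact_mod_cast (by omega : 1 ≤ m)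
    exact one_le_mul_of_one_le_of_one_le h1 (one_le_pow₀ hR)
  have hS0 : 0 < S := by linarith
  obtain ⟨H₀, hH₀⟩ := exists_nat_ge (2 * S ^ (j + 1))
  -- `9 ≤ H` makes the number `(2 N + 1) ^ 2 ≤ 9 N ^ 2` of boxes below at most `H ^ m`.
  set H : ℕ := H₀ + 9 with hH
  have hHS : 2 * S ^ (j + 1) ≤ H := by rw [hH]; push_cast; linarith
  have hH9 : (9 : ℝ) ≤ H := by rw [hH]; push_cast; linarith [(Nat.cast_nonneg H₀ : (0:ℝ) ≤ H₀)]
  have hH0 : (0 : ℝ) < H := by linarith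
  set t : ℝ := H ^ (j + 1) / S with ht
  have ht0 : 0 < t := by positivity
  let v : (Fin m → Fin (H + 1)) → ℂ := fun a => ∑ i, (((a i : ℕ) : ℤ) : ℂ) * z ^ (i : ℕ)
  have hv : ∀ a, ‖v a‖ ≤ H * S := fun a =>
    norm_sum_mul_pow_le hR (fun i => ((a i : ℕ) : ℤ))
      (fun i => by rw [abs_of_nonneg (by positivity)]; exact_mod_cast Nat.lt_succ_iff.1 (a i).2) hz
  let N : ℤ := (H : ℤ) ^ (j + 2)
  have hN : (H : ℝ) * S * t = (N : ℝ) := by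
    simp only [ht, N]; push_cast; field_simp; ring
  have hfloor : ∀ x : ℝ, |x| ≤ H * S → ⌊x * t⌋ ∈ Finset.Icc (-N) N := by
    intro x hx
    have hx' : |x * t| ≤ N := by
      rw [← hN, abs_mul, abs_of_pos ht0]; gcongr
    rw [abs_le] at hx'
    rw [Finset.mem_Icc, Int.le_floor]
    refine ⟨by push_cast; exact hx'.1, ?_⟩
    have := (Int.floor_le (x * t)).trans hx'.2
    exact_mod_cast this
  let f : (Fin m → Fin (H + 1)) → ℤ × ℤ := fun a => (⌊(v a).re * t⌋, ⌊(v a).im * t⌋)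
  obtain ⟨a, -, b, -, hab, hfab⟩ := Finset.exists_ne_map_eq_of_card_lt_of_maps_to
    (s := Finset.univ) (t := Finset.Icc (-N) N ×ˢ Finset.Icc (-N) N) (f := f)
    (by
      have hN0 : 0 ≤ N := by positivity
      rw [Finset.card_product, Int.card_Icc, Finset.card_univ, Fintype.card_fun, Fintype.card_fin,
        Fintype.card_fin]
      zify
      rw [Int.toNat_of_nonneg (by linarith)]
      have h1 : (1 : ℤ) ≤ N := one_le_pow₀ (by rw [hH]; push_cast; linarith)
      have h2 : (9 : ℤ) ≤ H := by exact_mod_cast hH9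
      calc (N + 1 - -N) * (N + 1 - -N) ≤ 9 * (N * N) := by nlinarith
        _ ≤ H * (N * N) := by gcongr
        _ = (H : ℤ) ^ m := by simp only [N, hm]; ring
        _ < ((H : ℤ) + 1) ^ m := by
          apply pow_lt_pow_left₀ <;> omega)
    (fun a _ => by
      simp only [Finset.coe_product, Set.mem_prod, f]
      exact ⟨hfloor _ ((Complex.abs_re_le_norm _).trans (hv a)),
        hfloor _ ((Complex.abs_im_le_norm _).trans (hv a))⟩)
  let c : Fin m → ℤ := fun i => ((a i : ℕ) : ℤ) - ((b i : ℕ) : ℤ)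
  have hc : ∀ i, |c i| ≤ (H : ℤ) := by
    intro i
    have := (a i).2
    have := (b i).2
    simp only [c, abs_le]
    omega
  refine ⟨∑ i : Fin m, monomial (i : ℕ) (c i), ?_, H * S, 2 / t, ?_, ?_, ?_, ?_⟩
  · intro h0
    apply hab
    ext i
    have h1 := congrArg (fun p => coeff p (i : ℕ)) h0
    simp only [finsetSum_coeff, coeff_monomial, coeff_zero, Fin.val_inj] at h1
    rw [Finset.sum_ite_eq' Finset.univ i c] at h1
    simp only [Finset.mem_univ, if_true, c] at h1
    omega
  · nlinarith
  · rw [aeval_sum_monomial]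
    have h1 : ∑ i, (c i : ℂ) * z ^ (i : ℕ) = v a - v b := by
      simp only [v, c, ← Finset.sum_sub_distrib]
      refine Finset.sum_congr rfl fun i _ => ?_
      push_cast; ring
    simp only [f, Prod.mk.injEq] at hfab
    have hre := abs_sub_mul_lt_one ht0 hfab.1
    have him := abs_sub_mul_lt_one ht0 hfab.2
    rw [h1, lt_div_iff₀ ht0]
    calc ‖v a - v b‖ * t ≤ (|(v a - v b).re| + |(v a - v b).im|) * t := by
          gcongr; exact Complex.norm_le_abs_re_add_abs_im _
      _ < 2 := by
          rw [Complex.sub_re, Complex.sub_im]; linarith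
  · have h1 : 2 / t * (H * S) ^ j = 2 * S ^ (j + 1) / H := by
      rw [ht]; field_simp; ring
    rw [h1, div_le_one hH0]
    exact hHS
  · intro w hw
    rw [aeval_sum_monomial]
    exact norm_sum_mul_pow_le hR c hc hw

/-! ### Counting roots near the point -/

/-- The product of the values of `Q` at the roots of a monic `P` is the resultant of `P` and `Q`,
an integer. -/
lemma one_le_prod_norm_aeval {P Q : ℤ[X]} (hP : P.Monic)
    (h : ∀ w ∈ (P.map (Int.castRingHom ℂ)).roots, aeval w Q ≠ 0) :
    1 ≤ ((P.map (Int.castRingHom ℂ)).roots.map fun w => ‖aeval w Q‖).prod := by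
  have h1 := resultant_eq_prod_eval (P.map (Int.castRingHom ℂ)) (Q.map (Int.castRingHom ℂ))
    Q.natDegree natDegree_map_le (IsAlgClosed.splits _)
  rw [resultant_map_map, (hP.map _).leadingCoeff, one_pow, one_mul] at h1
  have h2 : ∀ w : ℂ, (Q.map (Int.castRingHom ℂ)).eval w = aeval w Q := fun w => by
    rw [eval_map, aeval_def]; rfl
  simp only [h2] at h1
  have h3 : ((P.map (Int.castRingHom ℂ)).roots.map fun w => ‖aeval w Q‖).prod =
      ‖((P.map (Int.castRingHom ℂ)).roots.map fun w => aeval w Q).prod‖ := by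
    have := Multiset.prod_hom ((P.map (Int.castRingHom ℂ)).roots.map fun w => aeval w Q)
      (normHom : ℂ →*₀ ℝ)
    rw [Multiset.map_map] at this
    exact this
  have h4 : ((P.map (Int.castRingHom ℂ)).roots.map fun w => aeval w Q).prod ≠ 0 := by
    rw [Ne, Multiset.prod_eq_zero_iff, Multiset.mem_map]
    rintro ⟨w, hw, hw0⟩
    exact h w hw hw0
  rw [h3]
  rw [← h1] at h4 ⊢
  rw [eq_intCast, Complex.norm_intCast]
  rw [eq_intCast, Int.cast_ne_zero] at h4
  exact_mod_cast Int.one_le_abs h4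

open Classical in
lemma prod_norm_le_pow {M ε : ℝ} (hM : 1 < M) {U : Set ℂ} {g : ℂ → ℝ} (hg : ∀ w, 0 ≤ g w)
    (hε0 : 0 ≤ ε) (hU : ∀ w ∈ U, g w ≤ ε) (s : Multiset ℂ) (hs : ∀ w ∈ s, g w ≤ M) :
    (s.map g).prod ≤ ε ^ s.countP (· ∈ U) * M ^ s.card := by
  induction s using Multiset.induction_on with
  | empty => simp
  | cons a s ih =>
    have ih' := ih fun w hw => hs w (Multiset.mem_cons_of_mem hw)
    have hprod : 0 ≤ (s.map g).prod :=
      Multiset.prod_nonneg fun x hx => by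
        obtain ⟨w, -, rfl⟩ := Multiset.mem_map.1 hx
        exact hg w
    rw [Multiset.map_cons, Multiset.prod_cons, Multiset.card_cons]
    by_cases ha : a ∈ U
    · rw [Multiset.countP_cons_of_pos _ ha]
      calc g a * (s.map g).prod ≤ ε * (ε ^ s.countP (· ∈ U) * M ^ s.card) :=
            mul_le_mul (hU a ha) ih' hprod hε0
        _ ≤ ε * (ε ^ s.countP (· ∈ U) * M ^ s.card) * M :=
            le_mul_of_one_le_right (by positivity) hM.le
        _ = _ := by ring
    · rw [Multiset.countP_cons_of_neg _ ha]
      calc g a * (s.map g).prod ≤ M * (ε ^ s.countP (· ∈ U) * M ^ s.card) :=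
            mul_le_mul (hs a (Multiset.mem_cons_self _ _)) ih' hprod (by positivity)
        _ = _ := by ring

open Classical in
/-- The counting bound. If `|Q| ≤ M` on `K`, `|Q| ≤ ε ≤ M⁻ʲ` on `U`, and `U` contains no root of
`Q` except possibly `z`, then at most a proportion `1 / j` of the roots of a monic `P` with roots
in `K` and `P(z) ≠ 0` lie in `U`. Both sides are additive in `P`, so only irreducible `P` matter:
either `P` shares a root with `Q`, hence divides it and has no root in `U`, or the resultant of
`P` and `Q` is a nonzero integer. -/
lemma countP_roots_le {K U : Set ℂ} {z : ℂ} {Q : ℤ[X]} {M ε : ℝ} {j : ℕ} (hM : 1 < M)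
    (hε0 : 0 ≤ ε) (hε : ε * M ^ j ≤ 1) (hK : ∀ w ∈ K, ‖aeval w Q‖ ≤ M)
    (hU : ∀ w ∈ U, ‖aeval w Q‖ ≤ ε) (hUz : ∀ w ∈ U, aeval w Q = 0 → w = z)
    (n : ℕ) : ∀ P : ℤ[X], P.natDegree = n → P.Monic → aeval z P ≠ 0 →
      (∀ w ∈ (P.map (Int.castRingHom ℂ)).roots, w ∈ K) →
      (P.map (Int.castRingHom ℂ)).roots.countP (· ∈ U) * j ≤ P.natDegree := by
  induction n using Nat.strong_induction_on with
  | _ n ih =>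
  intro P hn hP hPz hPK
  have hroot : ∀ w, w ∈ (P.map (Int.castRingHom ℂ)).roots ↔ aeval w P = 0 := fun w => by
    rw [mem_roots (hP.map _).ne_zero, IsRoot, eval_map, aeval_def]; rfl
  by_cases hP1 : P = 1
  · simp [hP1]
  by_cases hirr : Irreducible P
  · by_cases hcommon : ∃ w ∈ (P.map (Int.castRingHom ℂ)).roots, aeval w Q = 0
    · obtain ⟨w, hw, hwQ⟩ := hcommon
      rw [hroot] at hw
      have hint : IsIntegral ℤ w := ⟨P, hP, hw⟩
      have hassoc : Associated (minpoly ℤ w) P :=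
        (minpoly.irreducible hint).associated_of_dvd hirr (minpoly.isIntegrallyClosed_dvd hint hw)
      have hdvd : P ∣ Q := hassoc.symm.dvd.trans (minpoly.isIntegrallyClosed_dvd hint hwQ)
      have h0 : (P.map (Int.castRingHom ℂ)).roots.countP (· ∈ U) = 0 := by
        rw [Multiset.countP_eq_zero]
        intro x hx hxU
        rw [hroot] at hx
        have := hUz x hxU (aeval_eq_zero_of_dvd_aeval_eq_zero hdvd hx)
        exact hPz (this ▸ hx)
      simp [h0]
    · push Not at hcommon
      have h1 := one_le_prod_norm_aeval hP hcommon
      have h2 := prod_norm_le_pow hM (g := fun w => ‖aeval w Q‖) (fun _ => norm_nonneg _) hε0 hU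
        _ (fun w hw => hK w (hPK w hw))
      have hcard : (P.map (Int.castRingHom ℂ)).roots.card = P.natDegree := by
        rw [← (IsAlgClosed.splits _).natDegree_eq_card_roots, hP.natDegree_map]
      rw [hcard] at h2
      set c := (P.map (Int.castRingHom ℂ)).roots.countP (· ∈ U)
      have h3 : M ^ (c * j) ≤ M ^ P.natDegree := by
        calc M ^ (c * j) ≤ M ^ (c * j) * (ε ^ c * M ^ P.natDegree) :=
              le_mul_of_one_le_right (by positivity) (h1.trans h2)
          _ = (ε * M ^ j) ^ c * M ^ P.natDegree := by ring
          _ ≤ 1 * M ^ P.natDegree := by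
              gcongr
              exact pow_le_one₀ (by positivity) hε
          _ = _ := one_mul _
      exact (pow_le_pow_iff_right₀ hM).1 h3
  · rw [hP.irreducible_iff_natDegree] at hirr
    push Not at hirr
    obtain ⟨A, B, hA, hB, rfl, hA0, hB0⟩ := hirr hP1
    rw [hA.natDegree_mul hB] at hn ⊢
    rw [map_mul] at hPz
    have hne : A.map (Int.castRingHom ℂ) * B.map (Int.castRingHom ℂ) ≠ 0 :=
      ((hA.map _).mul (hB.map _)).ne_zero
    rw [Polynomial.map_mul, roots_mul hne] at hPK ⊢
    rw [Multiset.countP_add, add_mul]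
    exact add_le_add
      (ih _ (by omega) A rfl hA (left_ne_zero_of_mul hPz)
        fun w hw => hPK w (Multiset.mem_add.2 (Or.inl hw)))
      (ih _ (by omega) B rfl hB (right_ne_zero_of_mul hPz)
        fun w hw => hPK w (Multiset.mem_add.2 (Or.inr hw)))

/-- Around a point `z` that is a root of no member of `PolK K` there is a disc carrying a
proportion at most `1 / j` of the roots of each member of `PolK K`. -/
lemma exists_ball_countP_le {K : Set ℂ} (hK : IsCompact K) {z : ℂ}
    (hnot : ¬ ∃ P ∈ PolK K, aeval z P = 0) (j : ℕ) :
    ∃ r > 0, ∀ P ∈ PolK K, open Classical in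
      (P.map (Int.castRingHom ℂ)).roots.countP (· ∈ Metric.ball z r) * j ≤ P.natDegree := by
  obtain ⟨R₀, hR₀⟩ := hK.isBounded.exists_norm_le
  obtain ⟨Q, hQ0, M, ε, hM, hQz, hε, hQM⟩ := exists_small_poly z (max 1 (max R₀ ‖z‖))
    (le_max_left _ _) ((le_max_right _ _).trans (le_max_right _ _)) j
  have hfin : {w : ℂ | aeval w Q = 0}.Finite := by
    have := (Q.map (Int.castRingHom ℂ)).roots.toFinset.finite_toSet
    refine this.subset fun w hw => ?_
    have hQ' : Q.map (Int.castRingHom ℂ) ≠ 0 :=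
      (Polynomial.map_ne_zero_iff (RingHom.injective_int _)).2 hQ0
    rw [Finset.mem_coe, Multiset.mem_toFinset, mem_roots hQ', IsRoot, eval_map]
    exact hw
  have h1 : ∀ᶠ w in nhds z, ‖aeval w Q‖ < ε :=
    (Q.continuous_aeval.norm.tendsto z).eventually (gt_mem_nhds hQz)
  have h2 : ∀ᶠ w in nhds z, w ∉ {w : ℂ | aeval w Q = 0} \ {z} :=
    (hfin.subset sdiff_subset).isClosed.isOpen_compl.eventually_mem (by simp)
  obtain ⟨r, hr, hball⟩ := Metric.eventually_nhds_iff_ball.1 (h1.and h2)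
  refine ⟨r, hr, fun P hP => countP_roots_le (K := K) hM ((norm_nonneg _).trans hQz.le) hε
    (fun w hw => hQM w ((hR₀ w hw).trans ((le_max_left _ _).trans (le_max_right _ _))))
    (fun w hw => (hball w hw).1.le) (fun w hw hw0 => ?_) _ P rfl hP.1
    (fun h => hnot ⟨P, hP, h⟩) hP.2.2⟩
  by_contra hwz
  exact (hball w hw).2 ⟨hw0, hwz⟩

/-! ### Root measures and weak limits -/

open Classical in
lemma sum_diracFM_apply_s8 (s : Multiset ℂ) {U : Set ℂ} (hU : MeasurableSet U) :
    (((s.map diracFM).sum : FiniteMeasure ℂ) : Measure ℂ) U = (s.countP (· ∈ U) : ℕ) := by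
  induction s using Multiset.induction_on with
  | empty => simp
  | cons a s ih =>
    rw [Multiset.map_cons, Multiset.sum_cons, FiniteMeasure.toMeasure_add, Measure.add_apply, ih,
      Multiset.countP_cons]
    have : ((diracFM a : FiniteMeasure ℂ) : Measure ℂ) U = if a ∈ U then 1 else 0 := by
      change Measure.dirac a U = _
      rw [Measure.dirac_apply' _ hU, Set.indicator_apply]
      rfl
    rw [this]
    push_cast
    rw [add_comm]

open Classical in
lemma rootFM_apply_le {P : ℤ[X]} (hP : 0 < P.natDegree) {U : Set ℂ} (hU : MeasurableSet U) {j : ℕ}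
    (hj : 0 < j)
    (h : (P.map (Int.castRingHom ℂ)).roots.countP (· ∈ U) * j ≤ P.natDegree) :
    (rootFM P : Measure ℂ) U ≤ (((j : ℝ≥0)⁻¹ : ℝ≥0) : ℝ≥0∞) := by
  rw [rootFM, FiniteMeasure.toMeasure_smul, Measure.smul_apply, sum_diracFM_apply_s8 _ hU,
    ENNReal.smul_def, smul_eq_mul, ← ENNReal.coe_natCast, ← ENNReal.coe_mul, ENNReal.coe_le_coe]
  have hP' : (0 : ℝ≥0) < P.natDegree := by exact_mod_cast hP
  have hj' : (0 : ℝ≥0) < j := by exact_mod_cast hj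
  rw [inv_mul_le_iff₀ hP', ← div_eq_mul_inv, le_div_iff₀ hj']
  exact_mod_cast h

theorem stmt8 (K : Set ℂ) (hK : K.Nonempty) (hKcomp : IsCompact K)
    (μ : FiniteMeasure ℂ) (hμ : μ ∈ MK K) (z : ℂ) (hz : z ∈ K)
    (hnot : ¬ ∃ P ∈ PolK K, Polynomial.aeval z P = 0) :
    (μ : Measure ℂ) {z} = 0 := by
  have key : ∀ j : ℕ, 0 < j → (μ : Measure ℂ) {z} ≤ (((j : ℝ≥0)⁻¹ : ℝ≥0) : ℝ≥0∞) := by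
    intro j hj
    obtain ⟨r, hr, hcount⟩ := exists_ball_countP_le hKcomp hnot j
    -- `f` is a continuous bump with `f z = 1`, at most the indicator of the disc.
    let f := thickenedIndicator hr {z}
    have hclosed : IsClosed {ν : FiniteMeasure ℂ | ν.testAgainstNN f ≤ (j : ℝ≥0)⁻¹} :=
      isClosed_le (FiniteMeasure.continuous_testAgainstNN_eval f) continuous_const
    have hmem : μ ∈ {ν : FiniteMeasure ℂ | ν.testAgainstNN f ≤ (j : ℝ≥0)⁻¹} := by
      refine closure_minimal ?_ hclosed hμ
      rintro _ ⟨P, hP, rfl⟩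
      rw [mem_ofPred_eq, ← ENNReal.coe_le_coe, FiniteMeasure.testAgainstNN_coe_eq]
      refine le_trans ?_ (rootFM_apply_le hP.2.1 Metric.isOpen_ball.measurableSet hj (hcount P hP))
      rw [← lintegral_indicator_one Metric.isOpen_ball.measurableSet]
      refine lintegral_mono fun w => ?_
      by_cases hw : w ∈ Metric.ball z r
      · rw [indicator_of_mem hw]
        rw [Pi.one_apply, ← ENNReal.coe_one, ENNReal.coe_le_coe]
        exact thickenedIndicator_le_one hr {z} w
      · rw [indicator_of_notMem hw]
        have : f w = 0 := thickenedIndicator_zero hr {z} (by rwa [Metric.thickening_singleton])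
        simp [this]
    rw [mem_ofPred_eq, ← ENNReal.coe_le_coe, FiniteMeasure.testAgainstNN_coe_eq] at hmem
    refine le_trans ?_ hmem
    rw [← lintegral_indicator_one (measurableSet_singleton z)]
    refine lintegral_mono fun w => ?_
    by_cases hw : w ∈ ({z} : Set ℂ)
    · rw [indicator_of_mem hw, show f w = 1 from thickenedIndicator_one hr {z} hw]
      simp
    · rw [indicator_of_notMem hw]
      exact zero_le
  refine le_antisymm (ENNReal.le_of_forall_pos_le_add fun ε hε _ => ?_) zero_le
  obtain ⟨n, hn⟩ := exists_nat_one_div_lt hε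
  refine (key (n + 1) n.succ_pos).trans ?_
  rw [zero_add, ENNReal.coe_le_coe]
  simpa using hn.le
end

section
/- Let K be a nonempty compact subset of ℂ and let z, z' ∈ K be two roots of the same polynomial P ∈ Irr_K (i.e., z and z' are conjugate algebraic integers totally in K). Then μ({z}) = μ({z'}) for every μ ∈ M_K. -/
/-!
Let `Q ∈ Pol_K` and write `Q = P ^ m * R` with `P ∤ R`. As `P` is irreducible, the resultant of `P`
and `R` is a nonzero integer, so `∏ |P(w)| ≥ 1` over the roots `w` of `R`
(`exists_pow_mul_one_le_prod`). Since `|P| ≤ exp L` on the compact set `K`, at most a fraction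
`L / T` of the roots of `Q` are roots of `R` with `|P(w)| ≤ exp (-T)` (`sum_le_of_one_le_prod`).
On the other hand `P` has simple roots, so the factor `P ^ m` contributes the same mass
`m / deg Q` at each of them. Hence for narrow bump functions `f`, `f'` around the two roots
`z`, `z'` of `P`, the integrals `δ_Q(f)` and `δ_Q(f')` differ by at most `L / T`, uniformly in `Q`
(`abs_sub_le_of_isBump`). This estimate passes to weak limits `μ`; shrinking the bumps gives
`|μ{z} - μ{z'}| ≤ L / T` for every `T > 0`.
-/

open MeasureTheory Polynomial Set
open scoped NNReal ENNReal

lemma testAgainstNN_sum_diracFM (f : BoundedContinuousFunction ℂ ℝ≥0) (s : Multiset ℂ) :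
    ((s.map diracFM).sum).testAgainstNN f = (s.map f).sum := by
  induction s using Multiset.induction_on with
  | empty => simp
  | cons a s ih =>
    rw [Multiset.map_cons, Multiset.sum_cons, Multiset.map_cons, Multiset.sum_cons, ← ih]
    apply ENNReal.coe_injective
    simp only [FiniteMeasure.testAgainstNN_coe_eq, ENNReal.coe_add, FiniteMeasure.toMeasure_add,
      lintegral_add_measure]
    congr 1
    exact lintegral_dirac _ _

lemma testAgainstNN_rootFM (f : BoundedContinuousFunction ℂ ℝ≥0) (Q : ℤ[X]) :
    (((rootFM Q).testAgainstNN f : ℝ≥0) : ℝ) =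
      (Q.natDegree : ℝ)⁻¹ * ((Q.map (Int.castRingHom ℂ)).roots.map (fun w => (f w : ℝ))).sum := by
  rw [rootFM, FiniteMeasure.smul_testAgainstNN_apply, testAgainstNN_sum_diracFM, smul_eq_mul]
  push_cast
  congr 1
  rw [Multiset.map_map]
  rfl

/-- Splitting off the exact power of an irreducible `P` from `Q`. The cofactor `R` is coprime to
`P`, so `∏ P(w)` over the roots `w` of `R` is their resultant, a nonzero integer. -/
lemma exists_pow_mul_one_le_prod {P Q : ℤ[X]} (hPm : P.Monic) (hPd : 0 < P.natDegree)
    (hirr : Irreducible (P.map (Int.castRingHom ℚ))) (hQ : Q.Monic) :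
    ∃ (m : ℕ) (R : ℤ[X]), Q = P ^ m * R ∧ R.Monic ∧
      (∀ w ∈ (R.map (Int.castRingHom ℂ)).roots, aeval w P ≠ 0) ∧
      1 ≤ ((R.map (Int.castRingHom ℂ)).roots.map (fun w => ‖aeval w P‖)).prod := by
  have hfin : FiniteMultiplicity P Q :=
    finiteMultiplicity_of_degree_pos_of_monic (natDegree_pos_iff_degree_pos.1 hPd) hPm hQ.ne_zero
  obtain ⟨R, hR, hnd⟩ := hfin.exists_eq_pow_mul_and_not_dvd
  have hRm : R.Monic := (hPm.pow _).of_mul_monic_left (hR ▸ hQ)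
  have hcop : IsCoprime (P.map (Int.castRingHom ℚ)) (R.map (Int.castRingHom ℚ)) := by
    refine (hirr.coprime_iff_not_dvd).2 fun h => hnd ?_
    exact (map_dvd_map _ (RingHom.injective_int _) hPm).1 h
  have hne : ∀ w ∈ (R.map (Int.castRingHom ℂ)).roots, aeval w P ≠ 0 := by
    intro w hw h
    obtain ⟨a, b, hab⟩ := hcop
    have hw' : aeval w R = 0 := by
      have := (mem_roots'.1 hw).2
      rwa [IsRoot, eval_map, ← algebraMap_int_eq, ← aeval_def] at this
    have h1 := congrArg (aeval w) hab
    rw [map_add, map_mul, map_mul, ← algebraMap_int_eq, aeval_map_algebraMap,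
      aeval_map_algebraMap, h, hw'] at h1
    simp at h1
  refine ⟨_, R, hR, hRm, hne, ?_⟩
  have hres := resultant_eq_prod_eval (R.map (Int.castRingHom ℂ)) (P.map (Int.castRingHom ℂ))
    _ le_rfl (IsAlgClosed.splits _)
  rw [resultant_map_map, (hRm.map _).leadingCoeff, one_pow, one_mul] at hres
  have hprod : ((R.map (Int.castRingHom ℂ)).roots.map (fun w => ‖aeval w P‖)).prod =
      ‖((R.map (Int.castRingHom ℂ)).roots.map (P.map (Int.castRingHom ℂ)).eval).prod‖ := by
    change _ = (normHom : ℂ →*₀ ℝ) _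
    rw [map_multiset_prod, Multiset.map_map]
    refine congrArg _ (Multiset.map_congr rfl fun w _ => ?_)
    simp [aeval_def, eval_map]
  have hpos : 0 < ((R.map (Int.castRingHom ℂ)).roots.map (fun w => ‖aeval w P‖)).prod := by
    refine Multiset.prod_pos ?_
    intro x hx
    obtain ⟨w, hw, rfl⟩ := Multiset.mem_map.1 hx
    exact norm_pos_iff.2 (hne w hw)
  rw [hprod, ← hres] at hpos ⊢
  rw [eq_intCast, Complex.norm_intCast] at hpos ⊢
  have h0 := Int.cast_ne_zero.1 (abs_pos.1 hpos)
  exact_mod_cast Int.one_le_abs h0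

/-- If `∏ g(w) ≥ 1` with every `log g(w) ≤ L`, then few points have `g(w) ≤ exp (-T)`: a function
`f ≤ 1` supported there has sum at most `(card s) L / T`. -/
lemma sum_le_of_one_le_prod (s : Multiset ℂ) (g f : ℂ → ℝ) {L T : ℝ} (hL : 0 ≤ L) (hT : 0 < T)
    (hg : ∀ w ∈ s, 0 < g w) (hgL : ∀ w ∈ s, g w ≤ Real.exp L) (hf1 : ∀ w, f w ≤ 1)
    (hfg : ∀ w, f w ≠ 0 → g w ≤ Real.exp (-T)) (hprod : 1 ≤ (s.map g).prod) :
    (s.map f).sum ≤ Multiset.card s * L / T := by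
  have hlog : 0 ≤ (s.map (fun w => Real.log (g w))).sum := by
    have h := Real.log_nonneg hprod
    rw [Real.log_multiset_prod, Multiset.map_map] at h
    · exact h
    · intro x hx
      obtain ⟨w, hw, rfl⟩ := Multiset.mem_map.1 hx
      exact (hg w hw).ne'
  have hle : (s.map (fun w => Real.log (g w))).sum ≤ (s.map (fun w => L - T * f w)).sum := by
    refine Multiset.sum_map_le_sum_map _ _ fun w hw => ?_
    by_cases h : f w = 0
    · rw [h, mul_zero, sub_zero]
      exact (Real.log_le_iff_le_exp (hg w hw)).2 (hgL w hw)
    · have h1 := (Real.log_le_iff_le_exp (hg w hw)).2 (hfg w h)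
      nlinarith [hf1 w]
  rw [Multiset.sum_map_sub, Multiset.sum_map_mul_left] at hle
  simp only [Multiset.map_const', Multiset.sum_replicate, nsmul_eq_mul] at hle
  rw [le_div_iff₀ hT]
  linarith

lemma sum_roots_eq_one {P : ℤ[X]} (hPm : P.Monic) (hirr : Irreducible (P.map (Int.castRingHom ℚ)))
    {z : ℂ} (hz : aeval z P = 0) (f : ℂ → ℝ) (hfz : f z = 1)
    (hf0 : ∀ w ∈ (P.map (Int.castRingHom ℂ)).roots, w ≠ z → f w = 0) :
    ((P.map (Int.castRingHom ℂ)).roots.map f).sum = 1 := by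
  have hsep : (P.map (Int.castRingHom ℂ)).Separable := by
    have h := hirr.separable.map (f := algebraMap ℚ ℂ)
    rwa [Polynomial.map_map, RingHom.ext_int ((algebraMap ℚ ℂ).comp (Int.castRingHom ℚ))
      (Int.castRingHom ℂ)] at h
  have hnd := nodup_roots hsep
  have hmem : z ∈ (P.map (Int.castRingHom ℂ)).roots := by
    rw [mem_roots (hPm.map _).ne_zero, IsRoot, eval_map, ← algebraMap_int_eq, ← aeval_def, hz]
  have hsum : ((P.map (Int.castRingHom ℂ)).roots.map f).sum =
      ∑ w ∈ (P.map (Int.castRingHom ℂ)).roots.toFinset, f w := by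
    rw [Finset.sum, Multiset.toFinset_val, hnd.dedup]
  rw [hsum, Finset.sum_eq_single z, hfz]
  · intro w hw hne
    exact hf0 w (Multiset.mem_toFinset.1 hw) hne
  · intro h
    exact absurd (Multiset.mem_toFinset.2 hmem) h

/-- `f` is a bump around the root `z` of `P`: it takes values at most `1`, equals `1` at `z`,
vanishes at the other roots of `P`, and is supported where `|P| ≤ exp (-T)`. -/
structure IsBump (P : ℤ[X]) (T : ℝ) (z : ℂ) (f : BoundedContinuousFunction ℂ ℝ≥0) : Prop where
  le_one : ∀ w, f w ≤ 1
  eq_one : f z = 1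
  eq_zero : ∀ w ∈ (P.map (Int.castRingHom ℂ)).roots, w ≠ z → f w = 0
  small : ∀ w, f w ≠ 0 → ‖aeval w P‖ ≤ Real.exp (-T)

/-- The mass that `δ_Q` gives to a bump around a root of `P` is, up to `L / T`, the multiplicity
of `P` in `Q` divided by `deg Q`; hence it depends little on the chosen root. -/
lemma abs_sub_le_of_isBump {K : Set ℂ} {P Q : ℤ[X]} (hPm : P.Monic) (hPd : 0 < P.natDegree)
    (hirr : Irreducible (P.map (Int.castRingHom ℚ))) (hQ : Q ∈ PolK K) {L T : ℝ} (hL : 0 ≤ L)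
    (hT : 0 < T) (hKL : ∀ w ∈ K, ‖aeval w P‖ ≤ Real.exp L) {z z' : ℂ} (hz : aeval z P = 0)
    (hz' : aeval z' P = 0) {f f' : BoundedContinuousFunction ℂ ℝ≥0} (hf : IsBump P T z f)
    (hf' : IsBump P T z' f') :
    |(((rootFM Q).testAgainstNN f : ℝ≥0) : ℝ) - (((rootFM Q).testAgainstNN f' : ℝ≥0) : ℝ)|
      ≤ L / T := by
  obtain ⟨hQm, hQd, hQK⟩ := hQ
  obtain ⟨m, R, hR, hRm, hne, hprod⟩ := exists_pow_mul_one_le_prod hPm hPd hirr hQm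
  have hroots : (Q.map (Int.castRingHom ℂ)).roots =
      m • (P.map (Int.castRingHom ℂ)).roots + (R.map (Int.castRingHom ℂ)).roots := by
    rw [hR, Polynomial.map_mul, Polynomial.map_pow, roots_mul, roots_pow]
    exact (((hPm.map _).pow _).mul (hRm.map _)).ne_zero
  have hcard : (Multiset.card (R.map (Int.castRingHom ℂ)).roots : ℝ) ≤ Q.natDegree := by
    have h1 := card_roots' (R.map (Int.castRingHom ℂ))
    rw [hRm.natDegree_map] at h1
    have h2 : Q.natDegree = _ := hR ▸ (hPm.pow m).natDegree_mul hRm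
    exact_mod_cast (by omega : Multiset.card (R.map (Int.castRingHom ℂ)).roots ≤ Q.natDegree)
  have key : ∀ (y : ℂ) (g : BoundedContinuousFunction ℂ ℝ≥0), aeval y P = 0 → IsBump P T y g →
      (m : ℝ) ≤ ((Q.map (Int.castRingHom ℂ)).roots.map (fun w => (g w : ℝ))).sum ∧
      ((Q.map (Int.castRingHom ℂ)).roots.map (fun w => (g w : ℝ))).sum
        ≤ m + Q.natDegree * (L / T) := by
    intro y g hy hg
    have hone := sum_roots_eq_one hPm hirr hy (fun w => (g w : ℝ)) (by simp [hg.eq_one])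
      (fun w hw hwy => by simp [hg.eq_zero w hw hwy])
    have hub := sum_le_of_one_le_prod (R.map (Int.castRingHom ℂ)).roots (fun w => ‖aeval w P‖)
      (fun w => (g w : ℝ)) hL hT (fun w hw => norm_pos_iff.2 (hne w hw))
      (fun w hw => hKL w (hQK w (by rw [hroots]; exact Multiset.mem_add.2 (Or.inr hw))))
      (fun w => by exact_mod_cast hg.le_one w)
      (fun w hw => hg.small w (by exact_mod_cast hw)) hprod
    have hlb : 0 ≤ ((R.map (Int.castRingHom ℂ)).roots.map (fun w => (g w : ℝ))).sum := by
      refine Multiset.sum_nonneg fun x hx => ?_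
      obtain ⟨w, -, rfl⟩ := Multiset.mem_map.1 hx
      exact NNReal.coe_nonneg _
    have hLT : 0 ≤ L / T := by positivity
    have := mul_le_mul_of_nonneg_right hcard hLT
    rw [hroots, Multiset.map_add, Multiset.sum_add, Multiset.map_nsmul, Multiset.sum_nsmul, hone,
      nsmul_eq_mul, mul_one]
    rw [mul_div_assoc] at hub
    constructor <;> linarith
  obtain ⟨h1, h2⟩ := key z f hz hf
  obtain ⟨h3, h4⟩ := key z' f' hz' hf'
  have hd : (0 : ℝ) < Q.natDegree := by exact_mod_cast hQd
  rw [testAgainstNN_rootFM, testAgainstNN_rootFM, ← mul_sub, abs_mul, abs_of_pos (inv_pos.2 hd),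
    inv_mul_le_iff₀ hd, abs_le]
  constructor <;> linarith

lemma eventually_isBump {P : ℤ[X]} (T : ℝ) {z : ℂ} (hz : aeval z P = 0) {δ : ℕ → ℝ}
    (hδ : ∀ n, 0 < δ n) (hlim : Filter.Tendsto δ Filter.atTop (nhds 0)) :
    ∀ᶠ n in Filter.atTop, IsBump P T z (thickenedIndicator (hδ n) {z}) := by
  have hcont : Continuous fun w : ℂ => ‖aeval w P‖ := by fun_prop
  have hsmall : ∀ᶠ w in nhds z, ‖aeval w P‖ < Real.exp (-T) :=
    hcont.continuousAt.eventually_lt_const (by simpa [hz] using Real.exp_pos _)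
  have hsep : ∀ᶠ w in nhds z, w ∈ (P.map (Int.castRingHom ℂ)).roots → w = z := by
    have hfin : (((P.map (Int.castRingHom ℂ)).roots.toFinset.erase z : Finset ℂ) : Set ℂ).Finite :=
      Finset.finite_toSet _
    filter_upwards [hfin.isClosed.isOpen_compl.mem_nhds (by simp)] with w hw hwr
    by_contra hne
    exact hw (by simpa [hne] using (mem_roots'.1 hwr))
  obtain ⟨r, hr, hball⟩ := Metric.eventually_nhds_iff.1 (hsmall.and hsep)
  filter_upwards [hlim.eventually_lt_const hr] with n hn
  have hsupp : ∀ w, thickenedIndicator (hδ n) {z} w ≠ 0 → dist w z < r := by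
    intro w hw
    by_contra hd
    refine hw (thickenedIndicator_zero _ _ ?_)
    rw [Metric.thickening_singleton, Metric.mem_ball]
    linarith
  refine ⟨thickenedIndicator_le_one _ _, thickenedIndicator_one _ _ rfl, ?_, ?_⟩
  · intro w hw hne
    by_contra h
    exact hne ((hball (hsupp w h)).2 hw)
  · intro w hw
    exact (hball (hsupp w hw)).1.le

theorem stmt9 (K : Set ℂ) (hK : K.Nonempty) (hKcomp : IsCompact K)
    (z z' : ℂ) (hz : z ∈ K) (hz' : z' ∈ K)
    (P : Polynomial ℤ) (hP : P ∈ IrrK K)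
    (hroot : Polynomial.aeval z P = 0) (hroot' : Polynomial.aeval z' P = 0) :
    ∀ μ ∈ MK K, (μ : Measure ℂ) {z} = (μ : Measure ℂ) {z'} := by
  
  obtain ⟨⟨hPm, hPd, -⟩, hirr⟩ := hP
  intro μ hμ
  have hcont : Continuous fun w : ℂ => ‖aeval w P‖ := by fun_prop
  -- a common upper bound `exp L` for `|P|` on `K`
  obtain ⟨M, hM⟩ := hKcomp.bddAbove_image hcont.continuousOn
  have hKL : ∀ w ∈ K, ‖aeval w P‖ ≤ Real.exp |M| := fun w hw =>
    (hM (mem_image_of_mem _ hw)).trans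
      ((le_abs_self M).trans (by linarith [Real.add_one_le_exp |M|]))
  have hδ : ∀ n : ℕ, (0 : ℝ) < 1 / ((n : ℝ) + 1) := fun n => by positivity
  have hlim := tendsto_one_div_add_atTop_nhds_zero_nat (𝕜 := ℝ)
  have hconv : ∀ y : ℂ, Filter.Tendsto
      (fun n => ((μ.testAgainstNN (thickenedIndicator (hδ n) {y}) : ℝ≥0) : ℝ)) Filter.atTop
      (nhds ((μ : Measure ℂ) {y}).toReal) := by
    intro y
    exact (ENNReal.tendsto_toReal (measure_ne_top _ _)).comp
      (tendsto_lintegral_thickenedIndicator_of_isClosed (μ : Measure ℂ) isClosed_singleton hδ hlim)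
  have hbound : ∀ T : ℝ, 0 < T →
      |((μ : Measure ℂ) {z}).toReal - ((μ : Measure ℂ) {z'}).toReal| ≤ |M| / T := by
    intro T hT
    refine le_of_tendsto ((hconv z).sub (hconv z')).abs ?_
    filter_upwards [eventually_isBump T hroot hδ hlim, eventually_isBump T hroot' hδ hlim]
      with n hn hn'
    -- the inequality is closed in the measure, so it passes from root measures to `MK K`
    refine closure_minimal (s := rootFM '' PolK K) (t := {ν : FiniteMeasure ℂ |
      |((ν.testAgainstNN (thickenedIndicator (hδ n) {z}) : ℝ≥0) : ℝ) -
        ((ν.testAgainstNN (thickenedIndicator (hδ n) {z'}) : ℝ≥0) : ℝ)| ≤ |M| / T}) ?_ ?_ hμ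
    · rintro _ ⟨Q, hQ, rfl⟩
      exact abs_sub_le_of_isBump hPm hPd hirr hQ (abs_nonneg M) hT hKL hroot hroot' hn hn'
    · refine isClosed_le (Continuous.abs (Continuous.sub ?_ ?_)) continuous_const
      · exact NNReal.continuous_coe.comp (FiniteMeasure.continuous_testAgainstNN_eval _)
      · exact NNReal.continuous_coe.comp (FiniteMeasure.continuous_testAgainstNN_eval _)
  have hzero : |((μ : Measure ℂ) {z}).toReal - ((μ : Measure ℂ) {z'}).toReal| ≤ 0 :=
    ge_of_tendsto (tendsto_const_nhds.div_atTop Filter.tendsto_id)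
      ((Filter.eventually_gt_atTop 0).mono hbound)
  have heq := sub_eq_zero.1 (abs_eq_zero.1 (le_antisymm hzero (abs_nonneg _)))
  exact (ENNReal.toReal_eq_toReal_iff' (measure_ne_top _ _) (measure_ne_top _ _)).1 heq
end

section
/- Let g ≥ 0 be an integer and let a_0 < b_0 < a_1 < ⋯ < a_g < b_g be real numbers; set D(X) = ∏_{j=0}^{g} (X − a_j)(X − b_j). Then there exists a unique monic polynomial R ∈ ℝ[X] of degree g such that ∫_{b_{j−1}}^{a_j} R(x)/√(D(x)) dx = 0 for all j = 1, …, g (note D(x) > 0 on each open gap (b_{j−1}, a_j)); moreover this R has exactly one root, which is simple, in the interior of each gap interval (b_{j−1}, a_j) for j = 1, …, g, and no other complex roots. -/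
open MeasureTheory Polynomial Set
open scoped NNReal ENNReal

/-!
The map sending a polynomial `P` of degree `< g` to the vector of its `g` gap integrals
`∫ P / √D` is linear between spaces of dimension `g`. If a gap integral of `P` vanishes, then `P`
has a root inside that gap, because `1 / √D` is positive there (`exists_root_of_integral_eq_zero`).
So a polynomial of degree `< g` in the kernel has `g` distinct roots and is zero: the map is
injective, hence bijective. Correcting `X ^ g` by the unique preimage of minus its vector of
integrals yields existence and uniqueness of `R`, and the same root argument gives `g` distinct
roots of `R`, one in each gap, which account for its whole degree.

The only analytic input is the integrability of `1 / √D` on the gaps (`intervalIntegrable_gap`):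
on a gap `(l, r)` one has `D = (x - l) (r - x) E` with `E` positive on `[l, r]`
(`exists_gap_factor`), and `1 / √((x - l) (r - x))` is dominated by a multiple of
`(x - l) ^ (-1/2) + (r - x) ^ (-1/2)`.
-/

/-- At both endpoints of a gap `D` has simple zeros: the cofactor is positive on the closed gap. -/
lemma exists_gap_factor (g : ℕ) (a b : Fin (g + 1) → ℝ)
    (h1 : ∀ j, a j < b j) (h2 : ∀ j k : Fin (g + 1), j < k → b j < a k) (j : Fin g) :
    ∃ E : Polynomial ℝ, (∀ x ∈ Icc (b j.castSucc) (a j.succ), 0 < E.eval x) ∧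
      ∀ x, (∏ j : Fin (g + 1), (X - C (a j)) * (X - C (b j)) : Polynomial ℝ).eval x =
        (x - b j.castSucc) * (a j.succ - x) * E.eval x := by
  -- After removing `X - a (j+1)` and `X - b j`, the other factors are paired so that the `j`-th
  -- pair is `(X - a j) (X - b (j+1))`, the only one that is negative on the gap.
  refine ⟨-∏ i : Fin g, (X - C (a (j.succ.succAbove i))) * (X - C (b (j.castSucc.succAbove i))),
    ?_, ?_⟩
  · intro x hx
    rw [← Finset.mul_prod_erase Finset.univ _ (Finset.mem_univ j)]
    simp only [eval_neg, eval_mul, eval_sub, eval_X, eval_C, eval_prod]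
    have hj1 : j.succ.succAbove j = j.castSucc := by simp
    have hj2 : j.castSucc.succAbove j = j.succ := by simp
    rw [hj1, hj2, ← neg_mul]
    refine mul_pos ?_ (Finset.prod_pos ?_)
    · have := h1 j.castSucc
      have := h1 j.succ
      rw [← mul_neg]
      exact mul_pos (by linarith [hx.1]) (by linarith [hx.2])
    · intro i hi
      rcases lt_or_gt_of_ne (Finset.ne_of_mem_erase hi) with h | h
      · have e1 : j.succ.succAbove i = i.castSucc :=
          Fin.succAbove_of_castSucc_lt _ _ (by
            simp only [Fin.lt_def, Fin.val_castSucc, Fin.val_succ] at *; omega)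
        have e2 : j.castSucc.succAbove i = i.castSucc :=
          Fin.succAbove_of_castSucc_lt _ _ (by simpa using h)
        rw [e1, e2]
        have := h1 i.castSucc
        have := h2 i.castSucc j.castSucc (by simpa using h)
        have := h1 j.castSucc
        exact mul_pos (by linarith [hx.1]) (by linarith [hx.1])
      · have e1 : j.succ.succAbove i = i.succ :=
          Fin.succAbove_of_le_castSucc _ _ (by
            simp only [Fin.lt_def, Fin.le_def, Fin.val_castSucc, Fin.val_succ] at *; omega)
        have e2 : j.castSucc.succAbove i = i.succ :=
          Fin.succAbove_of_le_castSucc _ _ (by simpa using h.le)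
        rw [e1, e2]
        have := h1 i.succ
        have := h2 j.succ i.succ (by simpa using h)
        have := h1 j.succ
        exact mul_pos_of_neg_of_neg (by linarith [hx.2]) (by linarith [hx.2])
  · intro x
    rw [Finset.prod_mul_distrib, Fin.prod_univ_succAbove _ j.succ,
      Fin.prod_univ_succAbove (fun j => X - C (b j)) j.castSucc, Finset.prod_mul_distrib]
    simp only [eval_neg, eval_mul, eval_sub, eval_X, eval_C]
    ring

/-- A polynomial of the form `(x - l) (r - x) E` with `E` positive on `[l, r]` has an integrable
inverse square root on `[l, r]`. -/
lemma intervalIntegrable_gap {l r : ℝ} (hlr : l < r) (D E : Polynomial ℝ)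
    (hE : ∀ x ∈ Icc l r, 0 < E.eval x)
    (hD : ∀ x, D.eval x = (x - l) * (r - x) * E.eval x) :
    IntervalIntegrable (fun x => 1 / √(D.eval x)) volume l r := by
  have hint : IntervalIntegrable (fun x : ℝ => x ^ (-(1 / 2) : ℝ)) volume 0 (r - l) :=
    intervalIntegral.intervalIntegrable_rpow' (by norm_num)
  have hu : IntervalIntegrable (fun x => (x - l) ^ (-(1 / 2) : ℝ)) volume l r := by
    simpa using hint.comp_sub_right l
  have hv : IntervalIntegrable (fun x => (r - x) ^ (-(1 / 2) : ℝ)) volume l r := by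
    simpa using (hint.comp_sub_left r).symm
  obtain ⟨z, hz, hmin⟩ := isCompact_Icc.exists_isMinOn (nonempty_Icc.2 hlr.le)
    (E.continuous.continuousOn (s := Icc l r))
  set c := E.eval z with hc
  have hc0 : 0 < c := hE z hz
  refine IntervalIntegrable.mono_fun' ((hu.add hv).const_mul (1 / (√c * √(r - l)))) ?_ ?_
  · exact (measurable_const.div
      (D.continuous.measurable.sqrt)).aestronglyMeasurable
  · rw [Filter.EventuallyLE, uIoc_of_le hlr.le, ← restrict_Ioo_eq_restrict_Ioc]
    refine (ae_restrict_iff' measurableSet_Ioo).2 (Filter.Eventually.of_forall fun x hx => ?_)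
    have hu0 : 0 < x - l := by linarith [hx.1]
    have hv0 : 0 < r - x := by linarith [hx.2]
    have hcx : c ≤ E.eval x := hmin ⟨hx.1.le, hx.2.le⟩
    rw [Real.norm_of_nonneg (by positivity)]
    simp only [Real.rpow_neg hu0.le, Real.rpow_neg hv0.le, ← Real.sqrt_eq_rpow]
    have su := Real.sqrt_pos.2 hu0
    have sv := Real.sqrt_pos.2 hv0
    have sc := Real.sqrt_pos.2 hc0
    have sL := Real.sqrt_pos.2 (sub_pos.2 hlr)
    have hsub : √(r - l) ≤ √(x - l) + √(r - x) := by
      rw [Real.sqrt_le_iff]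
      refine ⟨by positivity, ?_⟩
      nlinarith [Real.sq_sqrt hu0.le, Real.sq_sqrt hv0.le, mul_pos su sv]
    have hDx : √(x - l) * √(r - x) * √c ≤ √(D.eval x) := by
      rw [hD, Real.sqrt_mul (by positivity), Real.sqrt_mul hu0.le]
      gcongr
    calc 1 / √(D.eval x) ≤ 1 / (√(x - l) * √(r - x) * √c) := by gcongr
      _ = 1 / (√c * √(r - l)) * (√(r - l) / (√(x - l) * √(r - x))) := by field_simp
      _ ≤ 1 / (√c * √(r - l)) * ((√(x - l) + √(r - x)) / (√(x - l) * √(r - x))) := by gcongr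
      _ = 1 / (√c * √(r - l)) * ((√(x - l))⁻¹ + (√(r - x))⁻¹) := by
        field_simp
        ring

lemma exists_root_of_integral_eq_zero {l r : ℝ} (hlr : l < r) (w : ℝ → ℝ)
    (hw : ∀ x ∈ Ioo l r, 0 < w x) (hint : IntervalIntegrable w volume l r) (P : Polynomial ℝ)
    (h0 : ∫ x in l..r, P.eval x * w x = 0) : ∃ x ∈ Ioo l r, P.eval x = 0 := by
  have key : ∀ Q : Polynomial ℝ, (∀ x ∈ Ioo l r, 0 < Q.eval x) →
      0 < ∫ x in l..r, Q.eval x * w x := fun Q hQ =>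
    intervalIntegral.intervalIntegral_pos_of_pos_on
      (hint.continuousOn_mul Q.continuous.continuousOn)
      (fun x hx => mul_pos (hQ x hx) (hw x hx)) hlr
  by_contra! hne
  by_cases hs : ∃ y ∈ Ioo l r, 0 < P.eval y
  · obtain ⟨y, hy, hPy⟩ := hs
    refine (key P fun x hx => ?_).ne' h0
    by_contra! hx0
    obtain ⟨t, ht, ht0⟩ := isPreconnected_Ioo.intermediate_value hx hy
      P.continuous.continuousOn ⟨hx0, hPy.le⟩
    exact hne t ht ht0
  · push Not at hs
    have := key (-P) fun x hx => by
      simpa using lt_of_le_of_ne (hs x hx) (hne x hx)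
    simp [h0] at this

theorem stmt14 (g : ℕ) (a b : Fin (g + 1) → ℝ)
    (h1 : ∀ j, a j < b j) (h2 : ∀ j k : Fin (g + 1), j < k → b j < a k)
    (D : Polynomial ℝ)
    (hD : D = ∏ j : Fin (g + 1), (X - C (a j)) * (X - C (b j))) :
    ∃ R : Polynomial ℝ,
      (R.Monic ∧ R.natDegree = g ∧
        ∀ j : Fin g,
          ∫ x in (b j.castSucc)..(a j.succ), R.eval x / Real.sqrt (D.eval x) = 0) ∧
      (∀ R' : Polynomial ℝ,
        (R'.Monic ∧ R'.natDegree = g ∧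
          ∀ j : Fin g,
            ∫ x in (b j.castSucc)..(a j.succ), R'.eval x / Real.sqrt (D.eval x) = 0) →
        R' = R) ∧
      ∃ x : Fin g → ℝ, (∀ j, x j ∈ Set.Ioo (b j.castSucc) (a j.succ)) ∧
        R = ∏ j : Fin g, (X - C (x j)) := by
  have hlr : ∀ j : Fin g, b j.castSucc < a j.succ := fun j => h2 _ _ (by simp)
  set w : ℝ → ℝ := fun x => 1 / √(D.eval x) with hwdef
  have hw : ∀ j : Fin g, (∀ x ∈ Ioo (b j.castSucc) (a j.succ), 0 < w x) ∧
      IntervalIntegrable w volume (b j.castSucc) (a j.succ) := by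
    intro j
    obtain ⟨E, hE, hDE⟩ := exists_gap_factor g a b h1 h2 j
    rw [← hD] at hDE
    refine ⟨fun x hx => ?_, intervalIntegrable_gap (hlr j) D E hE hDE⟩
    have hpos : 0 < D.eval x := by
      rw [hDE]
      exact mul_pos (mul_pos (by linarith [hx.1]) (by linarith [hx.2])) (hE x ⟨hx.1.le, hx.2.le⟩)
    exact one_div_pos.2 (Real.sqrt_pos.2 hpos)
  have hdiv : ∀ (P : Polynomial ℝ) (x : ℝ), P.eval x / √(D.eval x) = P.eval x * w x :=
    fun P x => by simp [hwdef, div_eq_mul_inv]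
  simp only [hdiv]
  have hPint : ∀ (P : Polynomial ℝ) (j : Fin g), IntervalIntegrable (fun x => P.eval x * w x)
      volume (b j.castSucc) (a j.succ) := fun P j =>
    (hw j).2.continuousOn_mul P.continuous.continuousOn
  let T : Polynomial ℝ →ₗ[ℝ] (Fin g → ℝ) :=
    { toFun := fun P j => ∫ x in (b j.castSucc)..(a j.succ), P.eval x * w x
      map_add' := fun P Q => by
        ext j
        simp only [eval_add, add_mul, Pi.add_apply]
        exact intervalIntegral.integral_add (hPint P j) (hPint Q j)
      map_smul' := fun t P => by
        ext j
        simp [mul_assoc] }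
  have hroots : ∀ P : Polynomial ℝ, T P = 0 → ∃ x : Fin g → ℝ,
      (∀ j, x j ∈ Ioo (b j.castSucc) (a j.succ)) ∧ Function.Injective x ∧
        ∀ j, P.eval (x j) = 0 := by
    intro P hP
    have := fun j => exists_root_of_integral_eq_zero (hlr j) w (hw j).1 (hw j).2 P
      (congrFun hP j)
    choose x hx hx0 using this
    refine ⟨x, hx, ?_, hx0⟩
    refine StrictMono.injective fun i j hij => ?_
    have hle : a i.succ ≤ b j.castSucc := by
      rcases eq_or_lt_of_le (show i.succ ≤ j.castSucc from by
        simp only [Fin.lt_def, Fin.le_def, Fin.val_castSucc, Fin.val_succ] at *; omega) with h | h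
      · rw [h]; exact (h1 _).le
      · exact ((h1 _).trans (h2 _ _ h)).le.trans (h1 _).le
    exact (hx i).2.trans_le (hle.trans (hx j).1.le)
  have hker : ∀ P : Polynomial ℝ, P.degree < g → T P = 0 → P = 0 := by
    intro P hdeg hP
    obtain ⟨x, -, hinj, hx0⟩ := hroots P hP
    refine eq_zero_of_degree_lt_of_eval_index_eq_zero Finset.univ (v := x) hinj.injOn
      (by simpa using hdeg) fun j _ => hx0 j
  let S : (Fin g → ℝ) →ₗ[ℝ] (Fin g → ℝ) :=
    (T ∘ₗ (degreeLT ℝ g).subtype) ∘ₗ (degreeLTEquiv ℝ g).symm.toLinearMap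
  have hSinj : Function.Injective S := by
    rw [injective_iff_map_eq_zero]
    intro v hv
    have := hker _ (mem_degreeLT.1 ((degreeLTEquiv ℝ g).symm v).2) hv
    simpa using this
  obtain ⟨v, hv⟩ := LinearMap.injective_iff_surjective.1 hSinj (-T (X ^ g))
  set P : Polynomial ℝ := ((degreeLTEquiv ℝ g).symm v : Polynomial ℝ) with hPdef
  have hPdeg : P.degree < g := mem_degreeLT.1 ((degreeLTEquiv ℝ g).symm v).2
  have hTP : T P = -T (X ^ g) := hv
  have hmonic : (X ^ g + P).Monic := monic_X_pow_add hPdeg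
  have hnat : (X ^ g + P).natDegree = g := by
    rw [natDegree_eq_of_degree_eq (degree_add_eq_left_of_degree_lt (by simpa using hPdeg))]
    simp
  have hTR : T (X ^ g + P) = 0 := by rw [map_add, hTP, add_neg_cancel]
  -- Two monic polynomials of degree `g` differ by a polynomial of degree `< g`.
  have hsub : ∀ Q Q' : Polynomial ℝ, Q.Monic → Q.natDegree = g → Q'.Monic → Q'.natDegree = g →
      (Q' - Q).degree < g := by
    intro Q Q' hQ hQg hQ' hQg'
    have hdQ : Q.degree = g := by rw [degree_eq_natDegree hQ.ne_zero, hQg]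
    have hdQ' : Q'.degree = g := by rw [degree_eq_natDegree hQ'.ne_zero, hQg']
    rw [← hdQ']
    exact degree_sub_lt_left (hdQ'.trans hdQ.symm) hQ'.ne_zero (by rw [hQ, hQ'])
  refine ⟨X ^ g + P, ⟨hmonic, hnat, fun j => congrFun hTR j⟩, ?_, ?_⟩
  · rintro R' ⟨hm, hn, hR'⟩
    have hTR' : T R' = 0 := funext hR'
    exact sub_eq_zero.1 (hker _ (hsub _ _ hmonic hnat hm hn) (by rw [map_sub, hTR', hTR, sub_zero]))
  · obtain ⟨x, hx, hinj, hx0⟩ := hroots _ hTR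
    refine ⟨x, hx, sub_eq_zero.1 ?_⟩
    have hpm : (∏ j : Fin g, (X - C (x j))).Monic := monic_prod_X_sub_C x Finset.univ
    have hpn : (∏ j : Fin g, (X - C (x j))).natDegree = g := by simp
    refine eq_zero_of_degree_lt_of_eval_index_eq_zero Finset.univ (v := x) hinj.injOn
      (by simpa using hsub _ _ hpm hpn hmonic hnat) fun j _ => ?_
    rw [eval_sub, hx0, eval_prod, Finset.prod_eq_zero (Finset.mem_univ j) (by simp), sub_zero]
end

section
/- Let g ≥ 0 be an integer and let a_0 < b_0 < a_1 < ⋯ < a_g < b_g be real numbers; set D(X) = ∏_{j=0}^{g}(X−a_j)(X−b_j), and let R ∈ ℝ[X] be the unique monic polynomial of degree g satisfying ∫_{b_{j−1}}^{a_j} R(x)/√(D(x)) dx = 0 for j = 1, …, g. Then there exist signs ε_j ∈ {−1, +1} (j = 0, …, g) such that Σ_{j=0}^{g} ε_j ∫_{a_j}^{b_j} R(x)/√(−D(x)) dx = π. (Note −D(x) ≥ 0 on each band [a_j, b_j], so these integrals are real; they are the absolute values of the imaginary half-periods of the canonical third-kind differential R(x)dx/y on the hyperelliptic curve y² = D(x).)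 -/
/-!
The alternating sum of the band integrals is half the modulus of the period of `R(z) dz / √D(z)`
around all the bands together, and that period is given by the residue at infinity, which is fixed
by `R` being monic of degree `g`.

Let `e` enumerate the `2g + 2` endpoints and let `F(z) = R(z) / ∏ √(z - e i)`, with principal
square roots (`thirdKind`). On the upper half-plane `F` is holomorphic and `z F(z) → 1` at infinity
(`tendsto_asymp`). Hence `H(z) = F(z) - 1 / (z + i)` is `o(1/|z|)`, and Cauchy's theorem on the
rectangle `[-T, T] × [t, T]` shows that the integral of `H` over the segment at height `t` is small
for large `T`, uniformly in `t ∈ (0, 1)` (`norm_integral_line_le`). The singularities of `F` on the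
real line are of inverse square root type, so dominated convergence lets `t → 0`
(`tendsto_integral_line`). As `Im (1 / (x + i)) = -1 / (1 + x²)`, taking imaginary parts gives
`∫_{-T}^{T} Im F → -π` (`tendsto_integral_im`).

On the real line `F` is real off the bands (`thirdKind_im_of_notMem`), while inside the band `j` it
equals `-i ε_j R / √(-D)` for a sign `ε_j` (`thirdKind_im_of_mem`). So
`∫_{-T}^{T} Im F = -∑ ε_j ∫_{a_j}^{b_j} R / √(-D)` as soon as `[-T, T]` contains all the bands.
-/

open MeasureTheory Polynomial Set
open scoped NNReal ENNReal
open Filter Topology Complex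

/-! ### The square root on the closed upper half-plane -/

/-- The principal square root. It is holomorphic on the open upper half-plane and extends
continuously to the nonzero reals, with value `i √|x|` at `x < 0`. At `0` it has the junk
value `1`, so that it vanishes nowhere. -/
noncomputable def usqrt (z : ℂ) : ℂ := Complex.exp (Complex.log z / 2)

lemma usqrt_sq {z : ℂ} (hz : z ≠ 0) : usqrt z ^ 2 = z := by
  rw [usqrt, ← Complex.exp_nat_mul]
  push_cast
  rw [mul_div_cancel₀ _ two_ne_zero, Complex.exp_log hz]

lemma usqrt_ne_zero (z : ℂ) : usqrt z ≠ 0 := Complex.exp_ne_zero _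

lemma norm_usqrt {z : ℂ} (hz : z ≠ 0) : ‖usqrt z‖ = √‖z‖ := by
  have h := congrArg norm (usqrt_sq hz)
  rw [norm_pow] at h
  rw [← h, Real.sqrt_sq (norm_nonneg _)]

lemma usqrt_quadrant {z : ℂ} (hz : 0 < z.im) : 0 < (usqrt z).re ∧ 0 < (usqrt z).im := by
  have h0 : 0 < z.arg := by
    refine lt_of_le_of_ne (Complex.arg_nonneg_iff.2 hz.le) fun h => ?_
    have := (Complex.arg_eq_zero_iff.1 h.symm).2
    exact hz.ne' this
  have h1 : z.arg < Real.pi := Complex.arg_lt_pi_iff.2 (Or.inr hz.ne')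
  have him : (Complex.log z / 2).im = z.arg / 2 := by simp [Complex.log_im]
  rw [usqrt, Complex.exp_re, Complex.exp_im, him]
  exact ⟨mul_pos (Real.exp_pos _) (Real.cos_pos_of_mem_Ioo ⟨by linarith, by linarith⟩),
    mul_pos (Real.exp_pos _) (Real.sin_pos_of_mem_Ioo ⟨by linarith, by linarith⟩)⟩

lemma usqrt_of_pos {x : ℝ} (hx : 0 < x) : usqrt x = (√x : ℝ) := by
  rw [usqrt, ← Complex.ofReal_log hx.le, Real.sqrt_eq_rpow, Real.rpow_def_of_pos hx]
  push_cast
  congr 1; ring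

lemma usqrt_of_neg {x : ℝ} (hx : x < 0) : usqrt x = I * (√(-x) : ℝ) := by
  have h : Complex.log x = Complex.log ((-x : ℝ) : ℂ) + Real.pi * I := by
    rw [Complex.log, Complex.log, Complex.arg_ofReal_of_neg hx,
      Complex.arg_ofReal_of_nonneg (by linarith)]
    simp
  rw [usqrt, h, add_div, Complex.exp_add, mul_comm]
  have h2 : Real.pi * I / 2 = (Real.pi / 2 : ℂ) * I := by ring
  rw [h2, Complex.exp_pi_div_two_mul_I]
  congr 1
  exact usqrt_of_pos (x := -x) (by linarith)

lemma differentiableAt_usqrt {z : ℂ} (hz : 0 < z.im) : DifferentiableAt ℂ usqrt z := by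
  have : z ∈ Complex.slitPlane := Or.inr hz.ne'
  unfold usqrt
  fun_prop (disch := assumption)

/-- The boundary values are limits from above; on the negative axis, which is the branch cut, this
is one-sided continuity. -/
lemma tendsto_usqrt {x : ℝ} (hx : x ≠ 0) :
    Tendsto (fun t : ℝ => usqrt (x + t * I)) (𝓝[>] 0) (𝓝 (usqrt x)) := by
  have hc : ContinuousWithinAt Complex.log {z : ℂ | 0 ≤ z.im} (x : ℂ) := by
    rcases hx.lt_or_gt with h | h
    · exact Complex.continuousWithinAt_log_of_re_neg_of_im_zero (by simpa) (by simp)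
    · exact (continuousAt_clog (Or.inl (by simpa))).continuousWithinAt
  have hl : Tendsto (fun t : ℝ => (x : ℂ) + t * I) (𝓝[>] 0) (𝓝[{z : ℂ | 0 ≤ z.im}] (x : ℂ)) := by
    refine tendsto_nhdsWithin_iff.2 ⟨?_, ?_⟩
    · refine Tendsto.mono_left ?_ nhdsWithin_le_nhds
      have : Continuous fun t : ℝ => (x : ℂ) + t * I := by fun_prop
      simpa using this.tendsto 0
    · filter_upwards [self_mem_nhdsWithin] with t ht
      simpa using (le_of_lt ht)
  have := hc.tendsto.comp hl
  exact (Complex.continuous_exp.tendsto _).comp (this.div_const 2)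

/-- The ratio `r = √(z - e) / √z` satisfies `(r - 1)(r + 1) = -e / z`, and `|r + 1| ≥ 1` because both
roots lie in the open first quadrant, so that `Re r ≥ 0`. -/
lemma norm_usqrt_div_sub_one_le (e : ℝ) {z : ℂ} (hz : 0 < z.im) :
    ‖usqrt (z - e) / usqrt z - 1‖ ≤ ‖(e : ℂ) / z‖ := by
  have hz' : 0 < (z - e).im := by simpa
  have hz0 : z ≠ 0 := by rintro rfl; simp at hz
  have hze0 : z - e ≠ 0 := by intro h; rw [h] at hz'; simp at hz'
  set r := usqrt (z - e) / usqrt z with hr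
  have hre : 0 ≤ r.re := by
    obtain ⟨p1, p2⟩ := usqrt_quadrant hz
    obtain ⟨q1, q2⟩ := usqrt_quadrant hz'
    rw [hr, Complex.div_re]
    have := Complex.normSq_nonneg (usqrt z)
    positivity
  have hsq : r ^ 2 - 1 = -(e / z) := by
    rw [hr, div_pow, usqrt_sq hz0, usqrt_sq hze0]
    field_simp; ring
  have h1 : 1 ≤ ‖r + 1‖ := by
    have := Complex.re_le_norm (r + 1)
    simp at this
    linarith
  have h2 : ‖r - 1‖ * ‖r + 1‖ = ‖(e : ℂ) / z‖ := by
    rw [← norm_mul, ← norm_neg ((e : ℂ) / z), ← hsq]; ring_nf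
  rw [← h2]
  exact le_mul_of_one_le_right (norm_nonneg _) h1

/-! ### Integrability of the boundary singularities -/

lemma intervalIntegrable_inv_sqrt (e A B : ℝ) :
    IntervalIntegrable (fun x : ℝ => (√|x - e|)⁻¹) volume A B := by
  have h := (intervalIntegral.intervalIntegrable_cpow' (a := A - e) (b := B - e)
    (r := ((-(1/2) : ℝ) : ℂ)) (by simp; norm_num)).norm
  have h2 := h.comp_sub_right e
  simp only [sub_add_cancel] at h2
  refine h2.congr_ae ?_
  refine ae_restrict_of_ae ?_
  have : ∀ᵐ x : ℝ, x ≠ e := by simp [ae_iff, measure_singleton]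
  filter_upwards [this] with x hx
  rw [Complex.norm_cpow_real, Complex.norm_real, Real.norm_eq_abs, Real.rpow_neg (abs_nonneg _),
    Real.sqrt_eq_rpow]

/-- At any point all factors except the one of the nearest `e i` are bounded by a constant depending
on the separation of the `e i`, so the product is dominated by a sum of single singularities. -/
lemma intervalIntegrable_prod_inv_sqrt {ι : Type*} [Fintype ι] [Nonempty ι] {e : ι → ℝ}
    (he : Function.Injective e) (A B : ℝ) :
    IntervalIntegrable (fun x : ℝ => ∏ i, (√|x - e i|)⁻¹) volume A B := by
  classical
  obtain ⟨δ, hδ, hsep⟩ : ∃ δ > 0, ∀ i j, i ≠ j → 2 * δ ≤ |e i - e j| := by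
    have h : ∀ᶠ δ in 𝓝[>] (0 : ℝ), ∀ i j, i ≠ j → 2 * δ ≤ |e i - e j| := by
      refine eventually_all.2 fun i => eventually_all.2 fun j => ?_
      by_cases hij : i = j
      · simp [hij]
      have hpos : 0 < |e i - e j| / 2 := half_pos (abs_pos.2 (sub_ne_zero.2 (he.ne hij)))
      filter_upwards [Ioo_mem_nhdsGT hpos] with δ hδ _
      linarith [hδ.2]
    obtain ⟨δ, h1, h2⟩ := (h.and self_mem_nhdsWithin).exists
    exact ⟨δ, h2, h1⟩
  have hsum : IntervalIntegrable (fun x : ℝ => ∑ i, (√|x - e i|)⁻¹ *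
      (√δ)⁻¹ ^ (Fintype.card ι - 1)) volume A B := by
    have := IntervalIntegrable.sum Finset.univ (μ := volume) (a := A) (b := B)
      (f := fun i x => (√|x - e i|)⁻¹ * (√δ)⁻¹ ^ (Fintype.card ι - 1))
      fun i _ => (intervalIntegrable_inv_sqrt (e i) A B).mul_const _
    simpa [Finset.sum_fn] using this
  refine hsum.mono_fun (by fun_prop) (Eventually.of_forall fun x => ?_)
  have hnn : ∀ i, 0 ≤ (√|x - e i|)⁻¹ := fun i => by positivity
  beta_reduce
  rw [Real.norm_of_nonneg (Finset.prod_nonneg fun i _ => hnn i),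
    Real.norm_of_nonneg (Finset.sum_nonneg fun i _ => by positivity)]
  obtain ⟨p, -, hp⟩ := Finset.exists_min_image Finset.univ (fun i => |x - e i|)
    Finset.univ_nonempty
  refine le_trans ?_ (Finset.single_le_sum (f := fun i => (√|x - e i|)⁻¹ *
      (√δ)⁻¹ ^ (Fintype.card ι - 1)) (fun i _ => by positivity) (Finset.mem_univ p))
  rw [← Finset.mul_prod_erase _ _ (Finset.mem_univ p)]
  refine mul_le_mul_of_nonneg_left ?_ (hnn p)
  rw [← Finset.card_univ, ← Finset.card_erase_of_mem (Finset.mem_univ p), ← Finset.prod_const]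
  refine Finset.prod_le_prod (fun i _ => hnn i) fun i hi => ?_
  have h1 := hsep i p (Finset.ne_of_mem_erase hi)
  have h2 := hp i (Finset.mem_univ i)
  have h3 : |e i - e p| ≤ |x - e i| + |x - e p| := by
    rw [abs_sub_comm x (e i)]; exact abs_sub_le _ _ _
  have h4 : δ ≤ |x - e i| := by linarith
  have := Real.sqrt_pos.2 hδ
  gcongr

/-! ### The differential on the upper half-plane -/

/-- Here `R(z) = z ^ deg R * R.reverse(1/z)`, and each factor `√(z - e i)` is asymptotic to `√z`. -/
lemma tendsto_asymp {ι : Type*} [Fintype ι] (e : ι → ℝ) {R : ℝ[X]} (hR : R.Monic)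
    (hcard : Fintype.card ι = 2 * R.natDegree + 2) :
    Tendsto (fun z : ℂ => z * (aeval z R / ∏ i, usqrt (z - e i)))
      (Bornology.cobounded ℂ ⊓ 𝓟 {z | 0 < z.im}) (𝓝 1) := by
  have hinv : Tendsto (fun z : ℂ => z⁻¹) (Bornology.cobounded ℂ ⊓ 𝓟 {z | 0 < z.im}) (𝓝 0) :=
    tendsto_inv₀_cobounded.mono_left inf_le_left
  have h1 : Tendsto (fun z : ℂ => aeval z⁻¹ R.reverse)
      (Bornology.cobounded ℂ ⊓ 𝓟 {z | 0 < z.im}) (𝓝 1) := by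
    have := ((R.reverse.continuous_aeval (A := ℂ)).tendsto 0).comp hinv
    simpa [Function.comp_def, Polynomial.aeval_def, hR.leadingCoeff] using this
  have h2 : ∀ i, Tendsto (fun z : ℂ => usqrt (z - e i) / usqrt z)
      (Bornology.cobounded ℂ ⊓ 𝓟 {z | 0 < z.im}) (𝓝 1) := by
    intro i
    rw [tendsto_iff_norm_sub_tendsto_zero]
    refine squeeze_zero' (Eventually.of_forall fun _ => norm_nonneg _)
      (g := fun z => ‖(e i : ℂ) / z‖) ?_ ?_
    · filter_upwards [mem_inf_of_right (mem_principal_self _)] with z hz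
      exact norm_usqrt_div_sub_one_le (e i) hz
    · simpa [div_eq_mul_inv] using (hinv.const_mul (e i : ℂ)).norm
  have h3 := h1.div (tendsto_finsetProd Finset.univ fun i _ => h2 i) (by simp)
  simp only [Finset.prod_const_one, div_one] at h3
  refine h3.congr' ?_
  filter_upwards [mem_inf_of_right (mem_principal_self _)] with z hz
  have hz0 : z ≠ 0 := by rintro rfl; simp at hz
  have hrev : aeval z⁻¹ R.reverse * z ^ R.natDegree = aeval z R := by
    let _ := invertibleOfNonzero hz0
    have := Polynomial.eval₂_reverse_mul_pow (algebraMap ℝ ℂ) z R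
    simpa [Polynomial.aeval_def] using this
  have hw : (∏ i : ι, usqrt z) = z ^ (R.natDegree + 1) := by
    rw [Finset.prod_const, Finset.card_univ, hcard, show 2 * R.natDegree + 2 = 2 * (R.natDegree + 1) by ring,
      pow_mul, usqrt_sq hz0]
  simp only [Pi.div_apply, Finset.prod_div_distrib]
  rw [hw, ← hrev]
  generalize aeval z⁻¹ R.reverse = c
  have : (∏ i, usqrt (z - e i)) ≠ 0 := Finset.prod_ne_zero_iff.2 fun i _ => usqrt_ne_zero _
  field_simp
  ring

/-- The coefficient `R(z) / ∏ √(z - e i)` of the third-kind differential, for the branch of the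
denominator given by principal square roots. On the real line this is the boundary value from the
upper half-plane, except at the points `e i`. -/
noncomputable def thirdKind {ι : Type*} [Fintype ι] (e : ι → ℝ) (R : ℝ[X]) (z : ℂ) : ℂ :=
  aeval z R / ∏ i, usqrt (z - e i)

section
variable {ι : Type*} [Fintype ι] (e : ι → ℝ) (R : ℝ[X])

lemma measurable_thirdKind : Measurable (thirdKind e R) := by
  have h : Measurable usqrt := by unfold usqrt; fun_prop
  have h' : Measurable fun z : ℂ => aeval z R := (R.continuous_aeval (A := ℂ)).measurable
  unfold thirdKind
  fun_prop

lemma differentiableAt_thirdKind {z : ℂ} (hz : 0 < z.im) :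
    DifferentiableAt ℂ (thirdKind e R) z := by
  unfold thirdKind
  refine R.differentiable_aeval.differentiableAt.div ?_
    (Finset.prod_ne_zero_iff.2 fun i _ => usqrt_ne_zero _)
  refine DifferentiableAt.fun_finsetProd fun i _ => ?_
  exact DifferentiableAt.comp (g := usqrt) (f := fun w => w - (e i : ℂ)) z
    (differentiableAt_usqrt (by simpa)) (by fun_prop)

lemma tendsto_thirdKind {x : ℝ} (hx : ∀ i, x ≠ e i) :
    Tendsto (fun t : ℝ => thirdKind e R (x + t * I)) (𝓝[>] 0) (𝓝 (thirdKind e R x)) := by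
  unfold thirdKind
  refine Tendsto.div ?_ (tendsto_finsetProd _ fun i _ => ?_)
    (Finset.prod_ne_zero_iff.2 fun i _ => usqrt_ne_zero _)
  · refine Tendsto.mono_left ?_ nhdsWithin_le_nhds
    have h' : Continuous fun z : ℂ => aeval z R := R.continuous_aeval (A := ℂ)
    have : Continuous fun t : ℝ => aeval ((x : ℂ) + t * I) R := by fun_prop
    simpa using this.tendsto 0
  · have := tendsto_usqrt (sub_ne_zero.2 (hx i))
    push_cast at this
    refine this.congr fun t => ?_
    congr 1; ring

/-- The distance of `x + t i` to `e i` is at least `|x - e i|`, so the bound is uniform in the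
height `t`. -/
lemma exists_norm_thirdKind_le (T : ℝ) : ∃ K, ∀ x ∈ Icc (-T) T, ∀ t ∈ Icc (0 : ℝ) 1,
    (∀ i, x ≠ e i) → ‖thirdKind e R (x + t * I)‖ ≤ K * ∏ i, (√|x - e i|)⁻¹ := by
  have h' : Continuous fun z : ℂ => aeval z R := R.continuous_aeval (A := ℂ)
  have hc : Continuous fun p : ℝ × ℝ => aeval ((p.1 : ℂ) + p.2 * I) R := by fun_prop
  obtain ⟨K, hK⟩ := ((isCompact_Icc (a := -T) (b := T)).prod
    (isCompact_Icc (a := (0 : ℝ)) (b := 1))).exists_bound_of_continuousOn hc.continuousOn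
  refine ⟨K, fun x hx t ht hne => ?_⟩
  have hK' := hK (x, t) ⟨hx, ht⟩
  rw [thirdKind, norm_div, norm_prod, div_eq_mul_inv, ← Finset.prod_inv_distrib]
  refine mul_le_mul hK' (Finset.prod_le_prod (fun i _ => by positivity) fun i _ => ?_)
    (Finset.prod_nonneg fun i _ => by positivity) ((norm_nonneg _).trans hK')
  have h1 : |x - e i| ≤ ‖(x : ℂ) + t * I - e i‖ := by
    simpa using Complex.abs_re_le_norm ((x : ℂ) + t * I - e i)
  have h2 : 0 < |x - e i| := abs_pos.2 (sub_ne_zero.2 (hne i))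
  have h3 := Real.sqrt_pos.2 h2
  rw [norm_usqrt (norm_pos_iff.1 (h2.trans_le h1))]
  gcongr

variable {e R}

lemma ae_ne_all : ∀ᵐ x : ℝ, ∀ i, x ≠ e i := by
  refine ae_all_iff.2 fun i => ?_
  simp [ae_iff, measure_singleton]

lemma intervalIntegrable_thirdKind [Nonempty ι] (he : Function.Injective e) (T : ℝ) :
    IntervalIntegrable (fun x : ℝ => thirdKind e R x) volume (-T) T := by
  wlog hT : 0 ≤ T generalizing T
  · have := (this (-T) (by linarith)).symm
    simpa using this
  obtain ⟨K, hK⟩ := exists_norm_thirdKind_le e R T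
  have hm := measurable_thirdKind e R
  refine IntervalIntegrable.mono_fun ((intervalIntegrable_prod_inv_sqrt he (-T) T).const_mul K)
    (hm.comp Complex.measurable_ofReal).aestronglyMeasurable ?_
  filter_upwards [ae_restrict_mem measurableSet_uIoc, ae_restrict_of_ae (ae_ne_all (e := e))] with x hx hne
  rw [uIoc_of_le (by linarith)] at hx
  refine le_trans ?_ (le_abs_self _)
  simpa using hK x (Ioc_subset_Icc_self hx) 0 (by simp) hne

/-- Dominated convergence, with the majorant of `exists_norm_thirdKind_le`. -/
lemma tendsto_integral_line [Nonempty ι] (he : Function.Injective e) {T : ℝ} (hT : 0 ≤ T) :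
    Tendsto (fun t : ℝ => ∫ x in (-T)..T,
        (thirdKind e R (x + t * I) - ((x : ℂ) + t * I + I)⁻¹)) (𝓝[>] 0)
      (𝓝 (∫ x in (-T)..T, (thirdKind e R x - ((x : ℂ) + I)⁻¹))) := by
  obtain ⟨K, hK⟩ := exists_norm_thirdKind_le e R T
  have hm := measurable_thirdKind e R
  refine intervalIntegral.tendsto_integral_filter_of_dominated_convergence
    (fun x => K * ∏ i, (√|x - e i|)⁻¹ + 1) (Eventually.of_forall fun t => by fun_prop) ?_
    (((intervalIntegrable_prod_inv_sqrt he (-T) T).const_mul K).add (by simp)) ?_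
  · filter_upwards [Ioo_mem_nhdsGT (zero_lt_one' ℝ)] with t ht
    filter_upwards [ae_ne_all (e := e)] with x hne hx
    rw [uIoc_of_le (by linarith)] at hx
    refine (norm_sub_le _ _).trans (add_le_add
      (hK x (Ioc_subset_Icc_self hx) t (Ioo_subset_Icc_self ht) hne) ?_)
    rw [norm_inv]
    refine inv_le_one_of_one_le₀ ?_
    have := Complex.im_le_norm ((x : ℂ) + t * I + I)
    simp at this
    linarith [ht.1]
  · filter_upwards [ae_ne_all (e := e)] with x hne _
    refine (tendsto_thirdKind e R hne).sub ?_
    refine Tendsto.mono_left ?_ nhdsWithin_le_nhds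
    have : ContinuousAt (fun t : ℝ => ((x : ℂ) + t * I + I)⁻¹) 0 := by
      refine ContinuousAt.inv₀ (by fun_prop) fun h => ?_
      simpa using congrArg Complex.im h
    simpa using this.tendsto

/-- Cauchy's theorem on `[-T, T] × [t, T]`: the integrand is at most `η / T` on the three remaining
sides, whose total length is at most `4 T`. -/
lemma norm_integral_line_le (hR : R.Monic)
    (hcard : Fintype.card ι = 2 * R.natDegree + 2) {η : ℝ} (hη : 0 < η) :
    ∀ᶠ T : ℝ in atTop, ∀ t ∈ Ioo (0 : ℝ) 1, ‖∫ x in (-T)..T,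
        (thirdKind e R (x + t * I) - ((x : ℂ) + t * I + I)⁻¹)‖ ≤ 4 * η := by
  set H : ℂ → ℂ := fun z => thirdKind e R z - (z + I)⁻¹ with hH
  have hlim : Tendsto (fun z => z * H z) (Bornology.cobounded ℂ ⊓ 𝓟 {z | 0 < z.im}) (𝓝 0) := by
    have hinv : Tendsto (fun z : ℂ => z⁻¹) (Bornology.cobounded ℂ ⊓ 𝓟 {z | 0 < z.im}) (𝓝 0) :=
      tendsto_inv₀_cobounded.mono_left inf_le_left
    have h2 : Tendsto (fun z : ℂ => (1 + I * z⁻¹)⁻¹)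
        (Bornology.cobounded ℂ ⊓ 𝓟 {z | 0 < z.im}) (𝓝 1) := by
      simpa using ((hinv.const_mul I).const_add 1).inv₀ (by simp)
    have h3 := (tendsto_asymp e hR hcard).sub h2
    rw [sub_self] at h3
    refine h3.congr' ?_
    filter_upwards [mem_inf_of_right (mem_principal_self _)] with z hz
    have hz0 : z ≠ 0 := by rintro rfl; simp at hz
    have hzI : z + I ≠ 0 := fun h => by
      have := congrArg Complex.im h
      simp at this hz
      linarith
    have : 1 + I * z⁻¹ = (z + I) / z := by field_simp
    rw [this, inv_div, hH, mul_sub, thirdKind, div_eq_mul_inv z]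
  obtain ⟨M, hM⟩ : ∃ M, ∀ z : ℂ, M ≤ ‖z‖ → 0 < z.im → ‖z * H z‖ < η := by
    have h := hlim.norm.eventually_lt_const (u := η) (by simpa)
    rw [eventually_inf_principal, ← comap_norm_atTop, eventually_comap] at h
    obtain ⟨M, hM⟩ := eventually_atTop.1 h
    exact ⟨M, fun z hz him => hM _ hz z rfl him⟩
  filter_upwards [eventually_ge_atTop M, eventually_gt_atTop 1] with T hTM hT1 t ht
  have hT0 : 0 < T := by linarith
  have hbd : ∀ z : ℂ, T ≤ ‖z‖ → 0 < z.im → ‖H z‖ ≤ η / T := fun z hz him => by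
    have := (hM z (hTM.trans hz) him).le
    rw [norm_mul] at this
    rw [le_div_iff₀ hT0]
    nlinarith [norm_nonneg (H z)]
  have hrect := Complex.integral_boundary_rect_eq_zero_of_differentiableOn H
    (⟨-T, t⟩ : ℂ) (⟨T, T⟩ : ℂ) ?_
  swap
  · intro z hz
    have him : t ≤ z.im := by
      have := hz.2
      simp only [mem_preimage, uIcc_of_le (ht.2.le.trans hT1.le)] at this
      exact this.1
    have him' : 0 < z.im := ht.1.trans_le him
    refine ((differentiableAt_thirdKind e R him').sub
      (DifferentiableAt.inv (by fun_prop) fun h => ?_)).differentiableWithinAt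
    have := congrArg Complex.im h
    simp at this
    linarith
  have htop : ‖∫ x in (-T)..T, H (x + T * I)‖ ≤ η / T * |T - -T| := by
    refine intervalIntegral.norm_integral_le_of_norm_le_const fun x _ => hbd _ ?_ (by simpa)
    simpa using Complex.im_le_norm ((x : ℂ) + T * I)
  have hside : ∀ s : ℝ, |s| = T → ‖∫ y in t..T, H (s + y * I)‖ ≤ η / T * |T - t| := by
    intro s hs
    refine intervalIntegral.norm_integral_le_of_norm_le_const fun y hy => hbd _ ?_ ?_
    · simpa [hs] using Complex.abs_re_le_norm ((s : ℂ) + y * I)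
    · rw [uIoc_of_le (by linarith [ht.2])] at hy
      simpa using ht.1.trans hy.1
  have hr := hside T (abs_of_pos hT0)
  have hl := hside (-T) (by rw [abs_neg, abs_of_pos hT0])
  have hlen : η / T * |T - t| ≤ η := by
    rw [abs_of_nonneg (by linarith [ht.2]), div_mul_eq_mul_div, div_le_iff₀ hT0]
    nlinarith [ht.1]
  have hlen' : η / T * |T - -T| = 2 * η := by
    rw [abs_of_nonneg (by linarith)]; field_simp; ring
  simp only [] at hrect
  have key : (∫ x in (-T)..T, H (x + t * I)) = (∫ x in (-T)..T, H (x + T * I))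
      - I • (∫ y in t..T, H (T + y * I)) + I • (∫ y in t..T, H ((-T : ℝ) + y * I)) := by
    linear_combination hrect
  change ‖∫ x in (-T)..T, H (x + t * I)‖ ≤ _
  rw [key]
  refine (norm_add_le _ _).trans ?_
  have := norm_sub_le (∫ x in (-T)..T, H (x + T * I)) (I • (∫ y in t..T, H (T + y * I)))
  rw [norm_smul, Complex.norm_I, one_mul] at this ⊢
  linarith

/-- The boundary form of the residue computation at infinity. -/
lemma tendsto_integral_im [Nonempty ι] (he : Function.Injective e) (hR : R.Monic)
    (hcard : Fintype.card ι = 2 * R.natDegree + 2) :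
    Tendsto (fun T : ℝ => ∫ x in (-T)..T, (thirdKind e R x).im) atTop (𝓝 (-Real.pi)) := by
  have harc : Tendsto (fun T : ℝ => 2 * Real.arctan T) atTop (𝓝 Real.pi) := by
    have := (tendsto_nhds_of_tendsto_nhdsWithin Real.tendsto_arctan_atTop).const_mul 2
    simpa [mul_div_cancel₀] using this
  have hzero : Tendsto (fun T : ℝ => (∫ x in (-T)..T, (thirdKind e R x).im) + 2 * Real.arctan T)
      atTop (𝓝 0) := by
    rw [Metric.tendsto_nhds]
    intro η hη
    filter_upwards [norm_integral_line_le (e := e) hR hcard (η := η / 8) (by positivity),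
      eventually_ge_atTop 0] with T hT hT0
    have h1 : ‖∫ x in (-T)..T, (thirdKind e R x - ((x : ℂ) + I)⁻¹)‖ ≤ 4 * (η / 8) := by
      refine le_of_tendsto (tendsto_integral_line he hT0).norm ?_
      filter_upwards [Ioo_mem_nhdsGT (zero_lt_one' ℝ)] with t ht using hT t ht
    have hne : ∀ x : ℝ, (x : ℂ) + I ≠ 0 := fun x h => by simpa using congrArg Complex.im h
    have hint : IntervalIntegrable (fun x : ℝ => ((x : ℂ) + I)⁻¹) volume (-T) T :=
      Continuous.intervalIntegrable (Continuous.inv₀ (by fun_prop) hne) _ _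
    have hF := intervalIntegrable_thirdKind (R := R) he T
    have him : ∀ f : ℝ → ℂ, IntervalIntegrable f volume (-T) T →
        (∫ x in (-T)..T, f x).im = ∫ x in (-T)..T, (f x).im := fun f hf =>
      (Complex.imCLM.intervalIntegral_comp_comm hf).symm
    have h2 : (∫ x in (-T)..T, (thirdKind e R x - ((x : ℂ) + I)⁻¹)).im
        = (∫ x in (-T)..T, (thirdKind e R x).im) + 2 * Real.arctan T := by
      rw [intervalIntegral.integral_sub hF hint, Complex.sub_im, him _ hF, him _ hint, sub_eq_add_neg,
        ← intervalIntegral.integral_neg]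
      congr 1
      have : ∀ x : ℝ, -(((x : ℂ) + I)⁻¹).im = (1 + x ^ 2)⁻¹ := fun x => by
        simp [Complex.inv_im, Complex.normSq_apply]; ring
      simp only [this, integral_inv_one_add_sq, Real.arctan_neg]
      ring
    rw [dist_zero_right, ← h2]
    have := Complex.abs_im_le_norm (∫ x in (-T)..T, (thirdKind e R x - ((x : ℂ) + I)⁻¹))
    rw [Real.norm_eq_abs]
    linarith
  simpa using hzero.sub harc

end

/-! ### Boundary values on bands and gaps -/

lemma usqrt_mul_usqrt_of_mem {a b x : ℝ} (ha : a < x) (hb : x < b) :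
    usqrt ((x : ℂ) - a) * usqrt ((x : ℂ) - b) = I * (√(-((x - a) * (x - b))) : ℝ) := by
  rw [← Complex.ofReal_sub, ← Complex.ofReal_sub, usqrt_of_pos (sub_pos.2 ha),
    usqrt_of_neg (sub_neg.2 hb), ← mul_neg, Real.sqrt_mul (sub_pos.2 ha).le]
  push_cast
  ring

lemma usqrt_mul_usqrt_of_gt {a b x : ℝ} (hab : a < b) (hb : b < x) :
    usqrt ((x : ℂ) - a) * usqrt ((x : ℂ) - b) = (√((x - a) * (x - b)) : ℝ) := by
  rw [← Complex.ofReal_sub, ← Complex.ofReal_sub, usqrt_of_pos (sub_pos.2 (hab.trans hb)),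
    usqrt_of_pos (sub_pos.2 hb), Real.sqrt_mul (sub_pos.2 (hab.trans hb)).le]
  push_cast
  ring

lemma usqrt_mul_usqrt_of_lt {a b x : ℝ} (hab : a < b) (ha : x < a) :
    usqrt ((x : ℂ) - a) * usqrt ((x : ℂ) - b) = (-√((x - a) * (x - b)) : ℝ) := by
  rw [← Complex.ofReal_sub, ← Complex.ofReal_sub, usqrt_of_neg (sub_neg.2 ha),
    usqrt_of_neg (sub_neg.2 (ha.trans hab)), ← neg_mul_neg (x - a),
    Real.sqrt_mul (neg_nonneg.2 (sub_neg.2 ha).le)]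
  push_cast
  linear_combination (√(-(x - a)) * √(-(x - b)) : ℂ) * Complex.I_sq

section
variable {g : ℕ} {a b : Fin (g + 1) → ℝ}

/-- The sign of the band `j`: every band to its right contributes a factor `-1`, because there both
square roots are imaginary; thus it is `(-1) ^ (g - j)`. -/
def bandSign (j : Fin (g + 1)) : ℝ := ∏ k ∈ Finset.univ.erase j, if k < j then 1 else -1

lemma bandSign_eq (j : Fin (g + 1)) : bandSign j = 1 ∨ bandSign j = -1 := by
  unfold bandSign
  refine Finset.prod_induction _ (fun r : ℝ => r = 1 ∨ r = -1) ?_ (Or.inl rfl) ?_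
  · rintro x y (rfl | rfl) (rfl | rfl) <;> simp
  · intro k _
    split_ifs <;> simp

lemma prod_usqrt (x : ℝ) : ∏ i, usqrt ((x : ℂ) - (Sum.elim a b i : ℝ)) =
    ∏ j, (usqrt ((x : ℂ) - a j) * usqrt ((x : ℂ) - b j)) := by
  simp [Fintype.prod_sum_type, Finset.prod_mul_distrib]

lemma aeval_ofReal_eq (R : ℝ[X]) (x : ℝ) : aeval (x : ℂ) R = (R.eval x : ℝ) := by
  have := Polynomial.aeval_algebraMap_apply ℂ x R
  simpa using this

lemma thirdKind_im_of_notMem (h1 : ∀ j, a j < b j) (R : ℝ[X]) {x : ℝ}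
    (hx : ∀ j, x < a j ∨ b j < x) : (thirdKind (Sum.elim a b) R x).im = 0 := by
  have h : ∀ j, ∃ c : ℝ, usqrt ((x : ℂ) - a j) * usqrt ((x : ℂ) - b j) = c := fun j =>
    (hx j).elim (fun h => ⟨_, usqrt_mul_usqrt_of_lt (h1 j) h⟩)
      fun h => ⟨_, usqrt_mul_usqrt_of_gt (h1 j) h⟩
  choose c hc using h
  rw [thirdKind, prod_usqrt, aeval_ofReal_eq, Finset.prod_congr rfl fun j _ => hc j,
    ← Complex.ofReal_prod, ← Complex.ofReal_div, Complex.ofReal_im]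

lemma thirdKind_im_of_mem (h1 : ∀ j, a j < b j) (h2 : ∀ j k, j < k → b j < a k) (R : ℝ[X])
    (j : Fin (g + 1)) {x : ℝ} (hx : x ∈ Ioo (a j) (b j)) :
    (thirdKind (Sum.elim a b) R x).im = -(bandSign j *
      (R.eval x / √(-(∏ j, (X - C (a j)) * (X - C (b j)) : ℝ[X]).eval x))) := by
  have hout : ∀ k, k ≠ j → usqrt ((x : ℂ) - a k) * usqrt ((x : ℂ) - b k) =
      ((if k < j then (1 : ℝ) else -1) * √((x - a k) * (x - b k)) : ℝ) ∧
      0 ≤ (x - a k) * (x - b k) := by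
    intro k hk
    rcases hk.lt_or_gt with h | h
    · have hbx : b k < x := (h2 k j h).trans hx.1
      rw [if_pos h, one_mul]
      exact ⟨usqrt_mul_usqrt_of_gt (h1 k) hbx,
        mul_nonneg (by linarith [h1 k]) (by linarith)⟩
    · have hxa : x < a k := hx.2.trans (h2 j k h)
      rw [if_neg h.not_gt, neg_one_mul]
      exact ⟨usqrt_mul_usqrt_of_lt (h1 k) hxa,
        mul_nonneg_of_nonpos_of_nonpos (by linarith) (by linarith [h1 k])⟩
  have hD : -(∏ j, (X - C (a j)) * (X - C (b j)) : ℝ[X]).eval x =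
      -((x - a j) * (x - b j)) * ∏ k ∈ Finset.univ.erase j, ((x - a k) * (x - b k)) := by
    rw [Polynomial.eval_prod, ← Finset.mul_prod_erase _ _ (Finset.mem_univ j)]
    simp
  have hj : 0 ≤ -((x - a j) * (x - b j)) := by nlinarith [hx.1, hx.2]
  have hprod : ∏ i, usqrt ((x : ℂ) - (Sum.elim a b i : ℝ)) = I * ((bandSign j *
      √(-(∏ j, (X - C (a j)) * (X - C (b j)) : ℝ[X]).eval x) : ℝ) : ℂ) := by
    rw [prod_usqrt, hD, Real.sqrt_mul hj, Real.sqrt_prod _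
      fun k hk => (hout k (Finset.ne_of_mem_erase hk)).2,
      ← Finset.mul_prod_erase _ _ (Finset.mem_univ j), usqrt_mul_usqrt_of_mem hx.1 hx.2,
      Finset.prod_congr rfl fun k hk => (hout k (Finset.ne_of_mem_erase hk)).1,
      ← Complex.ofReal_prod, Finset.prod_mul_distrib, bandSign]
    push_cast
    ring
  have hinv : (bandSign j)⁻¹ = bandSign j := by
    rcases bandSign_eq j with h | h <;> rw [h] <;> norm_num
  rw [thirdKind, hprod, aeval_ofReal_eq, mul_comm I, ← div_div, ← Complex.ofReal_div,
    Complex.div_I]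
  simp only [neg_im, mul_im, I_re, I_im, ofReal_re, ofReal_im]
  rw [← div_div, div_eq_mul_inv _ (bandSign j), hinv]
  ring

lemma injective_endpoints (h1 : ∀ j, a j < b j) (h2 : ∀ j k, j < k → b j < a k) :
    Function.Injective (Sum.elim a b) := by
  have ha : StrictMono a := fun j k h => (h1 j).trans (h2 j k h)
  have hb : StrictMono b := fun j k h => (h2 j k h).trans (h1 k)
  refine ha.injective.sumElim hb.injective fun j k h => ?_
  rcases lt_trichotomy j k with hjk | rfl | hjk
  · linarith [ha hjk, h1 k]
  · linarith [h1 j]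
  · linarith [h2 k j hjk]

lemma integral_im_eq_sum (h1 : ∀ j, a j < b j) (h2 : ∀ j k, j < k → b j < a k) (R : ℝ[X])
    {T : ℝ} (hT : ∀ j, -T < a j ∧ b j < T) :
    ∫ x in (-T)..T, (thirdKind (Sum.elim a b) R x).im =
      ∑ j, ∫ x in (a j)..(b j), (thirdKind (Sum.elim a b) R x).im := by
  have hTT : -T ≤ T := by linarith [(hT 0).1, (hT 0).2, h1 0]
  have hint := (intervalIntegrable_thirdKind (R := R) (injective_endpoints h1 h2) T)
  have hint' : IntegrableOn (fun x : ℝ => (thirdKind (Sum.elim a b) R x).im) (Ioc (-T) T) :=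
    ((intervalIntegrable_iff_integrableOn_Ioc_of_le hTT).1 hint).im
  have hsub : ∀ j, Ioc (a j) (b j) ⊆ Ioc (-T) T := fun j =>
    Ioc_subset_Ioc (hT j).1.le (hT j).2.le
  have hdisj : Pairwise (Function.onFun Disjoint fun j => Ioc (a j) (b j)) := by
    refine (pairwise_disjoint_on _).2 fun j k hjk => ?_
    exact Set.disjoint_left.2 fun x hx hx' => by linarith [hx.2, hx'.1, h2 j k hjk]
  simp only [intervalIntegral.integral_of_le hTT, intervalIntegral.integral_of_le (h1 _).le]
  rw [← integral_iUnion_fintype (fun j => measurableSet_Ioc) hdisj fun j => hint'.mono_set (hsub j)]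
  refine setIntegral_eq_of_subset_of_ae_sdiff_eq_zero measurableSet_Ioc.nullMeasurableSet
    (iUnion_subset hsub) ?_
  filter_upwards [ae_ne_all (e := a)] with x hx hmem
  refine thirdKind_im_of_notMem h1 R fun j => ?_
  by_contra! h
  exact hmem.2 (mem_iUnion.2 ⟨j, lt_of_le_of_ne h.1 (hx j).symm, h.2⟩)

end

theorem stmt15 (g : ℕ) (a b : Fin (g + 1) → ℝ)
    (h1 : ∀ j, a j < b j) (h2 : ∀ j k : Fin (g + 1), j < k → b j < a k)
    (D : Polynomial ℝ)
    (hD : D = ∏ j : Fin (g + 1), (X - C (a j)) * (X - C (b j)))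
    (R : Polynomial ℝ) (hR : R.Monic) (hRdeg : R.natDegree = g)
    (hgap : ∀ j : Fin g,
      ∫ x in (b j.castSucc)..(a j.succ), R.eval x / Real.sqrt (D.eval x) = 0) :
    ∃ ε : Fin (g + 1) → ℝ, (∀ j, ε j = 1 ∨ ε j = -1) ∧
      ∑ j : Fin (g + 1),
        ε j * ∫ x in (a j)..(b j), R.eval x / Real.sqrt (-(D.eval x)) = Real.pi := by
  refine ⟨bandSign, bandSign_eq, ?_⟩
  have hlim := tendsto_integral_im (R := R) (injective_endpoints h1 h2) hR (by simp [hRdeg]; ring)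
  have hev : ∀ᶠ T : ℝ in atTop, ∫ x in (-T)..T, (thirdKind (Sum.elim a b) R x).im =
      ∑ j, ∫ x in (a j)..(b j), (thirdKind (Sum.elim a b) R x).im := by
    have : ∀ᶠ T : ℝ in atTop, ∀ j, -T < a j ∧ b j < T := by
      refine eventually_all.2 fun j => ?_
      filter_upwards [eventually_gt_atTop (-a j), eventually_gt_atTop (b j)] with T hT hT'
      exact ⟨by linarith, hT'⟩
    filter_upwards [this] with T hT using integral_im_eq_sum h1 h2 R hT
  have hval := tendsto_nhds_unique (hlim.congr' hev) tendsto_const_nhds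
  have hband : ∀ j, ∫ x in (a j)..(b j), (thirdKind (Sum.elim a b) R x).im =
      -(bandSign j * ∫ x in (a j)..(b j), R.eval x / Real.sqrt (-(D.eval x))) := by
    intro j
    rw [← intervalIntegral.integral_const_mul, ← intervalIntegral.integral_neg,
      intervalIntegral.integral_of_le (h1 j).le, intervalIntegral.integral_of_le (h1 j).le,
      integral_Ioc_eq_integral_Ioo, integral_Ioc_eq_integral_Ioo]
    refine setIntegral_congr_fun measurableSet_Ioo fun x hx => ?_
    rw [hD]
    exact thirdKind_im_of_mem h1 h2 R j hx
  rw [Finset.sum_congr rfl fun j _ => hband j, Finset.sum_neg_distrib] at hval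
  linarith
end

section
/- Let g ≥ 0 be an integer, let a_0 < b_0 < a_1 < ⋯ < a_g < b_g be real numbers, set D(X) = ∏_{j=0}^{g}(X−a_j)(X−b_j) and E = ⋃_{j=0}^{g} [a_j, b_j]. Suppose P, Q ∈ ℝ[X] are monic polynomials and M > 0 is a real number with P² − D·Q² = M² (the Pell–Abel equation). Then every complex root of P and every complex root of Q is real, is a simple root, and lies in the interior of E, i.e., in one of the open intervals (a_j, b_j). -/
open MeasureTheory Polynomial Set
open scoped NNReal ENNReal

/-!
Let `W = P + √D Q`, where `√D` is the branch on `ℂ ∖ E` asymptotic to `z ^ (g + 1)`, and let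
`V = P - √D Q`. Then `W V = M²`, so `W` has no zeros; `|W| → ∞` at infinity because `P` and `√D Q`
have the same leading behaviour there. By the parallelogram law
`|W|² + |V|² = 2 (|P|² + |D| |Q|²)`, which extends continuously to `E`, where `D ≤ 0` makes it equal
to `2 M²`; together with `|W| |V| = M²` this forces `|W| → M` at `E`. The minimum principle
(`lt_norm_of_notMem`) then gives `|W| > M` on `ℂ ∖ E` (`lt_norm_add`). If `P z = t` with
`t ∈ [-M, M]`, then `√D Q` is purely imaginary at `z` and `|W z| = M`; hence `P⁻¹([-M, M])` is
contained in `E` (`mem_bands_of_aeval_eq`). This puts all roots of `P` and `Q` in `E` and makes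
every `P - t` with `|t| ≤ M` real-rooted.

Simplicity and the exclusion of endpoints follow from the strict Laguerre inequality
`p'² - p p'' > 0`, valid wherever a nonconstant real-rooted `p` does not vanish. A double root of
`P` would violate it for `P - M` or for `P + M`. At a root `x` of `Q` the equation, differentiated
twice, gives `P' = 0` and `P P'' = D Q'²`, so the inequality for `P` yields `D(x) Q'(x)² < 0`.
-/

namespace PellAbel

open Filter Topology

/-- The union of the bands `[a j, b j]`, as a subset of the complex plane. -/
def bands {ι : Type*} (a b : ι → ℝ) : Set ℂ := ⋃ j, (fun x : ℝ => (x : ℂ)) '' Icc (a j) (b j)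

lemma mem_bands {ι : Type*} {a b : ι → ℝ} {z : ℂ} :
    z ∈ bands a b ↔ ∃ x : ℝ, (x : ℂ) = z ∧ ∃ j, x ∈ Icc (a j) (b j) := by
  simp only [bands, mem_iUnion, mem_image]
  constructor
  · rintro ⟨j, x, hx, rfl⟩
    exact ⟨x, rfl, j, hx⟩
  · rintro ⟨x, rfl, j, hx⟩
    exact ⟨j, x, hx, rfl⟩

lemma isCompact_bands {ι : Type*} [Finite ι] (a b : ι → ℝ) : IsCompact (bands a b) :=
  isCompact_iUnion fun _ => isCompact_Icc.image Complex.continuous_ofReal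

/-- The branch on `ℂ ∖ E` of the square root of `∏ (z - a j) (z - b j)` that is asymptotic to
`∏ (z - a j)` at infinity, written with principal square roots of `(z - b j) / (z - a j)`, a
quantity that is a nonpositive real only for `z` in the band `[a j, b j]`. -/
noncomputable def root {ι : Type*} [Fintype ι] (a b : ι → ℝ) (z : ℂ) : ℂ :=
  ∏ j, ((z - a j) * Complex.sqrt ((z - b j) / (z - a j)))

lemma div_mem_slitPlane {a b : ℝ} {z : ℂ}
    (hz : ∀ x : ℝ, (x : ℂ) = z → x ∉ Icc a b) (hab : a < b) :
    (z - b) / (z - a) ∈ Complex.slitPlane := by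
  have hza : z - a ≠ 0 := fun h => hz a (sub_eq_zero.1 h).symm ⟨le_rfl, hab.le⟩
  by_contra hn
  rw [Complex.mem_slitPlane_iff] at hn
  push Not at hn
  obtain ⟨hre, him⟩ := hn
  set t := ((z - b) / (z - a)).re with ht
  have hw : (z - b) / (z - a) = (t : ℂ) := Complex.ext (by simp [ht]) (by simp [him])
  have h1 : (1 - t) ≠ 0 := by linarith
  have h1' : (1 - (t : ℂ)) ≠ 0 := by exact_mod_cast h1
  rw [div_eq_iff hza] at hw
  -- solving for `z` exhibits it as a convex combination of `a` and `b`
  refine hz ((b - t * a) / (1 - t)) ?_ ⟨?_, ?_⟩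
  · push_cast
    rw [div_eq_iff h1']
    linear_combination -hw
  · rw [le_div_iff₀ (by linarith)]; nlinarith
  · rw [div_le_iff₀ (by linarith)]; nlinarith

section
variable {ι : Type*} [Fintype ι] {a b : ι → ℝ}

lemma root_sq (h1 : ∀ j, a j < b j) {z : ℂ} (hz : z ∉ bands a b) :
    root a b z ^ 2 = ∏ j, ((z - a j) * (z - b j)) := by
  rw [root, ← Finset.prod_pow]
  refine Finset.prod_congr rfl fun j _ => ?_
  have hza : z - a j ≠ 0 := fun h =>
    hz (mem_bands.2 ⟨a j, (sub_eq_zero.1 h).symm, j, le_rfl, (h1 j).le⟩)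
  have hsq : ∀ w : ℂ, Complex.sqrt w ^ 2 = w := fun w => by
    simp [Complex.sqrt]
  rw [mul_pow, hsq]
  field_simp

lemma differentiableAt_root (h1 : ∀ j, a j < b j) {z : ℂ} (hz : z ∉ bands a b) :
    DifferentiableAt ℂ (root a b) z := by
  unfold root
  refine DifferentiableAt.fun_finsetProd fun j _ => ?_
  have hza : z - a j ≠ 0 := fun h =>
    hz (mem_bands.2 ⟨a j, (sub_eq_zero.1 h).symm, j, le_rfl, (h1 j).le⟩)
  have hs : (z - b j) / (z - a j) ∈ Complex.slitPlane :=
    div_mem_slitPlane (fun x hx hm => hz (mem_bands.2 ⟨x, hx, j, hm⟩)) (h1 j)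
  have hd : DifferentiableAt ℂ (fun z : ℂ => (z - b j) / (z - a j)) z :=
    DifferentiableAt.fun_div (by fun_prop) (by fun_prop) hza
  have := (Complex.differentiableAt_sqrt hs).comp z hd
  exact DifferentiableAt.fun_mul (by fun_prop) this

lemma tendsto_monic_div {p q : ℂ[X]} (hp : p.Monic) (hq : q.Monic)
    (h : p.natDegree = q.natDegree) :
    Tendsto (fun z => p.eval z / q.eval z) (Bornology.cobounded ℂ) (𝓝 1) := by
  have e1 := isEquivalent_cobounded_leading_monomial (P := p)
  have e2 := isEquivalent_cobounded_leading_monomial (P := q)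
  rw [hp.leadingCoeff, h] at e1
  rw [hq.leadingCoeff] at e2
  have hne : ∀ᶠ z in Bornology.cobounded ℂ, q.eval z ≠ 0 :=
    (eventually_cofinite_not_isRoot hq.ne_zero).filter_mono (Bornology.le_cofinite ℂ)
  exact (Asymptotics.isEquivalent_iff_tendsto_one hne).1 (e1.trans e2.symm)

lemma tendsto_root_div :
    Tendsto (fun z => root a b z / ∏ j, (z - (a j : ℂ))) (Bornology.cobounded ℂ) (𝓝 1) := by
  have key : Tendsto (fun z : ℂ => ∏ j, Complex.sqrt ((z - b j) / (z - a j)))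
      (Bornology.cobounded ℂ) (𝓝 (∏ _j : ι, 1)) := by
    refine tendsto_finsetProd _ fun j _ => ?_
    have h := tendsto_monic_div (monic_X_sub_C (b j : ℂ)) (monic_X_sub_C (a j : ℂ)) (by simp)
    simp only [eval_sub, eval_X, eval_C] at h
    have hc := (Complex.differentiableAt_sqrt Complex.one_mem_slitPlane).continuousAt
    have := hc.tendsto.comp h
    simpa [Function.comp_def] using this
  simp only [Finset.prod_const_one] at key
  refine key.congr' ?_
  have hne : ∀ᶠ z in Bornology.cobounded ℂ, ∀ j, z ≠ (a j : ℂ) :=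
    eventually_all.2 fun j => Bornology.eventually_ne_cobounded _
  filter_upwards [hne] with z hz
  rw [root, Finset.prod_mul_distrib, mul_div_cancel_left₀]
  exact Finset.prod_ne_zero_iff.2 fun j _ => sub_ne_zero.2 (hz j)

end

/-- Minimum principle on the complement of a compact set `K` of real points, for the modulus of a
zero-free holomorphic function `W` that blows up at infinity and has modulus `M` on `K`; the
boundary behaviour is encoded in the continuous function `m`. -/
lemma lt_norm_of_notMem {K : Set ℂ} (hK : IsClosed K) (hreal : ∀ z ∈ K, z.im = 0)
    {W : ℂ → ℂ} {m : ℂ → ℝ} {M : ℝ} (hW : ∀ z ∉ K, DifferentiableAt ℂ W z)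
    (hW0 : ∀ z ∉ K, W z ≠ 0) (hm : Continuous m) (hmW : ∀ z ∉ K, m z = ‖W z‖)
    (hmK : ∀ z ∈ K, m z = M) (hlim : Tendsto m (cocompact ℂ) atTop) :
    ∀ z ∉ K, M < ‖W z‖ := by
  intro z₀ hz₀
  by_contra! hle
  -- a global minimiser of `m` off `K`
  obtain ⟨z₁, hz₁, hmin⟩ : ∃ z₁ ∉ K, ∀ y, m z₁ ≤ m y := by
    obtain ⟨x, hx⟩ := hm.exists_forall_le hlim
    by_cases hxK : x ∈ K
    · refine ⟨z₀, hz₀, fun y => le_trans ?_ (hx y)⟩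
      rw [hmW z₀ hz₀, hmK x hxK]; exact hle
    · exact ⟨x, hxK, hx⟩
  have hd : ∀ z ∉ K, DifferentiableAt ℂ (fun z => (W z)⁻¹) z := fun z hz =>
    (hW z hz).fun_inv (hW0 z hz)
  have hmax : ∀ c ∉ K, (∀ y, m c ≤ m y) → ∀ y ∉ K, ‖(W y)⁻¹‖ ≤ ‖(W c)⁻¹‖ := by
    intro c hc h y hy
    rw [norm_inv, norm_inv]
    have := h y
    rw [hmW c hc, hmW y hy] at this
    exact inv_anti₀ (norm_pos_iff.2 (hW0 c hc)) this
  have hmem : ∀ c ∉ K, ∀ᶠ y in 𝓝 c, y ∉ K := fun c hc => hK.isOpen_compl.mem_nhds hc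
  -- the minimum is also attained off the real axis
  obtain ⟨z₂, him, hmin₂⟩ : ∃ z₂ : ℂ, z₂.im ≠ 0 ∧ ∀ y, m z₂ ≤ m y := by
    have hev := Complex.norm_eventually_eq_of_isLocalMax (f := fun z => (W z)⁻¹) (c := z₁)
      ((hmem z₁ hz₁).mono hd) ((hmem z₁ hz₁).mono fun y hy => hmax z₁ hz₁ hmin y hy)
    have hcont : Tendsto (fun t : ℝ => z₁ + t * Complex.I) (𝓝 0) (𝓝 z₁) := by
      have : Continuous (fun t : ℝ => z₁ + t * Complex.I) := by fun_prop
      simpa using this.tendsto 0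
    have hev' := hcont.eventually (hev.and (hmem z₁ hz₁))
    have hne : ∀ᶠ t : ℝ in 𝓝[≠] 0, (z₁ + t * Complex.I).im ≠ 0 := by
      by_cases h : z₁.im = 0
      · filter_upwards [self_mem_nhdsWithin] with t ht
        simpa [h] using ht
      · have hc : Continuous (fun t : ℝ => (z₁ + t * Complex.I).im) := by fun_prop
        refine (hc.continuousAt.eventually_ne ?_).filter_mono nhdsWithin_le_nhds
        simpa using h
    obtain ⟨t, ⟨ht1, ht2⟩, ht3⟩ := ((hev'.filter_mono nhdsWithin_le_nhds).and hne).exists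
    refine ⟨_, ht3, fun y => ?_⟩
    rw [norm_inv, norm_inv, inv_inj] at ht1
    rw [hmW _ ht2, ht1, ← hmW _ hz₁]
    exact hmin y
  have hz₂ : z₂ ∉ K := fun h => him (hreal _ h)
  -- the half-plane containing `z₂`
  set H : Set ℂ := {z | 0 < z.im * z₂.im} with hH
  have hHK : ∀ z ∈ H, z ∉ K := by
    intro z hz hzK
    simp [hH, hreal z hzK] at hz
  have hHo : IsOpen H := isOpen_lt continuous_const (by fun_prop)
  have hHc : Convex ℝ H := by
    intro u hu v hv s t hs ht hst
    simp only [hH, mem_ofPred_eq, Complex.add_im, Complex.smul_im, smul_eq_mul] at hu hv ⊢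
    have : (s * u.im + t * v.im) * z₂.im = s * (u.im * z₂.im) + t * (v.im * z₂.im) := by ring
    rw [this]
    rcases hs.eq_or_lt with rfl | hs
    · have : t = 1 := by linarith
      subst this; linarith
    · have := mul_pos hs hu
      have := mul_nonneg ht hv.le
      linarith
  have hzH : z₂ ∈ H := by
    simp only [hH, mem_ofPred_eq]
    exact mul_self_pos.2 him
  have hEq := Complex.norm_eqOn_of_isPreconnected_of_isMaxOn (f := fun z => (W z)⁻¹)
    hHc.isPreconnected hHo (fun z hz => (hd z (hHK z hz)).differentiableWithinAt) hzH
    (fun y hy => hmax z₂ hz₂ hmin₂ y (hHK y hy))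
  -- along the ray through `z₂` the modulus of `W` is constant and unbounded
  have hray : Tendsto (fun t : ℝ => (t : ℂ) * z₂) atTop (cocompact ℂ) := by
    rw [← Metric.cobounded_eq_cocompact, ← tendsto_norm_atTop_iff_cobounded]
    have h0 : 0 < ‖z₂‖ := norm_pos_iff.2 fun h => him (by simp [h])
    simp only [norm_mul, Complex.norm_real, Real.norm_eq_abs]
    exact tendsto_abs_atTop_atTop.atTop_mul_const h0
  obtain ⟨t, ht1, ht2⟩ := (((hlim.comp hray).eventually_gt_atTop (m z₂)).and
    (eventually_gt_atTop 0)).exists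
  have htH : (t : ℂ) * z₂ ∈ H := by
    simp only [hH, mem_ofPred_eq, Complex.mul_im, Complex.ofReal_re, Complex.ofReal_im]
    have := mul_pos ht2 (mul_self_pos.2 him)
    nlinarith
  have h3 := hEq htH
  simp only [Function.comp, Function.const_apply, norm_inv, inv_inj] at h3 ht1
  rw [hmW _ (hHK _ htH), hmW _ hz₂, h3] at ht1
  exact lt_irrefl _ ht1

/-- Laguerre's inequality for a product of real linear factors, at a point where it does not
vanish; strict unless the product is empty. -/
lemma laguerre_prod (s : Multiset ℝ) (x : ℝ) (p : ℝ[X])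
    (hp : p = (s.map fun r => X - C r).prod) (hx : p.eval x ≠ 0) :
    0 ≤ (derivative p).eval x ^ 2 - p.eval x * (derivative (derivative p)).eval x ∧
    (s ≠ 0 →
      0 < (derivative p).eval x ^ 2 - p.eval x * (derivative (derivative p)).eval x) := by
  induction s using Multiset.induction_on generalizing p with
  | empty => subst hp; simp
  | cons r s ih =>
    rw [Multiset.map_cons, Multiset.prod_cons] at hp
    set q := (s.map fun r => X - C r).prod with hq
    have hqx : q.eval x ≠ 0 := fun h => hx (by rw [hp]; simp [h])
    have h0 := (ih q rfl hqx).1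
    have key : (derivative p).eval x ^ 2 - p.eval x * (derivative (derivative p)).eval x
        = q.eval x ^ 2 + (x - r) ^ 2 *
          ((derivative q).eval x ^ 2 - q.eval x * (derivative (derivative q)).eval x) := by
      rw [hp]
      simp
      ring
    have hpos : 0 < q.eval x ^ 2 := by positivity
    have := mul_nonneg (sq_nonneg (x - r)) h0
    rw [key]
    exact ⟨by linarith, fun _ => by linarith⟩

lemma laguerre {p : ℝ[X]} (hp : p.Monic) (hdeg : p.natDegree ≠ 0)
    (hreal : ∀ z : ℂ, aeval z p = 0 → ∃ x : ℝ, (x : ℂ) = z) {x : ℝ} (hx : p.eval x ≠ 0) :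
    0 < (derivative p).eval x ^ 2 - p.eval x * (derivative (derivative p)).eval x := by
  have hs : p.Splits := by
    refine Splits.of_splits_map_of_injective (i := algebraMap ℝ ℂ)
      (algebraMap ℝ ℂ).injective (IsAlgClosed.splits _) fun z hz => ?_
    rw [mem_roots', IsRoot.def, eval_map_algebraMap] at hz
    obtain ⟨y, hy⟩ := hreal z hz.2
    exact ⟨y, by simpa using hy⟩
  exact (laguerre_prod p.roots x p (hs.eq_prod_roots_of_monic hp) hx).2 (hs.roots_ne_zero hdeg)

lemma prod_nonpos_of_mem {ι : Type*} [LinearOrder ι] [Fintype ι] {a b : ι → ℝ}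
    (h1 : ∀ j, a j < b j) (h2 : ∀ j k, j < k → b j < a k) {x : ℝ} {j : ι}
    (hx : x ∈ Icc (a j) (b j)) : ∏ k, ((x - a k) * (x - b k)) ≤ 0 := by
  rw [← Finset.mul_prod_erase _ _ (Finset.mem_univ j)]
  refine mul_nonpos_of_nonpos_of_nonneg ?_ (Finset.prod_nonneg fun k hk => ?_)
  · exact mul_nonpos_of_nonneg_of_nonpos (by linarith [hx.1]) (by linarith [hx.2])
  · have h3 := h1 k
    rcases lt_or_gt_of_ne (Finset.ne_of_mem_erase hk) with h | h
    · have := h2 k j h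
      exact mul_nonneg (by linarith [hx.1]) (by linarith [hx.1])
    · have := h2 j k h
      exact mul_nonneg_of_nonpos_of_nonpos (by linarith [hx.2]) (by linarith [hx.2])

section
variable {g : ℕ} {a b : Fin (g + 1) → ℝ} {D P Q : ℝ[X]} {M : ℝ}

lemma natDegree_eq
    (hD : D = ∏ j : Fin (g + 1), (X - C (a j)) * (X - C (b j)))
    (hP : P.Monic) (hQ : Q.Monic) (hPell : P ^ 2 - D * Q ^ 2 = C (M ^ 2)) :
    P.natDegree = (g + 1) + Q.natDegree := by
  have hDm : D.Monic := by
    rw [hD]; exact monic_prod_of_monic _ _ fun j _ => (monic_X_sub_C _).mul (monic_X_sub_C _)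
  have hDd : D.natDegree = 2 * (g + 1) := by
    rw [hD, natDegree_prod_of_monic _ _ fun j _ => (monic_X_sub_C _).mul (monic_X_sub_C _)]
    simp [(monic_X_sub_C _).natDegree_mul (monic_X_sub_C _)]
    ring
  have h : P ^ 2 = D * Q ^ 2 + C (M ^ 2) := by rw [← hPell]; ring
  have h' := congrArg natDegree h
  rw [natDegree_add_C, hP.natDegree_pow, hDm.natDegree_mul (hQ.pow 2), hQ.natDegree_pow, hDd] at h'
  omega

/-- Off the bands, `P + √D Q` has modulus larger than `M`. -/
lemma lt_norm_add (h1 : ∀ j, a j < b j) (h2 : ∀ j k : Fin (g + 1), j < k → b j < a k)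
    (hD : D = ∏ j : Fin (g + 1), (X - C (a j)) * (X - C (b j)))
    (hP : P.Monic) (hQ : Q.Monic) (hM : 0 < M) (hPell : P ^ 2 - D * Q ^ 2 = C (M ^ 2)) :
    ∀ z ∉ bands a b, M < ‖aeval z P + root a b z * aeval z Q‖ := by
  classical
  set W : ℂ → ℂ := fun z => aeval z P + root a b z * aeval z Q with hWdef
  set V : ℂ → ℂ := fun z => aeval z P - root a b z * aeval z Q with hVdef
  -- `N = |W|² + |V|²` is single-valued, hence continuous across the bands
  set N : ℂ → ℝ := fun z => 2 * (‖aeval z P‖ ^ 2 + ‖aeval z D‖ * ‖aeval z Q‖ ^ 2) with hN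
  have hDz : ∀ z : ℂ, aeval z D = ∏ j, ((z - a j) * (z - b j)) := by
    intro z; rw [hD]; simp [map_prod]
  have hPz : ∀ z : ℂ, aeval z P ^ 2 - aeval z D * aeval z Q ^ 2 = (M : ℂ) ^ 2 := by
    intro z
    have := congrArg (aeval z) hPell
    simpa using this
  have hWV : ∀ z ∉ bands a b, W z * V z = (M : ℂ) ^ 2 := by
    intro z hz
    have h := root_sq h1 hz
    rw [← hDz] at h
    rw [← hPz z, ← h]
    simp only [hWdef, hVdef]
    ring
  have hnWV : ∀ z ∉ bands a b, ‖W z‖ * ‖V z‖ = M ^ 2 := by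
    intro z hz
    rw [← norm_mul, hWV z hz]
    simp
  have hsum : ∀ z ∉ bands a b, ‖W z‖ ^ 2 + ‖V z‖ ^ 2 = N z := by
    intro z hz
    have h := root_sq h1 hz
    rw [← hDz] at h
    have hpar := parallelogram_law_with_norm ℝ (aeval z P) (root a b z * aeval z Q)
    simp only [hN, ← h, norm_pow]
    rw [norm_mul] at hpar
    simp only [hWdef, hVdef]
    linear_combination hpar
  have hNK : ∀ z ∈ bands a b, N z = 2 * M ^ 2 := by
    intro z hz
    obtain ⟨x, rfl, j, hx⟩ := mem_bands.1 hz
    have hDx : D.eval x ≤ 0 := by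
      have := prod_nonpos_of_mem h1 h2 hx
      rw [hD, eval_prod]
      simpa using this
    have hp := congrArg (eval x) hPell
    simp only [eval_sub, eval_pow, eval_mul, eval_C] at hp
    have hc : ∀ p : ℝ[X], aeval (x : ℂ) p = ((p.eval x : ℝ) : ℂ) := fun p =>
      aeval_algebraMap_apply_eq_algebraMap_eval x p
    simp only [hN, hc, Complex.norm_real, Real.norm_eq_abs, sq_abs, abs_of_nonpos hDx]
    linear_combination 2 * hp
  set m : ℂ → ℝ := fun z => if z ∈ bands a b then M else ‖W z‖ with hm
  have hmK : ∀ z ∈ bands a b, m z = M := fun z hz => by simp [hm, hz]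
  have hmW : ∀ z ∉ bands a b, m z = ‖W z‖ := fun z hz => by simp [hm, hz]
  have hK := isCompact_bands a b
  have hWd : ∀ z ∉ bands a b, DifferentiableAt ℂ W z := by
    intro z hz
    have := differentiableAt_root h1 hz
    exact (P.differentiable_aeval z).fun_add (this.fun_mul (Q.differentiable_aeval z))
  have hW0 : ∀ z ∉ bands a b, W z ≠ 0 := by
    intro z hz h
    have := hnWV z hz
    rw [h, norm_zero, zero_mul] at this
    exact (pow_pos hM 2).ne this
  -- with `w = |W|` and `w v = M²`, `(w - M)² ≤ (w - v)² = N - 2 M²`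
  have hbound : ∀ z, (m z - M) ^ 2 ≤ N z - 2 * M ^ 2 := by
    intro z
    by_cases hz : z ∈ bands a b
    · rw [hmK z hz, hNK z hz]; simp
    · rw [hmW z hz, ← hsum z hz]
      have h3 := hnWV z hz
      have hw : 0 < ‖W z‖ := norm_pos_iff.2 (hW0 z hz)
      have hv : 0 ≤ ‖V z‖ := norm_nonneg _
      generalize ‖W z‖ = w at *
      generalize ‖V z‖ = v at *
      have : v = M ^ 2 / w := by rw [eq_div_iff hw.ne']; linarith
      have h4 : w ^ 2 + v ^ 2 - 2 * M ^ 2 = (w - M) ^ 2 * ((w + M) / w) ^ 2 := by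
        rw [this]; field_simp; ring
      rw [h4]
      have h5 : 1 ≤ (w + M) / w := by rw [le_div_iff₀ hw]; linarith
      exact le_mul_of_one_le_right (sq_nonneg _) (one_le_pow₀ h5)
  have hNc : Continuous N := by
    have hc : ∀ p : ℝ[X], Continuous fun z : ℂ => aeval z p := fun p => p.continuous_aeval
    have := hc P
    have := hc Q
    have := hc D
    simp only [hN]
    fun_prop
  have hmc : Continuous m := by
    rw [continuous_iff_continuousAt]
    intro z
    by_cases hz : z ∈ bands a b
    · rw [ContinuousAt, hmK z hz, tendsto_iff_norm_sub_tendsto_zero]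
      have hlim : Tendsto (fun y => Real.sqrt (N y - 2 * M ^ 2)) (𝓝 z) (𝓝 0) := by
        have hc : Continuous fun y => Real.sqrt (N y - 2 * M ^ 2) := by fun_prop
        have := hc.tendsto z
        simpa [hNK z hz] using this
      refine squeeze_zero (fun _ => norm_nonneg _) (fun y => ?_) hlim
      exact Real.abs_le_sqrt (hbound y)
    · have hev : m =ᶠ[𝓝 z] fun y => ‖W y‖ :=
        Filter.Eventually.mono (hK.isClosed.isOpen_compl.mem_nhds hz) hmW
      exact ((hWd z hz).continuousAt.norm).congr hev.symm
  have hdeg := natDegree_eq hD hP hQ hPell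
  have hlim : Tendsto m (cocompact ℂ) atTop := by
    have hPinf : Tendsto (fun z : ℂ => ‖aeval z P‖) (Bornology.cobounded ℂ) atTop := by
      have h := (P.map (algebraMap ℝ ℂ)).tendsto_norm_atTop (by
        rw [degree_map]; exact natDegree_pos_iff_degree_pos.1 (by omega))
        (tendsto_norm_cobounded_atTop (E := ℂ))
      simpa [eval_map_algebraMap] using h
    -- `A = ∏ (X - a j)`, so that `A Q` and `P` are monic of the same degree
    set A : ℝ[X] := ∏ j : Fin (g + 1), (X - C (a j)) with hA
    have hAm : A.Monic := monic_prod_of_monic _ _ fun j _ => monic_X_sub_C _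
    have hAd : A.natDegree = g + 1 := by
      rw [hA, natDegree_prod_of_monic _ _ fun j _ => monic_X_sub_C _]; simp
    have hAz : ∀ z : ℂ, aeval z A = ∏ j, (z - (a j : ℂ)) := by
      intro z; rw [hA]; simp [map_prod]
    have hr := tendsto_monic_div (p := (A * Q).map (algebraMap ℝ ℂ))
      (q := P.map (algebraMap ℝ ℂ)) ((hAm.mul hQ).map _) (hP.map _) (by
        rw [natDegree_map, natDegree_map, hAm.natDegree_mul hQ, hAd, hdeg])
    simp only [eval_map_algebraMap, map_mul] at hr
    have hprod : Tendsto (fun z => ‖1 + root a b z / (∏ j, (z - (a j : ℂ))) *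
        (aeval z A * aeval z Q / aeval z P)‖) (Bornology.cobounded ℂ) (𝓝 2) := by
      have := ((tendsto_root_div (a := a) (b := b)).mul hr).const_add 1 |>.norm
      convert this using 2
      norm_num
    have hfin := hPinf.atTop_mul_pos two_pos hprod
    rw [← Metric.cobounded_eq_cocompact]
    refine hfin.congr' ?_
    have hne : ∀ᶠ z in Bornology.cobounded ℂ, ∀ j, z ≠ (a j : ℂ) :=
      eventually_all.2 fun j => Bornology.eventually_ne_cobounded _
    have hK' : ∀ᶠ z in Bornology.cobounded ℂ, z ∉ bands a b := by
      rw [Metric.cobounded_eq_cocompact]; exact hK.compl_mem_cocompact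
    filter_upwards [hne, hK', hPinf.eventually_gt_atTop 0] with z hz hzK hPz0
    rw [hmW z hzK, ← norm_mul]
    have hP0 : aeval z P ≠ 0 := norm_pos_iff.1 hPz0
    have hA0 : ∏ j, (z - (a j : ℂ)) ≠ 0 :=
      Finset.prod_ne_zero_iff.2 fun j _ => sub_ne_zero.2 (hz j)
    congr 1
    rw [hAz]
    simp only [hWdef]
    field_simp
  refine lt_norm_of_notMem hK.isClosed ?_ hWd hW0 hmc hmW hmK hlim
  intro z hz
  obtain ⟨x, rfl, -⟩ := mem_bands.1 hz
  simp

/-- The preimage of `[-M, M]` under `P` is contained in the bands. -/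
lemma mem_bands_of_aeval_eq (h1 : ∀ j, a j < b j)
    (h2 : ∀ j k : Fin (g + 1), j < k → b j < a k)
    (hD : D = ∏ j : Fin (g + 1), (X - C (a j)) * (X - C (b j)))
    (hP : P.Monic) (hQ : Q.Monic) (hM : 0 < M) (hPell : P ^ 2 - D * Q ^ 2 = C (M ^ 2))
    {z : ℂ} {t : ℝ} (ht : t ^ 2 ≤ M ^ 2) (hz : aeval z P = (t : ℂ)) : z ∈ bands a b := by
  by_contra hzK
  have hlt := lt_norm_add h1 h2 hD hP hQ hM hPell z hzK
  have hDz : aeval z D = ∏ j, ((z - (a j : ℂ)) * (z - b j)) := by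
    rw [hD]; simp [map_prod]
  have hPz : aeval z P ^ 2 - aeval z D * aeval z Q ^ 2 = (M : ℂ) ^ 2 := by
    have := congrArg (aeval z) hPell
    simpa using this
  have hr := root_sq h1 hzK
  rw [← hDz] at hr
  rw [hz] at hlt hPz
  set u := root a b z * aeval z Q with hu
  -- `u² = t² - M² ≤ 0`, so `u` is purely imaginary and `|t + u|² = M²`
  have hu2 : u ^ 2 = ((t ^ 2 - M ^ 2 : ℝ) : ℂ) := by
    push_cast
    rw [hu, mul_pow, hr]
    linear_combination -hPz
  have hre := congrArg Complex.re hu2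
  have him := congrArg Complex.im hu2
  simp only [sq u, Complex.mul_re, Complex.mul_im, Complex.ofReal_re, Complex.ofReal_im] at hre him
  have hure : u.re = 0 := by
    have h0 : u.re * u.im = 0 := by linarith
    rcases mul_eq_zero.1 h0 with h | h
    · exact h
    · rw [h] at hre
      have : u.re * u.re ≤ 0 := by nlinarith
      exact mul_self_eq_zero.1 (le_antisymm this (mul_self_nonneg _))
  have hn : ‖(t : ℂ) + u‖ ^ 2 = M ^ 2 := by
    rw [← Complex.normSq_eq_norm_sq, Complex.normSq_apply]
    simp only [Complex.add_re, Complex.add_im, Complex.ofReal_re, Complex.ofReal_im, hure]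
    rw [hure] at hre
    linear_combination -hre
  have := pow_lt_pow_left₀ hlt hM.le two_ne_zero
  linarith

end

end PellAbel

open PellAbel

theorem stmt16 (g : ℕ) (a b : Fin (g + 1) → ℝ)
    (h1 : ∀ j, a j < b j) (h2 : ∀ j k : Fin (g + 1), j < k → b j < a k)
    (D : Polynomial ℝ)
    (hD : D = ∏ j : Fin (g + 1), (X - C (a j)) * (X - C (b j)))
    (P Q : Polynomial ℝ) (hP : P.Monic) (hQ : Q.Monic)
    (M : ℝ) (hM : 0 < M) (hPell : P ^ 2 - D * Q ^ 2 = C (M ^ 2)) :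
    (∀ z : ℂ, Polynomial.aeval z P = 0 →
      ∃ x : ℝ, (x : ℂ) = z ∧ (∃ j, x ∈ Set.Ioo (a j) (b j)) ∧
        Polynomial.aeval z (Polynomial.derivative P) ≠ 0) ∧
    (∀ z : ℂ, Polynomial.aeval z Q = 0 →
      ∃ x : ℝ, (x : ℂ) = z ∧ (∃ j, x ∈ Set.Ioo (a j) (b j)) ∧
        Polynomial.aeval z (Polynomial.derivative Q) ≠ 0) := by
  have hmem : ∀ (z : ℂ) (t : ℝ), t ^ 2 ≤ M ^ 2 → aeval z P = (t : ℂ) →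
      ∃ x : ℝ, (x : ℂ) = z ∧ ∃ j, x ∈ Icc (a j) (b j) := fun z t ht hz =>
    mem_bands.1 (mem_bands_of_aeval_eq h1 h2 hD hP hQ hM hPell ht hz)
  have hdeg := natDegree_eq hD hP hQ hPell
  have hc : ∀ (p : ℝ[X]) (x : ℝ), aeval (x : ℂ) p = ((p.eval x : ℝ) : ℂ) := fun p x =>
    aeval_algebraMap_apply_eq_algebraMap_eval x p
  have hx : ∀ x, P.eval x ^ 2 - D.eval x * Q.eval x ^ 2 = M ^ 2 := by
    intro x
    simpa using congrArg (eval x) hPell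
  have hDa : ∀ j, D.eval (a j) = 0 := by
    intro j
    rw [hD, eval_prod]
    exact Finset.prod_eq_zero (Finset.mem_univ j) (by simp)
  have hDb : ∀ j, D.eval (b j) = 0 := by
    intro j
    rw [hD, eval_prod]
    exact Finset.prod_eq_zero (Finset.mem_univ j) (by simp)
  have hIoo : ∀ x j, x ∈ Icc (a j) (b j) → D.eval x ≠ 0 → x ∈ Ioo (a j) (b j) := by
    intro x j hxj h0
    refine ⟨lt_of_le_of_ne hxj.1 ?_, lt_of_le_of_ne hxj.2 ?_⟩
    · rintro rfl; exact h0 (hDa j)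
    · rintro rfl; exact h0 (hDb j)
  -- every `P - t` with `|t| ≤ M` is real-rooted, so Laguerre's inequality applies to it
  have hlag : ∀ (t x : ℝ), t ^ 2 ≤ M ^ 2 → P.eval x ≠ t →
      0 < (derivative P).eval x ^ 2 -
        (P.eval x - t) * (derivative (derivative P)).eval x := by
    intro t x ht hne
    have hm : (P - C t).Monic := by
      refine hP.sub_of_left (degree_C_le.trans_lt ?_)
      exact natDegree_pos_iff_degree_pos.1 (by omega)
    have := laguerre hm (by rw [natDegree_sub_C]; omega) (fun z hz => by
      obtain ⟨x, hx, -⟩ := hmem z t ht (by simpa [sub_eq_zero] using hz)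
      exact ⟨x, hx⟩) (x := x) (by simpa [sub_eq_zero] using hne)
    simpa using this
  constructor
  · intro z hz
    obtain ⟨x, rfl, j, hxj⟩ := hmem z 0 (by simpa using sq_nonneg M) (by simpa using hz)
    rw [hc, Complex.ofReal_eq_zero] at hz
    refine ⟨x, rfl, ⟨j, hIoo x j hxj fun h => ?_⟩, fun h => ?_⟩
    · have := hx x
      rw [hz, h] at this
      have := pow_pos hM 2
      linarith
    · rw [hc, Complex.ofReal_eq_zero] at h
      -- Laguerre at the levels `M` and `-M` gives `P''(x)` both signs
      have e1 := hlag M x le_rfl (by rw [hz]; exact hM.ne)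
      have e2 := hlag (-M) x (by simp) (by rw [hz]; linarith)
      rw [h, hz] at e1 e2
      linarith
  · intro z hz
    -- at a root of `Q`, `P² = M²`
    have hPz : aeval z P ^ 2 = (M : ℂ) ^ 2 := by
      have := congrArg (aeval z) hPell
      simpa [hz] using this
    obtain ⟨x, rfl, j, hxj⟩ : ∃ x : ℝ, (x : ℂ) = z ∧ ∃ j, x ∈ Icc (a j) (b j) := by
      rcases sq_eq_sq_iff_eq_or_eq_neg.1 hPz with h | h
      · exact hmem z M le_rfl h
      · exact hmem z (-M) (by simp) (by simpa using h)
    rw [hc, Complex.ofReal_eq_zero] at hz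
    have hPx : P.eval x ^ 2 = M ^ 2 := by simpa [hz] using hx x
    have hP0 : P.eval x ≠ 0 := fun h => by
      rw [h] at hPx
      have := pow_pos hM 2
      linarith
    -- differentiating the Pell–Abel equation twice at a root of `Q`
    have d1 : (derivative P).eval x = 0 := by
      have := congrArg (fun p => eval x (derivative p)) hPell
      simpa [derivative_pow, hz, hP0] using this
    have d2 : P.eval x * (derivative (derivative P)).eval x
        = D.eval x * (derivative Q).eval x ^ 2 := by
      have := congrArg (fun p => eval x (derivative (derivative p))) hPell
      simp [derivative_pow, hz, d1] at this
      linarith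
    have e := hlag 0 x (by simpa using sq_nonneg M) hP0
    rw [d1, sub_zero, d2] at e
    refine ⟨x, rfl, ⟨j, hIoo x j hxj fun h => ?_⟩, fun h => ?_⟩
    · rw [h] at e; simp at e
    · rw [hc, Complex.ofReal_eq_zero] at h
      rw [h] at e; simp at e
end
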